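/- Assume d > 1 and fix x₀ ∈ Γ; set B_j = B(x₀, 2^j) for j ∈ ℕ. Then: (a) for every u ∈ W the limit u⁰ := lim_{j→∞} ⨍_{B_j} u dy exists and is finite, and |⨍_{B_j} u dy − u⁰| ≤ C 2^{j(1−d)/2} ‖u‖_W for all j ≥ 0, with C depending only on n, d, C₀; (b) for every u ∈ W with u⁰ = 0 there exists a sequence (u_k) of functions in C_c^∞(ℝⁿ) such that u_k → u in L¹_loc(ℝⁿ) and ‖u_k − u‖_W → 0. -/

import Mathlib

open MeasureTheory Metric Set Filter
open scoped ENNReal NNReal Topology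

noncomputable section

/-- Euclidean space `ℝⁿ`. -/
abbrev Euc (n : ℕ) := EuclideanSpace ℝ (Fin n)

/-- `Γ ⊆ ℝⁿ` is `d`-Ahlfors regular with constant `C₀`. -/
def AhlforsRegular (n : ℕ) (d C₀ : ℝ) (Γ : Set (Euc n)) : Prop :=
  ∀ x ∈ Γ, ∀ r : ℝ, 0 < r →
    ENNReal.ofReal (C₀⁻¹ * r ^ d) ≤ μH[d] (Γ ∩ ball x r) ∧
      μH[d] (Γ ∩ ball x r) ≤ ENNReal.ofReal (C₀ * r ^ d)

/-- The weight `w(x) = dist(x, Γ) ^ (d + 1 - n)`. -/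
def weightW (n : ℕ) (d : ℝ) (Γ : Set (Euc n)) (x : Euc n) : ℝ :=
  infDist x Γ ^ (d + 1 - (n : ℝ))

/-- The measure `m` with density `w` with respect to Lebesgue measure. -/
def measW (n : ℕ) (d : ℝ) (Γ : Set (Euc n)) : Measure (Euc n) :=
  volume.withDensity fun x => ENNReal.ofReal (weightW n d Γ x)

/-- `v` is a distributional gradient of `u` on the open set `E`: for every smooth
compactly supported test function `φ` with support in `E`, `∫_E u ∇φ = -∫_E φ v`. -/
def IsDistribGradOn {n : ℕ} (u : Euc n → ℝ) (v : Euc n → Euc n) (E : Set (Euc n)) : Prop :=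
  ∀ φ : Euc n → ℝ, ContDiff ℝ (⊤ : ℕ∞) φ → HasCompactSupport φ → tsupport φ ⊆ E →
    ∫ x in E, u x • gradient φ x = -∫ x in E, φ x • v x

/-- The averages of `u` over small balls centered at `x` converge to `t`. -/
def HasTraceAt {n : ℕ} (u : Euc n → ℝ) (x : Euc n) (t : ℝ) : Prop :=
  Tendsto (fun ρ : ℝ => ⨍ y in ball x ρ, u y) (𝓝[>] (0 : ℝ)) (𝓝 t)

/-- `u` belongs to the weighted Sobolev space `W = Ẇ^{1,2}_w(Ω)`, `Ω = Γᶜ`, with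
distributional gradient `v` on `Ω` lying in `L²(Ω, m)`. -/
structure MemW (n : ℕ) (d : ℝ) (Γ : Set (Euc n)) (u : Euc n → ℝ) (v : Euc n → Euc n) :
    Prop where
  locInt : LocallyIntegrableOn u Γᶜ volume
  gradLocInt : LocallyIntegrableOn v Γᶜ volume
  isGrad : IsDistribGradOn u v Γᶜ
  l2 : ∫⁻ x in Γᶜ, ENNReal.ofReal (‖v x‖ ^ 2) ∂(measW n d Γ) < ⊤

/-- `u` belongs to the local space `W_r(E)`: `u ∈ L¹_loc(E)` and `φ u` (extended by `0`)
belongs to `W` for every smooth compactly supported `φ` with support in `E`. -/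
def MemWrOn (n : ℕ) (d : ℝ) (Γ : Set (Euc n)) (E : Set (Euc n)) (u : Euc n → ℝ) : Prop :=
  LocallyIntegrableOn u E volume ∧
    ∀ φ : Euc n → ℝ, ContDiff ℝ (⊤ : ℕ∞) φ → HasCompactSupport φ → tsupport φ ⊆ E →
      ∃ vφ : Euc n → Euc n, MemW n d Γ (fun x => φ x * u x) vφ

/-- Degenerate ellipticity and boundedness conditions for the matrix `A`. -/
def EllipticOn (n : ℕ) (d : ℝ) (Γ : Set (Euc n)) (A : Euc n → Euc n →L[ℝ] Euc n)
    (C₁ : ℝ) : Prop :=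
  ∀ x, x ∉ Γ →
    (∀ ξ ζ : Euc n, |∑ i, A x ξ i * ζ i| ≤ C₁ * weightW n d Γ x * ‖ξ‖ * ‖ζ‖) ∧
      ∀ ξ : Euc n, C₁⁻¹ * weightW n d Γ x * ‖ξ‖ ^ 2 ≤ ∑ i, A x ξ i * ξ i

/-- `u`, with gradient `v`, is a weak subsolution of `- div A ∇u = 0` on `U ⊆ Ω = Γᶜ`. -/
def SubsolOn {n : ℕ} (Γ : Set (Euc n)) (A : Euc n → Euc n →L[ℝ] Euc n)
    (v : Euc n → Euc n) (U : Set (Euc n)) : Prop :=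
  ∀ φ : Euc n → ℝ, ContDiff ℝ (⊤ : ℕ∞) φ → HasCompactSupport φ → tsupport φ ⊆ U →
    (∀ x, 0 ≤ φ x) → ∫ x in Γᶜ, ∑ i, A x (v x) i * gradient φ x i ≤ 0

/-- `u`, with gradient `v`, is a weak supersolution of `- div A ∇u = 0` on `U ⊆ Ω = Γᶜ`. -/
def SupersolOn {n : ℕ} (Γ : Set (Euc n)) (A : Euc n → Euc n →L[ℝ] Euc n)
    (v : Euc n → Euc n) (U : Set (Euc n)) : Prop :=
  ∀ φ : Euc n → ℝ, ContDiff ℝ (⊤ : ℕ∞) φ → HasCompactSupport φ → tsupport φ ⊆ U →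
    (∀ x, 0 ≤ φ x) → 0 ≤ ∫ x in Γᶜ, ∑ i, A x (v x) i * gradient φ x i

/-- `u`, with gradient `v`, is a weak solution of `- div A ∇u = 0` on `U ⊆ Ω = Γᶜ`. -/
def SolOn {n : ℕ} (Γ : Set (Euc n)) (A : Euc n → Euc n →L[ℝ] Euc n)
    (v : Euc n → Euc n) (U : Set (Euc n)) : Prop :=
  ∀ φ : Euc n → ℝ, ContDiff ℝ (⊤ : ℕ∞) φ → HasCompactSupport φ → tsupport φ ⊆ U →
    ∫ x in Γᶜ, ∑ i, A x (v x) i * gradient φ x i = 0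

/-!
Covering `Γ` by balls shows that its tubular neighbourhoods have small volume, so `w` is an `A₁`
weight; hence mollification is bounded on `L²(m)` and the Poincaré inequality on balls holds for `m`
as well as for Lebesgue measure. Because `Γ` has codimension larger than `1` it is removable: the
distributional gradient on `Ω` is a distributional gradient on `ℝⁿ`.

On a ball of radius `R` centred on `Γ` the weight is at least `R ^ (d + 1 - n)`, so the Poincaré
inequality bounds the difference of the averages over `B_j` and `B_{j+1}` by
`2 ^ (j * (1 - d) / 2) * ‖u‖_W`; for `d > 1` this is geometrically summable, which is (a).

If the limit is `0`, (a) gives `‖u‖_{L²(B_j, m)} ≤ K * 2 ^ j`, which is just critical for cutting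
off: a logarithmic cutoff `η_N`, with `|∇η_N|² ≲ N⁻² * (1 + |x - x₀|²)⁻¹` spread over `O(N)` dyadic
shells, satisfies `‖u ∇η_N‖_{L²(m)}² = O(1 / N)`. Mollifying `η_N * u` then proves (b).
-/

/-! ### Jensen's inequality and averages -/

section Jensen

variable {α : Type*} [MeasurableSpace α]

theorem rpow_lintegral_le_lintegral_rpow (μ : Measure α) [IsProbabilityMeasure μ] {p : ℝ}
    (hp : 1 ≤ p) {g : α → ℝ≥0∞} (hg : AEMeasurable g μ) :
    (∫⁻ x, g x ∂μ) ^ p ≤ ∫⁻ x, g x ^ p ∂μ := by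
  have hle := eLpNorm'_le_eLpNorm'_of_exponent_le one_pos hp μ hg.aestronglyMeasurable
  simp only [eLpNorm', enorm_eq_self, ENNReal.rpow_one, div_one] at hle
  have hp0 : p ≠ 0 := by linarith
  calc (∫⁻ x, g x ∂μ) ^ p ≤ ((∫⁻ x, g x ^ p ∂μ) ^ (1 / p)) ^ p := by gcongr
    _ = ∫⁻ x, g x ^ p ∂μ := by rw [← ENNReal.rpow_mul, one_div_mul_cancel hp0, ENNReal.rpow_one]

theorem sq_lintegral_le_lintegral_sq (μ : Measure α) [IsProbabilityMeasure μ] {g : α → ℝ≥0∞}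
    (hg : AEMeasurable g μ) : (∫⁻ x, g x ∂μ) ^ 2 ≤ ∫⁻ x, g x ^ 2 ∂μ := by
  simpa only [ENNReal.rpow_two] using rpow_lintegral_le_lintegral_rpow μ one_le_two hg

theorem enorm_sub_average_sq_le {F : Type*} [NormedAddCommGroup F] [NormedSpace ℝ F]
    [CompleteSpace F] {μ : Measure α} [IsFiniteMeasure μ] [NeZero μ] {f : α → F}
    (hf : Integrable f μ) (a : F) : ‖a - ⨍ x, f x ∂μ‖ₑ ^ 2 ≤ ⨍⁻ x, ‖a - f x‖ₑ ^ 2 ∂μ := by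
  have hint : Integrable f ((μ univ)⁻¹ • μ) := hf.smul_measure (by simp [NeZero.ne μ])
  have hsub : a - ⨍ x, f x ∂μ = ∫ x, a - f x ∂(μ univ)⁻¹ • μ := by
    rw [integral_sub (integrable_const a) hint, integral_const, probReal_univ, one_smul, average]
  rw [hsub]
  exact (pow_le_pow_left' (enorm_integral_le_lintegral_enorm _) 2).trans
    (sq_lintegral_le_lintegral_sq _ (aestronglyMeasurable_const.sub hint.1).enorm)

end Jensen

/-! ### Muckenhoupt weights and the weighted Poincaré inequality -/

section A1

variable {E : Type*} [PseudoMetricSpace E] [MeasurableSpace E]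

/-- `W` is a Muckenhoupt `A₁` weight with constant `A`: the average of `W` over a ball is at most
`A` times the value of `W` at almost every possible centre. The inequality is multiplied out so
that no division in `ℝ≥0∞` occurs. -/
structure IsA1Weight (μ : Measure E) (W : E → ℝ≥0∞) (A : ℝ≥0∞) : Prop where
  measurable : Measurable W
  setLIntegral_ball_le :
    ∀ᵐ z ∂μ, ∀ r : ℝ, 0 < r → ∫⁻ x in ball z r, W x ∂μ ≤ A * μ (ball z r) * W z

theorem isA1Weight_one (μ : Measure E) : IsA1Weight μ 1 1 where
  measurable := measurable_one
  setLIntegral_ball_le := by simp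

end A1

section Poincare

variable {E F : Type*} [NormedAddCommGroup E] [NormedSpace ℝ E] [NormedAddCommGroup F]
  [NormedSpace ℝ F]

theorem enorm_sub_sq_le_lintegral_segment [CompleteSpace F] {f : E → F} (hf : ContDiff ℝ 1 f)
    (x h : E) :
    ‖f x - f (x + h)‖ₑ ^ 2 ≤ ‖h‖ₑ ^ 2 * ∫⁻ t in Ioc (0 : ℝ) 1, ‖fderiv ℝ f (x + t • h)‖ₑ ^ 2 := by
  have hcont : Continuous fun t : ℝ => fderiv ℝ f (x + t • h) :=
    (hf.continuous_fderiv one_ne_zero).comp (by fun_prop)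
  have hderiv (t : ℝ) : HasDerivAt (fun t : ℝ => f (x + t • h)) (fderiv ℝ f (x + t • h) h) t := by
    have hline : HasDerivAt (fun t : ℝ => x + t • h) h t := by
      simpa using ((hasDerivAt_id t).smul_const h).const_add x
    exact (hf.differentiable one_ne_zero _).hasFDerivAt.comp_hasDerivAt t hline
  have hftc : ∫ t in (0 : ℝ)..1, fderiv ℝ f (x + t • h) h = f (x + h) - f x := by
    simpa using intervalIntegral.integral_eq_sub_of_hasDerivAt (a := 0) (b := 1)
      (fun t _ => hderiv t) ((hcont.clm_apply continuous_const).intervalIntegrable 0 1)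
  have : IsProbabilityMeasure (volume.restrict (Ioc (0 : ℝ) 1)) := ⟨by simp⟩
  calc ‖f x - f (x + h)‖ₑ ^ 2
      = ‖∫ t in Ioc (0 : ℝ) 1, fderiv ℝ f (x + t • h) h‖ₑ ^ 2 := by
        rw [← intervalIntegral.integral_of_le zero_le_one, hftc, enorm_sub_rev]
    _ ≤ (∫⁻ t in Ioc (0 : ℝ) 1, ‖h‖ₑ * ‖fderiv ℝ f (x + t • h)‖ₑ) ^ 2 := by
        gcongr
        refine (enorm_integral_le_lintegral_enorm _).trans (lintegral_mono fun t => ?_)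
        rw [mul_comm]
        exact ContinuousLinearMap.le_opENorm _ _
    _ ≤ ∫⁻ t in Ioc (0 : ℝ) 1, (‖h‖ₑ * ‖fderiv ℝ f (x + t • h)‖ₑ) ^ 2 :=
        sq_lintegral_le_lintegral_sq _ (hcont.enorm.measurable.const_mul _).aemeasurable
    _ = ‖h‖ₑ ^ 2 * ∫⁻ t in Ioc (0 : ℝ) 1, ‖fderiv ℝ f (x + t • h)‖ₑ ^ 2 := by
        simp_rw [mul_pow]
        exact lintegral_const_mul _ (hcont.enorm.measurable.pow_const _)

variable [MeasurableSpace E] [BorelSpace E] {μ : Measure E} [μ.IsAddHaarMeasure]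

theorem setLIntegral_ball_enorm_sub_sq_le [CompleteSpace F] {f : E → F} (hf : ContDiff ℝ 1 f)
    {c x : E} {R : ℝ} (hx : x ∈ ball c R) :
    ∫⁻ y in ball c R, ‖f x - f y‖ₑ ^ 2 ∂μ ≤
      ENNReal.ofReal (2 * R) ^ 2 * ∫⁻ h in ball (0 : E) (2 * R), (∫⁻ t in Ioc (0 : ℝ) 1,
        (ball c R).indicator (fun z => ‖fderiv ℝ f z‖ₑ ^ 2) (x + t • h)) ∂μ := by
  rw [← lintegral_const_mul' _ _ (by finiteness), ← lintegral_indicator measurableSet_ball,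
    ← lintegral_indicator measurableSet_ball, ← lintegral_add_left_eq_self _ x]
  refine lintegral_mono fun h => ?_
  by_cases hy : x + h ∈ ball c R
  swap
  · simp only [indicator_of_notMem hy, zero_le]
  have hh : ‖h‖ < 2 * R := by
    have htri : dist (x + h) x ≤ dist (x + h) c + dist x c := dist_triangle_right _ _ _
    rw [dist_self_add_left] at htri
    linarith [mem_ball.1 hx, mem_ball.1 hy]
  rw [indicator_of_mem hy, indicator_of_mem (mem_ball_zero_iff.2 hh)]
  refine (enorm_sub_sq_le_lintegral_segment hf x h).trans ?_
  gcongr ?_ ^ 2 * ?_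
  · rw [← ofReal_norm]
    exact ENNReal.ofReal_le_ofReal hh.le
  · refine setLIntegral_mono' measurableSet_Ioc fun t ht => ?_
    rw [indicator_of_mem ((convex_ball c R).add_smul_mem hx hy ⟨ht.1.le, ht.2⟩)]

variable [FiniteDimensional ℝ E]

theorem setLIntegral_ball_zero_comp_sub_smul {W : E → ℝ≥0∞} (hW : Measurable W) (z : E) {t : ℝ}
    (ht : 0 < t) (R : ℝ) :
    ∫⁻ h in ball (0 : E) R, W (z - t • h) ∂μ =
      ENNReal.ofReal (t ^ Module.finrank ℝ E)⁻¹ * ∫⁻ y in ball z (t * R), W y ∂μ := by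
  have hpre : (fun h : E => z - t • h) ⁻¹' ball z (t * R) = ball 0 R := by
    ext h
    simp [dist_eq_norm, norm_smul, abs_of_pos ht, ht]
  have hmap : μ.map (fun h : E => z - t • h) = ENNReal.ofReal (t ^ Module.finrank ℝ E)⁻¹ • μ := by
    have hcomp : (fun h : E => z - t • h) = (fun y => z + y) ∘ fun h => (-t) • h := by
      ext h; simp [sub_eq_add_neg]
    rw [hcomp, ← Measure.map_map (by fun_prop) (by fun_prop),
      Measure.map_addHaar_smul _ (neg_ne_zero.2 ht.ne'), Measure.map_smul, map_add_left_eq_self,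
      abs_inv, abs_pow, abs_neg, abs_of_pos ht]
  rw [← hpre, ← setLIntegral_map measurableSet_ball hW (by fun_prop), hmap,
    setLIntegral_smul_measure, smul_eq_mul]

theorem IsA1Weight.setLIntegral_comp_sub_smul_le {W : E → ℝ≥0∞} {A : ℝ≥0∞}
    (hW : IsA1Weight μ W A) {t R : ℝ} (ht : 0 < t) (hR : 0 < R) :
    ∀ᵐ z ∂μ, ∫⁻ h in ball (0 : E) R, W (z - t • h) ∂μ ≤ A * μ (ball (0 : E) R) * W z := by
  filter_upwards [hW.setLIntegral_ball_le] with z hz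
  have hpow : 0 < t ^ Module.finrank ℝ E := by positivity
  calc ∫⁻ h in ball (0 : E) R, W (z - t • h) ∂μ
      = ENNReal.ofReal (t ^ Module.finrank ℝ E)⁻¹ * ∫⁻ y in ball z (t * R), W y ∂μ :=
        setLIntegral_ball_zero_comp_sub_smul hW.measurable z ht R
    _ ≤ ENNReal.ofReal (t ^ Module.finrank ℝ E)⁻¹ *
          (A * (ENNReal.ofReal (t ^ Module.finrank ℝ E) * μ (ball (0 : E) R)) * W z) := by
        rw [← Measure.addHaar_ball_mul_of_pos _ z ht]
        gcongr
        exact hz _ (by positivity)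
    _ = ENNReal.ofReal ((t ^ Module.finrank ℝ E)⁻¹ * t ^ Module.finrank ℝ E) *
          (A * μ (ball (0 : E) R) * W z) := by
        rw [ENNReal.ofReal_mul (by positivity)]
        ring
    _ = A * μ (ball (0 : E) R) * W z := by
        rw [inv_mul_cancel₀ hpow.ne', ENNReal.ofReal_one, one_mul]

theorem IsA1Weight.lintegral_translates_le {W : E → ℝ≥0∞} {A : ℝ≥0∞} (hW : IsA1Weight μ W A)
    {G : E → ℝ≥0∞} (hG : Measurable G) {t R : ℝ} (ht : 0 < t) (hR : 0 < R) :
    ∫⁻ x, ∫⁻ h in ball (0 : E) R, G (x + t • h) * W x ∂μ ∂μ ≤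
      A * μ (ball (0 : E) R) * ∫⁻ z, G z * W z ∂μ := by
  have hWm := hW.measurable
  calc ∫⁻ x, ∫⁻ h in ball (0 : E) R, G (x + t • h) * W x ∂μ ∂μ
      = ∫⁻ h in ball (0 : E) R, ∫⁻ x, G (x + t • h) * W x ∂μ ∂μ :=
        lintegral_lintegral_swap (by unfold Function.uncurry; fun_prop)
    _ = ∫⁻ h in ball (0 : E) R, ∫⁻ z, G z * W (z - t • h) ∂μ ∂μ := by
        refine lintegral_congr fun h => ?_
        simpa only [add_sub_cancel_right] using
          lintegral_add_right_eq_self (μ := μ) (fun z => G z * W (z - t • h)) (t • h)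
    _ = ∫⁻ z, G z * ∫⁻ h in ball (0 : E) R, W (z - t • h) ∂μ ∂μ := by
        rw [lintegral_lintegral_swap (by unfold Function.uncurry; fun_prop)]
        exact lintegral_congr fun z => lintegral_const_mul _ (by fun_prop)
    _ ≤ ∫⁻ z, A * μ (ball (0 : E) R) * (G z * W z) ∂μ := by
        refine lintegral_mono_ae ?_
        filter_upwards [hW.setLIntegral_comp_sub_smul_le ht hR] with z hz
        rw [mul_left_comm]
        gcongr
    _ = A * μ (ball (0 : E) R) * ∫⁻ z, G z * W z ∂μ := lintegral_const_mul _ (by fun_prop)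

theorem IsA1Weight.setLIntegral_enorm_sub_sq_le [CompleteSpace F] {W : E → ℝ≥0∞} {A : ℝ≥0∞}
    (hW : IsA1Weight μ W A) {f : E → F} (hf : ContDiff ℝ 1 f) (c : E) {R : ℝ} (hR : 0 < R) :
    ∫⁻ x in ball c R, (∫⁻ y in ball c R, ‖f x - f y‖ₑ ^ 2 ∂μ) * W x ∂μ ≤
      ENNReal.ofReal (2 * R) ^ 2 * (A * μ (ball (0 : E) (2 * R))) *
        ∫⁻ z in ball c R, ‖fderiv ℝ f z‖ₑ ^ 2 * W z ∂μ := by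
  set V := ball (0 : E) (2 * R)
  set K := ENNReal.ofReal (2 * R) ^ 2
  set G : E → ℝ≥0∞ := (ball c R).indicator fun z => ‖fderiv ℝ f z‖ₑ ^ 2 with hG
  have hWm := hW.measurable
  have hGm : Measurable G := ((hf.continuous_fderiv one_ne_zero).enorm.measurable.pow_const
    2).indicator measurableSet_ball
  calc ∫⁻ x in ball c R, (∫⁻ y in ball c R, ‖f x - f y‖ₑ ^ 2 ∂μ) * W x ∂μ
      ≤ ∫⁻ x in ball c R, K * (∫⁻ h in V, (∫⁻ t in Ioc (0 : ℝ) 1, G (x + t • h)) ∂μ) * W x ∂μ := by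
        refine setLIntegral_mono' measurableSet_ball fun x hx => ?_
        gcongr
        exact setLIntegral_ball_enorm_sub_sq_le hf hx
    _ ≤ ∫⁻ x, K * (∫⁻ h in V, (∫⁻ t in Ioc (0 : ℝ) 1, G (x + t • h)) ∂μ) * W x ∂μ :=
        setLIntegral_le_lintegral _ _
    _ = K * ∫⁻ x, (∫⁻ t in Ioc (0 : ℝ) 1, ∫⁻ h in V, G (x + t • h) * W x ∂μ) ∂μ := by
        rw [← lintegral_const_mul' _ _ (by finiteness)]
        refine lintegral_congr fun x => ?_
        rw [lintegral_lintegral_swap (by unfold Function.uncurry; fun_prop), mul_assoc,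
          ← lintegral_mul_const _ (by fun_prop)]
        congr! with t
        exact (lintegral_mul_const _ (by fun_prop)).symm
    _ = K * ∫⁻ t in Ioc (0 : ℝ) 1, ∫⁻ x, ∫⁻ h in V, G (x + t • h) * W x ∂μ ∂μ := by
        rw [lintegral_lintegral_swap]
        exact (Measurable.lintegral_prod_right' (f := fun q : (E × ℝ) × E =>
          G (q.1.1 + q.1.2 • q.2) * W q.1.1) (by fun_prop)).aemeasurable
    _ ≤ K * ∫⁻ _t in Ioc (0 : ℝ) 1, A * μ V * ∫⁻ z, G z * W z ∂μ := by
        gcongr 1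
        exact setLIntegral_mono' measurableSet_Ioc fun t ht =>
          hW.lintegral_translates_le hGm ht.1 (by positivity)
    _ = K * (A * μ V) * ∫⁻ z in ball c R, ‖fderiv ℝ f z‖ₑ ^ 2 * W z ∂μ := by
        simp only [hG, lintegral_const, Measure.restrict_apply_univ, Real.volume_Ioc, sub_zero,
          ENNReal.ofReal_one, mul_one, ← indicator_mul_left,
          lintegral_indicator measurableSet_ball, mul_assoc]

theorem IsA1Weight.poincare [CompleteSpace F] {W : E → ℝ≥0∞} {A : ℝ≥0∞}
    (hW : IsA1Weight μ W A) {f : E → F} (hf : ContDiff ℝ 1 f) (c : E) {R : ℝ} (hR : 0 < R) :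
    ∫⁻ x in ball c R, ‖f x - ⨍ y in ball c R, f y ∂μ‖ₑ ^ 2 * W x ∂μ ≤
      ENNReal.ofReal (2 * R) ^ 2 * (A * 2 ^ Module.finrank ℝ E) *
        ∫⁻ z in ball c R, ‖fderiv ℝ f z‖ₑ ^ 2 * W z ∂μ := by
  set B := ball c R
  have hB0 : μ B ≠ 0 := (measure_ball_pos μ c hR).ne'
  have hBt : μ B ≠ ⊤ := measure_ball_lt_top.ne
  have hfB : IntegrableOn f B μ :=
    (hf.continuous.locallyIntegrable.integrableOn_isCompact
      (isCompact_closedBall c R)).mono_set ball_subset_closedBall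
  have : NeZero (μ.restrict B) := ⟨by simpa using hB0⟩
  have : IsFiniteMeasure (μ.restrict B) := ⟨by simpa using hBt.lt_top⟩
  have hdouble : μ (ball (0 : E) (2 * R)) = 2 ^ Module.finrank ℝ E * μ B := by
    rw [Measure.addHaar_ball_mul_of_pos _ _ two_pos, ENNReal.ofReal_pow zero_le_two,
      ENNReal.ofReal_ofNat, ← Measure.addHaar_ball_center μ c]
  calc ∫⁻ x in B, ‖f x - ⨍ y in B, f y ∂μ‖ₑ ^ 2 * W x ∂μ
      ≤ ∫⁻ x in B, (μ B)⁻¹ * ((∫⁻ y in B, ‖f x - f y‖ₑ ^ 2 ∂μ) * W x) ∂μ := by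
        refine lintegral_mono fun x => ?_
        rw [← mul_assoc]
        gcongr
        refine (enorm_sub_average_sq_le hfB (f x)).trans_eq ?_
        rw [setLAverage_eq, ENNReal.div_eq_inv_mul]
    _ ≤ (μ B)⁻¹ * (ENNReal.ofReal (2 * R) ^ 2 * (A * μ (ball (0 : E) (2 * R))) *
          ∫⁻ z in B, ‖fderiv ℝ f z‖ₑ ^ 2 * W z ∂μ) := by
        rw [lintegral_const_mul' _ _ (ENNReal.inv_ne_top.2 hB0)]
        gcongr
        exact hW.setLIntegral_enorm_sub_sq_le hf c hR
    _ = (μ B)⁻¹ * μ B * (ENNReal.ofReal (2 * R) ^ 2 * (A * 2 ^ Module.finrank ℝ E) *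
          ∫⁻ z in B, ‖fderiv ℝ f z‖ₑ ^ 2 * W z ∂μ) := by rw [hdouble]; ring
    _ = _ := by rw [ENNReal.inv_mul_cancel hB0 hBt, one_mul]

end Poincare

/-! ### Convergence in `L¹_loc` -/

theorem exists_enorm_le_of_hasCompactSupport {E G : Type*} [TopologicalSpace E]
    [NormedAddCommGroup G] {φ : E → G} (hφ : Continuous φ)
    (hφc : HasCompactSupport φ) : ∃ C : ℝ≥0, ∀ x, ‖φ x‖ₑ ≤ C := by
  obtain ⟨C, hC⟩ := hφ.bounded_above_of_compact_support hφc
  exact ⟨C.toNNReal, fun x => by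
    rw [← ofReal_norm]; exact ENNReal.ofReal_le_ofReal (hC x)⟩

section TendstoL1Loc

variable {E F : Type*} [MeasurableSpace E] [TopologicalSpace E] [NormedAddCommGroup F]

/-- Convergence of the sequence `f` to `g` in `L¹_loc(μ)`, expressed through lower Lebesgue
integrals over compact sets so that it makes sense without any integrability assumption. -/
def TendstoL1Loc (μ : Measure E) (f : ℕ → E → F) (g : E → F) : Prop :=
  ∀ K, IsCompact K → Tendsto (fun k => ∫⁻ x in K, ‖f k x - g x‖ₑ ∂μ) atTop (𝓝 0)

theorem tendstoL1Loc_const (μ : Measure E) (g : E → F) : TendstoL1Loc μ (fun _ => g) g := by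
  intro K _
  simp only [sub_self, enorm_zero, lintegral_zero, tendsto_const_nhds]

theorem tendstoL1Loc_of_enorm_le {μ : Measure E}
    {f : ℕ → E → F} {g : E → F} (hf : ∀ k, AEStronglyMeasurable (f k) μ)
    (hg : LocallyIntegrable g μ) (hle : ∀ k x, ‖f k x‖ₑ ≤ ‖g x‖ₑ)
    (hlim : ∀ᵐ x ∂μ, Tendsto (fun k => f k x) atTop (𝓝 (g x))) : TendstoL1Loc μ f g := by
  intro K hK
  have hgK : IntegrableOn g K μ := hg.integrableOn_isCompact hK
  rw [← lintegral_zero (μ := μ.restrict K)]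
  refine tendsto_lintegral_of_dominated_convergence' (fun x => 2 * ‖g x‖ₑ)
    (fun k => ((hf k).restrict.sub hgK.1).enorm) (fun k => Eventually.of_forall fun x => ?_) ?_ ?_
  · calc ‖f k x - g x‖ₑ ≤ ‖f k x‖ₑ + ‖g x‖ₑ := enorm_sub_le
      _ ≤ ‖g x‖ₑ + ‖g x‖ₑ := by gcongr; exact hle k x
      _ = 2 * ‖g x‖ₑ := (two_mul _).symm
  · rw [lintegral_const_mul' _ _ (by finiteness)]
    exact ENNReal.mul_ne_top (by finiteness) hgK.2.ne
  · filter_upwards [ae_restrict_of_ae hlim] with x hx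
    simpa using (tendsto_sub_nhds_zero_iff.2 hx).enorm

namespace TendstoL1Loc

variable {μ : Measure E} {f : ℕ → E → F} {g : E → F}

theorem lipschitz_comp {G : Type*} [NormedAddCommGroup G] (h : TendstoL1Loc μ f g) {T : F → G}
    {C : ℝ≥0} (hT : LipschitzWith C T) : TendstoL1Loc μ (fun k => T ∘ f k) (T ∘ g) := by
  intro K hK
  refine tendsto_of_tendsto_of_tendsto_of_le_of_le tendsto_const_nhds
    (by simpa using ENNReal.Tendsto.const_mul (h K hK) (Or.inr (ENNReal.coe_ne_top (r := C))))
    (fun _ => zero_le) fun k => ?_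
  rw [← lintegral_const_mul' _ _ ENNReal.coe_ne_top]
  refine lintegral_mono fun x => ?_
  simpa only [Function.comp_apply, edist_eq_enorm_sub] using hT (f k x) (g x)

theorem add {f' : ℕ → E → F} {g' : E → F} (h : TendstoL1Loc μ f g) (h' : TendstoL1Loc μ f' g')
    (hf : ∀ k, AEStronglyMeasurable (f k) μ) (hg : AEStronglyMeasurable g μ) :
    TendstoL1Loc μ (fun k x => f k x + f' k x) (fun x => g x + g' x) := by
  intro K hK
  refine tendsto_of_tendsto_of_tendsto_of_le_of_le tendsto_const_nhds
    (by simpa using (h K hK).add (h' K hK)) (fun _ => zero_le) fun k => ?_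
  have hm : AEMeasurable (fun x => ‖f k x - g x‖ₑ) (μ.restrict K) :=
    ((hf k).sub hg).restrict.enorm
  rw [← lintegral_add_left' hm]
  refine lintegral_mono fun x => ?_
  rw [add_sub_add_comm]
  exact enorm_add_le _ _

theorem tendsto_integral_abs {f : ℕ → E → ℝ} {g : E → ℝ} (h : TendstoL1Loc μ f g) {K : Set E}
    (hK : IsCompact K) : Tendsto (fun k => ∫ x in K, |f k x - g x| ∂μ) atTop (𝓝 0) := by
  refine squeeze_zero (fun k => integral_nonneg fun x => abs_nonneg _) (fun k => ?_)
    ((ENNReal.tendsto_toReal ENNReal.zero_ne_top).comp (h K hK))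
  by_cases hm : AEStronglyMeasurable (fun x => |f k x - g x|) (μ.restrict K)
  · rw [integral_eq_lintegral_of_nonneg_ae (Eventually.of_forall fun x => abs_nonneg _) hm]
    simp only [Function.comp_apply, Real.enorm_eq_ofReal_abs, le_refl]
  · rw [integral_non_aestronglyMeasurable hm]
    exact ENNReal.toReal_nonneg

theorem smul_of_bounded_of_tendsto_ae [NormedSpace ℝ F]
    (h : TendstoL1Loc μ f g) (hg : LocallyIntegrable g μ) {c : ℕ → E → ℝ} {c₀ : E → ℝ} {B : ℝ≥0}
    (hcm : ∀ k, AEStronglyMeasurable (c k) μ) (hcB : ∀ k x, ‖c k x‖ₑ ≤ B)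
    (hc : ∀ᵐ x ∂μ, Tendsto (fun k => c k x) atTop (𝓝 (c₀ x))) :
    TendstoL1Loc μ (fun k x => c k x • f k x) (fun x => c₀ x • g x) := by
  intro K hK
  have hc₀m : AEStronglyMeasurable c₀ μ := aestronglyMeasurable_of_tendsto_ae atTop hcm hc
  have hgK : IntegrableOn g K μ := hg.integrableOn_isCompact hK
  have hm (k : ℕ) : AEMeasurable (fun x => ‖c k x - c₀ x‖ₑ * ‖g x‖ₑ) (μ.restrict K) :=
    ((hcm k).sub hc₀m).restrict.enorm.mul hgK.1.enorm
  have hc₀B : ∀ᵐ x ∂μ, ‖c₀ x‖ₑ ≤ B := by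
    filter_upwards [hc] with x hx using le_of_tendsto' hx.enorm fun k => hcB k x
  have hdom : Tendsto (fun k => ∫⁻ x in K, ‖c k x - c₀ x‖ₑ * ‖g x‖ₑ ∂μ) atTop (𝓝 0) := by
    rw [← lintegral_zero (μ := μ.restrict K)]
    refine tendsto_lintegral_of_dominated_convergence' (fun x => 2 * B * ‖g x‖ₑ) hm
      (fun k => ?_) ?_ ?_
    · filter_upwards [ae_restrict_of_ae hc₀B] with x hx
      gcongr
      calc ‖c k x - c₀ x‖ₑ ≤ ‖c k x‖ₑ + ‖c₀ x‖ₑ := enorm_sub_le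
        _ ≤ B + B := add_le_add (hcB k x) hx
        _ = 2 * B := (two_mul _).symm
    · rw [lintegral_const_mul' _ _ (by finiteness)]
      exact ENNReal.mul_ne_top (by finiteness) hgK.2.ne
    · filter_upwards [ae_restrict_of_ae hc] with x hx
      simpa using ENNReal.Tendsto.mul_const ((tendsto_sub_nhds_zero_iff.2 hx).enorm)
        (Or.inr enorm_ne_top)
  have hsum := (ENNReal.Tendsto.const_mul (h K hK) (Or.inr (ENNReal.coe_ne_top (r := B)))).add hdom
  simp only [mul_zero, add_zero] at hsum
  refine tendsto_of_tendsto_of_tendsto_of_le_of_le tendsto_const_nhds hsum (fun _ => zero_le)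
    fun k => ?_
  rw [← lintegral_const_mul' _ _ ENNReal.coe_ne_top, ← lintegral_add_right' _ (hm k)]
  refine lintegral_mono fun x => ?_
  calc ‖c k x • f k x - c₀ x • g x‖ₑ = ‖c k x • (f k x - g x) + (c k x - c₀ x) • g x‖ₑ := by
        congr 1; module
    _ ≤ ‖c k x‖ₑ * ‖f k x - g x‖ₑ + ‖c k x - c₀ x‖ₑ * ‖g x‖ₑ := by
        simpa only [enorm_smul] using
          enorm_add_le (c k x • (f k x - g x)) ((c k x - c₀ x) • g x)
    _ ≤ B * ‖f k x - g x‖ₑ + ‖c k x - c₀ x‖ₑ * ‖g x‖ₑ := by gcongr; exact hcB k x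

section IntegralAgainstTestFunction

variable [OpensMeasurableSpace E] [T2Space E] {G : Type*} [NormedAddCommGroup G] [NormedSpace ℝ G]

theorem tendsto_integral_of_enorm_sub_le (h : TendstoL1Loc μ f g) {f' : ℕ → E → G} {g' : E → G}
    (hf' : ∀ k, Integrable (f' k) μ) (hg' : AEStronglyMeasurable g' μ) {φ : E → ℝ≥0∞}
    {K : Set E} (hK : IsCompact K) (hφK : ∀ x ∉ K, φ x = 0) {C : ℝ≥0} (hφC : ∀ x, φ x ≤ C)
    (hle : ∀ k x, ‖f' k x - g' x‖ₑ ≤ φ x * ‖f k x - g x‖ₑ) :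
    Tendsto (fun k => ∫ x, f' k x ∂μ) atTop (𝓝 (∫ x, g' x ∂μ)) := by
  refine tendsto_integral_of_L1 _ hg' (Eventually.of_forall hf') ?_
  refine tendsto_of_tendsto_of_tendsto_of_le_of_le tendsto_const_nhds
    (by simpa using ENNReal.Tendsto.const_mul (h K hK) (Or.inr (ENNReal.coe_ne_top (r := C))))
    (fun _ => zero_le) fun k => ?_
  rw [← lintegral_const_mul' _ _ ENNReal.coe_ne_top,
    ← lintegral_indicator hK.isClosed.measurableSet]
  refine lintegral_mono fun x => (hle k x).trans ?_
  by_cases hx : x ∈ K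
  · rw [indicator_of_mem hx]
    gcongr
    exact hφC x
  · simp only [hφK x hx, zero_mul, zero_le]

theorem tendsto_integral_smul_right {f : ℕ → E → ℝ} {g : E → ℝ} (h : TendstoL1Loc μ f g)
    (hf : ∀ k, LocallyIntegrable (f k) μ) (hg : AEStronglyMeasurable g μ) {φ : E → G}
    (hφ : Continuous φ) (hφc : HasCompactSupport φ) :
    Tendsto (fun k => ∫ x, f k x • φ x ∂μ) atTop (𝓝 (∫ x, g x • φ x ∂μ)) := by
  obtain ⟨C, hC⟩ := exists_enorm_le_of_hasCompactSupport hφ hφc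
  refine h.tendsto_integral_of_enorm_sub_le
    (fun k => (hf k).integrable_smul_right_of_hasCompactSupport hφ hφc)
    (hg.smul (hφ.stronglyMeasurable_of_hasCompactSupport hφc).aestronglyMeasurable) hφc.isCompact
    (fun x hx => by rw [image_eq_zero_of_notMem_tsupport hx, enorm_zero]) hC fun k x => ?_
  rw [← sub_smul, enorm_smul, mul_comm]

theorem tendsto_integral_smul_left [NormedSpace ℝ F] (h : TendstoL1Loc μ f g)
    (hf : ∀ k, LocallyIntegrable (f k) μ) (hg : AEStronglyMeasurable g μ) {φ : E → ℝ}
    (hφ : Continuous φ) (hφc : HasCompactSupport φ) :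
    Tendsto (fun k => ∫ x, φ x • f k x ∂μ) atTop (𝓝 (∫ x, φ x • g x ∂μ)) := by
  obtain ⟨C, hC⟩ := exists_enorm_le_of_hasCompactSupport hφ hφc
  refine h.tendsto_integral_of_enorm_sub_le
    (fun k => (hf k).integrable_smul_left_of_hasCompactSupport hφ hφc)
    ((hφ.stronglyMeasurable_of_hasCompactSupport hφc).aestronglyMeasurable.smul hg) hφc.isCompact
    (fun x hx => by rw [image_eq_zero_of_notMem_tsupport hx, enorm_zero]) hC fun k x => ?_
  rw [← smul_sub, enorm_smul]

end IntegralAgainstTestFunction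

end TendstoL1Loc

end TendstoL1Loc

/-! ### Mollification -/

section Mollification

/-- The bump function centred at the origin, equal to `1` on the ball of radius `1 / (2 (k + 1))`
and supported in the ball of radius `1 / (k + 1)`; its normalisation is the mollifying kernel. -/
def stdBump (E : Type*) [NormedAddCommGroup E] (k : ℕ) : ContDiffBump (0 : E) where
  rIn := 1 / (2 * ((k : ℝ) + 1))
  rOut := 1 / ((k : ℝ) + 1)
  rIn_pos := by positivity
  rIn_lt_rOut := one_div_lt_one_div_of_lt (by positivity) (by linarith [k.cast_nonneg (α := ℝ)])

theorem stdBump_rOut (E : Type*) [NormedAddCommGroup E] (k : ℕ) :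
    (stdBump E k).rOut = 1 / ((k : ℝ) + 1) := rfl

theorem stdBump_rOut_le_one (E : Type*) [NormedAddCommGroup E] (k : ℕ) :
    (stdBump E k).rOut ≤ 1 := by
  rw [stdBump_rOut, div_le_one (by positivity)]
  linarith [k.cast_nonneg (α := ℝ)]

theorem tendsto_stdBump_rOut (E : Type*) [NormedAddCommGroup E] :
    Tendsto (fun k => (stdBump E k).rOut) atTop (𝓝 0) :=
  tendsto_one_div_add_atTop_nhds_zero_nat

theorem stdBump_rOut_le_two_mul_rIn (E : Type*) [NormedAddCommGroup E] (k : ℕ) :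
    (stdBump E k).rOut ≤ 2 * (stdBump E k).rIn := by
  refine le_of_eq ?_
  simp only [stdBump]
  field_simp

theorem eLpNorm_withDensity_eq {α F : Type*} [MeasurableSpace α] [NormedAddCommGroup F]
    {ν : Measure α} {W : α → ℝ≥0∞} (hW : Measurable W) {p : ℝ≥0∞} (hp : 1 ≤ p) (hp_top : p ≠ ⊤)
    {g : α → F} (hg : AEStronglyMeasurable g ν) :
    eLpNorm g p (ν.withDensity W) = (∫⁻ x, ‖g x‖ₑ ^ p.toReal * W x ∂ν) ^ (1 / p.toReal) := by
  rw [eLpNorm_eq_lintegral_rpow_enorm_toReal (by positivity) hp_top,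
    lintegral_withDensity_eq_lintegral_mul₀ hW.aemeasurable (hg.enorm.pow_const _)]
  simp only [Pi.mul_apply, mul_comm]

variable {E F : Type*} [NormedAddCommGroup E] [NormedSpace ℝ E] [FiniteDimensional ℝ E]
  [MeasurableSpace E] [NormedAddCommGroup F] [NormedSpace ℝ F]

open scoped Convolution in
/-- The mollification of `g` at scale `1 / (k + 1)`: the convolution of `g` with the normalised
standard bump function. -/
def mollify (μ : Measure E) (k : ℕ) (g : E → F) : E → F :=
  (stdBump E k).normed μ ⋆[ContinuousLinearMap.lsmul ℝ ℝ, μ] g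

variable (μ : Measure E)

theorem continuous_stdBump_normed_const_sub (k : ℕ) (x : E) :
    Continuous fun y => (stdBump E k).normed μ (x - y) :=
  (stdBump E k).continuous_normed.comp (by fun_prop)

variable [BorelSpace E] [μ.IsAddHaarMeasure]

theorem mollify_apply (k : ℕ) (g : E → F) (x : E) :
    mollify μ k g x = ∫ y, (stdBump E k).normed μ (x - y) • g y ∂μ := by
  simp only [mollify, convolution_eq_swap, ContinuousLinearMap.lsmul_apply]

theorem support_stdBump_normed_const_sub (k : ℕ) (x : E) :
    (Function.support fun y => (stdBump E k).normed μ (x - y)) = ball x (stdBump E k).rOut := by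
  ext y
  have := Set.ext_iff.1 ((stdBump E k).support_normed_eq (μ := μ)) (x - y)
  rwa [mem_ball_zero_iff, ← dist_eq_norm, dist_comm] at this

theorem tsupport_stdBump_normed_const_sub (k : ℕ) (x : E) :
    (tsupport fun y => (stdBump E k).normed μ (x - y)) ⊆ closedBall x (stdBump E k).rOut := by
  rw [tsupport, support_stdBump_normed_const_sub]
  exact closure_ball_subset_closedBall

theorem hasCompactSupport_stdBump_normed_const_sub (k : ℕ) (x : E) :
    HasCompactSupport fun y => (stdBump E k).normed μ (x - y) :=
  (isCompact_closedBall x _).of_isClosed_subset (isClosed_tsupport _)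
    (tsupport_stdBump_normed_const_sub μ k x)

variable {μ}

theorem integrable_stdBump_normed_smul {g : E → F} (hg : LocallyIntegrable g μ) (k : ℕ) (x : E) :
    Integrable (fun y => (stdBump E k).normed μ (x - y) • g y) μ :=
  hg.integrable_smul_left_of_hasCompactSupport (continuous_stdBump_normed_const_sub μ k x)
    (hasCompactSupport_stdBump_normed_const_sub μ k x)

theorem mollify_sub {f g : E → F} (hf : LocallyIntegrable f μ) (hg : LocallyIntegrable g μ)
    (k : ℕ) : mollify μ k (f - g) = mollify μ k f - mollify μ k g := by
  ext1 x
  simp only [mollify_apply, Pi.sub_apply, smul_sub]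
  exact integral_sub (integrable_stdBump_normed_smul hf k x) (integrable_stdBump_normed_smul hg k x)

theorem mollify_congr_of_eqOn_ball {f g : E → F} {k : ℕ} {x : E}
    (h : EqOn f g (ball x (stdBump E k).rOut)) : mollify μ k f x = mollify μ k g x := by
  simp only [mollify_apply]
  refine integral_congr_ae (Eventually.of_forall fun y => ?_)
  by_cases hy : y ∈ ball x (stdBump E k).rOut
  · simp only [h hy]
  · rw [← support_stdBump_normed_const_sub μ k x, Function.notMem_support] at hy
    simp only [hy, zero_smul]

theorem mollify_eq_zero_of_notMem_cthickening {g : E → F} {x : E}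
    (hx : x ∉ cthickening 1 (tsupport g)) (k : ℕ) : mollify μ k g x = 0 := by
  have hzero : EqOn g 0 (ball x (stdBump E k).rOut) := fun y hy =>
    image_eq_zero_of_notMem_tsupport fun hmem => hx <|
      mem_cthickening_of_dist_le x y 1 _ hmem <| by
        rw [dist_comm]; exact (mem_ball.1 hy).le.trans (stdBump_rOut_le_one E k)
  rw [mollify_congr_of_eqOn_ball hzero, mollify_apply]
  simp only [Pi.zero_apply, smul_zero, integral_zero]

theorem lintegral_ofReal_stdBump_normed (k : ℕ) (x : E) :
    ∫⁻ y, ENNReal.ofReal ((stdBump E k).normed μ (x - y)) ∂μ = 1 := by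
  rw [lintegral_sub_left_eq_self (fun y => ENNReal.ofReal ((stdBump E k).normed μ y)) x,
    ← ofReal_integral_eq_lintegral_ofReal (stdBump E k).integrable_normed
      (Eventually.of_forall (stdBump E k).nonneg_normed),
    (stdBump E k).integral_normed, ENNReal.ofReal_one]

theorem enorm_mollify_rpow_le {p : ℝ} (hp : 1 ≤ p) {g : E → F} (hg : AEStronglyMeasurable g μ)
    (k : ℕ) (x : E) :
    ‖mollify μ k g x‖ₑ ^ p ≤
      ∫⁻ y, ENNReal.ofReal ((stdBump E k).normed μ (x - y)) * ‖g y‖ₑ ^ p ∂μ := by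
  set κ : E → ℝ≥0∞ := fun y => ENNReal.ofReal ((stdBump E k).normed μ (x - y))
  have hκ : Measurable κ := (continuous_stdBump_normed_const_sub μ k x).measurable.ennreal_ofReal
  have hprob : IsProbabilityMeasure (μ.withDensity κ) := ⟨by
    rw [withDensity_apply _ .univ, setLIntegral_univ, lintegral_ofReal_stdBump_normed]⟩
  have hdensity (q : ℝ) : ∫⁻ y, κ y * ‖g y‖ₑ ^ q ∂μ = ∫⁻ y, ‖g y‖ₑ ^ q ∂μ.withDensity κ :=
    (lintegral_withDensity_eq_lintegral_mul₀ hκ.aemeasurable (hg.enorm.pow_const q)).symm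
  calc ‖mollify μ k g x‖ₑ ^ p
      ≤ (∫⁻ y, ‖g y‖ₑ ∂μ.withDensity κ) ^ p := by
        gcongr
        have hone := hdensity 1
        simp only [ENNReal.rpow_one] at hone
        rw [← hone, mollify_apply]
        refine (enorm_integral_le_lintegral_enorm _).trans (lintegral_mono fun y => ?_)
        rw [enorm_smul, Real.enorm_of_nonneg ((stdBump E k).nonneg_normed _)]
    _ ≤ ∫⁻ y, ‖g y‖ₑ ^ p ∂μ.withDensity κ := rpow_lintegral_le_lintegral_rpow _ hp
        (hg.mono_ac (withDensity_absolutelyContinuous _ _)).enorm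
    _ = _ := (hdensity p).symm

theorem ofReal_stdBump_normed_le_indicator (k : ℕ) (x y : E) :
    ENNReal.ofReal ((stdBump E k).normed μ (x - y)) ≤
      (ball y (stdBump E k).rOut).indicator
        (fun _ => 2 ^ Module.finrank ℝ E / μ (ball y (stdBump E k).rOut)) x := by
  set r := (stdBump E k).rOut
  have hr : 0 < r := (stdBump E k).rOut_pos
  by_cases hx : x ∈ ball y r
  · have hball : μ (ball y r) = μ (closedBall (0 : E) r) := by
      rw [Measure.addHaar_closedBall _ _ hr.le, Measure.addHaar_ball_of_pos _ _ hr]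
    have hpos : 0 < μ.real (closedBall (0 : E) r) :=
      ENNReal.toReal_pos (measure_closedBall_pos _ _ hr).ne' measure_closedBall_lt_top.ne
    rw [indicator_of_mem hx, hball]
    refine (ENNReal.ofReal_le_ofReal ((stdBump E k).normed_le_div_measure_closedBall_rOut μ 2
      (stdBump_rOut_le_two_mul_rIn E k) (x - y))).trans_eq ?_
    rw [ENNReal.ofReal_div_of_pos hpos, Measure.real,
      ENNReal.ofReal_toReal measure_closedBall_lt_top.ne, ENNReal.ofReal_pow zero_le_two,
      ENNReal.ofReal_ofNat]
  · have hx' : y ∉ ball x r := by rwa [mem_ball_comm]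
    rw [← support_stdBump_normed_const_sub μ k x, Function.notMem_support] at hx'
    rw [hx', ENNReal.ofReal_zero]
    exact zero_le

theorem IsA1Weight.ae_lintegral_stdBump_normed_mul_le {W : E → ℝ≥0∞} {A : ℝ≥0∞}
    (hW : IsA1Weight μ W A) (k : ℕ) :
    ∀ᵐ y ∂μ, ∫⁻ x, ENNReal.ofReal ((stdBump E k).normed μ (x - y)) * W x ∂μ ≤
      2 ^ Module.finrank ℝ E * A * W y := by
  filter_upwards [hW.setLIntegral_ball_le] with y hy
  have hr : 0 < (stdBump E k).rOut := (stdBump E k).rOut_pos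
  set B := ball y (stdBump E k).rOut
  calc ∫⁻ x, ENNReal.ofReal ((stdBump E k).normed μ (x - y)) * W x ∂μ
      ≤ ∫⁻ x, B.indicator (fun x => 2 ^ Module.finrank ℝ E / μ B * W x) x ∂μ := by
        refine lintegral_mono fun x => ?_
        rw [indicator_mul_left]
        gcongr
        exact ofReal_stdBump_normed_le_indicator k x y
    _ = 2 ^ Module.finrank ℝ E / μ B * ∫⁻ x in B, W x ∂μ := by
        rw [lintegral_indicator measurableSet_ball, lintegral_const_mul _ hW.measurable]
    _ ≤ 2 ^ Module.finrank ℝ E / μ B * (A * μ B * W y) := by gcongr; exact hy _ hr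
    _ = (μ B)⁻¹ * μ B * (2 ^ Module.finrank ℝ E * A * W y) := by rw [div_eq_mul_inv]; ring
    _ = 2 ^ Module.finrank ℝ E * A * W y := by
        rw [ENNReal.inv_mul_cancel (measure_ball_pos _ _ hr).ne' measure_ball_lt_top.ne, one_mul]

theorem IsA1Weight.lintegral_enorm_mollify_rpow_le {W : E → ℝ≥0∞} {A : ℝ≥0∞}
    (hW : IsA1Weight μ W A) {p : ℝ} (hp : 1 ≤ p) {g : E → F} (hg : AEStronglyMeasurable g μ)
    (k : ℕ) :
    ∫⁻ x, ‖mollify μ k g x‖ₑ ^ p * W x ∂μ ≤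
      2 ^ Module.finrank ℝ E * A * ∫⁻ x, ‖g x‖ₑ ^ p * W x ∂μ := by
  set κ : E → E → ℝ≥0∞ := fun x y => ENNReal.ofReal ((stdBump E k).normed μ (x - y))
  have hκ : Measurable fun q : E × E => κ q.1 q.2 :=
    ((stdBump E k).continuous_normed.measurable.comp (by fun_prop)).ennreal_ofReal
  have hgp : AEMeasurable (fun y => ‖g y‖ₑ ^ p) μ := hg.enorm.pow_const p
  calc ∫⁻ x, ‖mollify μ k g x‖ₑ ^ p * W x ∂μ
      ≤ ∫⁻ x, (∫⁻ y, κ x y * ‖g y‖ₑ ^ p * W x ∂μ) ∂μ := by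
        refine lintegral_mono fun x => ?_
        have hκx : Measurable (κ x) :=
          (continuous_stdBump_normed_const_sub μ k x).measurable.ennreal_ofReal
        exact (mul_le_mul_left (enorm_mollify_rpow_le hp hg k x) _).trans_eq
          (lintegral_mul_const'' _ (hκx.aemeasurable.mul hgp)).symm
    _ = ∫⁻ y, (∫⁻ x, ‖g y‖ₑ ^ p * (κ x y * W x) ∂μ) ∂μ := by
        rw [lintegral_lintegral_swap]
        · simp only [mul_comm, mul_left_comm]
        · exact (hκ.aemeasurable.mul hgp.comp_snd).mul
            (hW.measurable.comp measurable_fst).aemeasurable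
    _ = ∫⁻ y, ‖g y‖ₑ ^ p * (∫⁻ x, κ x y * W x ∂μ) ∂μ :=
        lintegral_congr fun y => by
          have hκy : Measurable fun x => κ x y :=
            ((stdBump E k).continuous_normed.measurable.comp (by fun_prop)).ennreal_ofReal
          exact lintegral_const_mul _ (hκy.mul hW.measurable)
    _ ≤ ∫⁻ y, 2 ^ Module.finrank ℝ E * A * (‖g y‖ₑ ^ p * W y) ∂μ := by
        refine lintegral_mono_ae ?_
        filter_upwards [hW.ae_lintegral_stdBump_normed_mul_le k] with y hy
        calc ‖g y‖ₑ ^ p * ∫⁻ x, κ x y * W x ∂μ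
            ≤ ‖g y‖ₑ ^ p * (2 ^ Module.finrank ℝ E * A * W y) := by gcongr
          _ = 2 ^ Module.finrank ℝ E * A * (‖g y‖ₑ ^ p * W y) := by ring
    _ = _ := lintegral_const_mul'' _ (hgp.mul hW.measurable.aemeasurable)

theorem contDiff_mollify {g : E → F} (hg : LocallyIntegrable g μ) (k : ℕ) :
    ContDiff ℝ (⊤ : ℕ∞) (mollify μ k g) :=
  (stdBump E k).hasCompactSupport_normed.contDiff_convolution_left _
    (stdBump E k).contDiff_normed hg

theorem IsA1Weight.eLpNorm_mollify_le {W : E → ℝ≥0∞} {A : ℝ≥0∞} (hW : IsA1Weight μ W A)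
    {p : ℝ≥0∞} (hp : 1 ≤ p) (hp_top : p ≠ ⊤) {g : E → F} (hg : LocallyIntegrable g μ) (k : ℕ) :
    eLpNorm (mollify μ k g) p (μ.withDensity W) ≤
      (2 ^ Module.finrank ℝ E * A) ^ (1 / p.toReal) * eLpNorm g p (μ.withDensity W) := by
  rw [eLpNorm_withDensity_eq hW.measurable hp hp_top hg.aestronglyMeasurable,
    eLpNorm_withDensity_eq hW.measurable hp hp_top
      (contDiff_mollify hg k).continuous.aestronglyMeasurable,
    ← ENNReal.mul_rpow_of_nonneg _ _ (by positivity)]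
  gcongr
  exact hW.lintegral_enorm_mollify_rpow_le
    (by simpa using ENNReal.toReal_mono hp_top hp) hg.aestronglyMeasurable k

variable [CompleteSpace F]

theorem ae_tendsto_mollify {f : E → F} (hf : LocallyIntegrable f μ) :
    ∀ᵐ x ∂μ, Tendsto (fun k => mollify μ k f x) atTop (𝓝 (f x)) :=
  ContDiffBump.ae_convolution_tendsto_right_of_locallyIntegrable (K := 2) (tendsto_stdBump_rOut E)
    (Eventually.of_forall (stdBump_rOut_le_two_mul_rIn E)) hf

theorem tendsto_eLpNorm_mollify_sub_of_hasCompactSupport {p : ℝ≥0∞} (ν : Measure E)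
    [IsLocallyFiniteMeasure ν] {g : E → F} (hg : Continuous g) (hgc : HasCompactSupport g) :
    Tendsto (fun k => eLpNorm (mollify μ k g - g) p ν) atTop (𝓝 0) := by
  set S := cthickening 1 (tsupport g)
  have hbound {ε : ℝ≥0} (hε : 0 < ε) :
      ∀ᶠ k in atTop, eLpNorm (mollify μ k g - g) p ν ≤ ν S ^ (1 / p.toReal) * ε := by
    obtain ⟨η, hη, hclose⟩ := Metric.uniformContinuous_iff.1
      (hgc.uniformContinuous_of_continuous hg) ε (NNReal.coe_pos.2 hε)
    filter_upwards [(tendsto_stdBump_rOut E).eventually (gt_mem_nhds hη)] with k hk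
    refine (eLpNorm_mono_enorm (g := S.indicator fun _ => (ε : ℝ)) fun x => ?_).trans ?_
    · by_cases hx : x ∈ S
      · rw [indicator_of_mem hx, enorm_le_iff_norm_le, Pi.sub_apply, ← dist_eq_norm,
          NNReal.norm_eq]
        exact ContDiffBump.dist_normed_convolution_le hg.aestronglyMeasurable
          fun y hy => (hclose (lt_trans hy hk)).le
      · have hgx : g x = 0 := image_eq_zero_of_notMem_tsupport fun hmem =>
          hx (self_subset_cthickening _ hmem)
        rw [Pi.sub_apply, mollify_eq_zero_of_notMem_cthickening hx, hgx, sub_zero, enorm_zero]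
        exact zero_le
    · refine (eLpNorm_indicator_const_le _ _).trans_eq ?_
      rw [mul_comm, Real.enorm_eq_ofReal ε.coe_nonneg, ENNReal.ofReal_coe_nnreal]
  have hS : ν S ^ (1 / p.toReal) ≠ ⊤ :=
    ENNReal.rpow_ne_top_of_nonneg (by positivity) hgc.isCompact.cthickening.measure_lt_top.ne
  refine ENNReal.tendsto_nhds_zero.2 fun η hη => ?_
  obtain ⟨ε, hε, hle⟩ := ENNReal.exists_nnreal_pos_mul_lt hS hη.ne'
  filter_upwards [hbound hε] with k hk using hk.trans (by rw [mul_comm]; exact hle.le)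

theorem IsA1Weight.tendsto_eLpNorm_mollify_sub {W : E → ℝ≥0∞} {A : ℝ≥0∞}
    (hW : IsA1Weight μ W A) (hA : A ≠ ⊤) [IsLocallyFiniteMeasure (μ.withDensity W)] {p : ℝ≥0∞}
    (hp : 1 ≤ p) (hp_top : p ≠ ⊤) {f : E → F} (hf : LocallyIntegrable f μ)
    (hfp : MemLp f p (μ.withDensity W)) :
    Tendsto (fun k => eLpNorm (mollify μ k f - f) p (μ.withDensity W)) atTop (𝓝 0) := by
  set ν := μ.withDensity W
  set D : ℝ≥0∞ := (2 ^ Module.finrank ℝ E * A) ^ (1 / p.toReal)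
  have hD : D ≠ ⊤ := ENNReal.rpow_ne_top_of_nonneg (by positivity)
    (ENNReal.mul_ne_top (by finiteness) hA)
  refine ENNReal.tendsto_nhds_zero.2 fun η hη => ?_
  obtain ⟨ε, hε, hle⟩ := ENNReal.exists_nnreal_pos_mul_lt (a := D + 2) (by finiteness) hη.ne'
  have hε' : (0 : ℝ≥0∞) < ε := ENNReal.coe_pos.2 hε
  obtain ⟨g, hgc, hfg, hgcont, hgp⟩ :=
    hfp.exists_hasCompactSupport_eLpNorm_sub_le hp_top hε'.ne'
  have hg : LocallyIntegrable g μ := hgcont.locallyIntegrable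
  filter_upwards [(tendsto_eLpNorm_mollify_sub_of_hasCompactSupport (μ := μ) ν hgcont
    hgc).eventually (ge_mem_nhds hε')] with k hk
  have hsplit : mollify μ k f - f = mollify μ k (f - g) + ((mollify μ k g - g) - (f - g)) := by
    rw [mollify_sub hf hg]; abel
  have hm₁ : AEStronglyMeasurable (mollify μ k (f - g)) ν :=
    (contDiff_mollify (hf.sub hg) k).continuous.aestronglyMeasurable
  have hm₂ : AEStronglyMeasurable (mollify μ k g - g) ν :=
    ((contDiff_mollify hg k).continuous.sub hgcont).aestronglyMeasurable
  have hm₃ : AEStronglyMeasurable (f - g) ν := hfp.1.sub hgp.1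
  calc eLpNorm (mollify μ k f - f) p ν
      ≤ eLpNorm (mollify μ k (f - g)) p ν + eLpNorm ((mollify μ k g - g) - (f - g)) p ν := by
        rw [hsplit]; exact eLpNorm_add_le hm₁ (hm₂.sub hm₃) hp
    _ ≤ D * ε + (ε + ε) := by
        gcongr
        · exact (hW.eLpNorm_mollify_le hp hp_top (hf.sub hg) k).trans (by gcongr)
        · exact (eLpNorm_sub_le hm₂ hm₃ hp).trans (by gcongr)
    _ = ε * (D + 2) := by ring
    _ ≤ η := hle.le

theorem tendstoL1Loc_mollify {f : E → F} (hf : LocallyIntegrable f μ) :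
    TendstoL1Loc μ (fun k => mollify μ k f) f := by
  intro K hK
  set g := (cthickening 1 K).indicator f
  have hg : Integrable g μ := (integrable_indicator_iff isClosed_cthickening.measurableSet).2
    (hf.integrableOn_isCompact hK.cthickening)
  have : IsLocallyFiniteMeasure (μ.withDensity 1) := by rw [withDensity_one]; infer_instance
  have hlim := (isA1Weight_one μ).tendsto_eLpNorm_mollify_sub ENNReal.one_ne_top le_rfl
    ENNReal.one_ne_top hg.locallyIntegrable (by rwa [withDensity_one, memLp_one_iff_integrable])
  simp only [withDensity_one, eLpNorm_one_eq_lintegral_enorm] at hlim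
  refine tendsto_of_tendsto_of_tendsto_of_le_of_le tendsto_const_nhds hlim (fun _ => zero_le)
    fun k => (setLIntegral_congr_fun hK.isClosed.measurableSet fun x hx => ?_).trans_le
      (setLIntegral_le_lintegral K _)
  have hfg : EqOn f g (ball x (stdBump E k).rOut) := fun y hy =>
    (indicator_of_mem (mem_cthickening_of_dist_le y x 1 K hx
      ((mem_ball.1 hy).le.trans (stdBump_rOut_le_one E k))) f).symm
  simp only [Pi.sub_apply, mollify_congr_of_eqOn_ball hfg,
    hfg (mem_ball_self (stdBump E k).rOut_pos)]

end Mollification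

/-! ### Distributional gradients -/

section Gradient

variable {E : Type*} [NormedAddCommGroup E] [InnerProductSpace ℝ E] [CompleteSpace E]

theorem enorm_gradient (f : E → ℝ) (x : E) : ‖gradient f x‖ₑ = ‖fderiv ℝ f x‖ₑ := by
  rw [gradient, LinearIsometryEquiv.enorm_map]

theorem continuous_gradient {f : E → ℝ} (hf : ContDiff ℝ 1 f) : Continuous (gradient f) :=
  (InnerProductSpace.toDual ℝ E).symm.continuous.comp (hf.continuous_fderiv one_ne_zero)

theorem hasCompactSupport_gradient {f : E → ℝ} (hf : HasCompactSupport f) :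
    HasCompactSupport (gradient f) :=
  (hf.fderiv (𝕜 := ℝ)).comp_left (map_zero (InnerProductSpace.toDual ℝ E).symm)

theorem gradient_of_notMem_tsupport {f : E → ℝ} {x : E} (hx : x ∉ tsupport f) :
    gradient f x = 0 := by
  rw [gradient, fderiv_of_notMem_tsupport ℝ hx, map_zero]

theorem gradient_comp_const_sub {f : E → ℝ} {x y : E} (hf : DifferentiableAt ℝ f (x - y)) :
    gradient (fun z => f (x - z)) y = -gradient f (x - y) := by
  have hderiv : HasFDerivAt (fun z => f (x - z)) (-fderiv ℝ f (x - y)) y := by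
    simpa [Function.comp_def] using hf.hasFDerivAt.comp y ((hasFDerivAt_id y).const_sub x)
  rw [gradient, hderiv.fderiv, map_neg, gradient]

theorem gradient_comp_eq_deriv_smul {T : ℝ → ℝ} {f : E → ℝ} {x : E}
    (hT : DifferentiableAt ℝ T (f x)) (hf : DifferentiableAt ℝ f x) :
    gradient (T ∘ f) x = deriv T (f x) • gradient f x := by
  rw [gradient, (hT.hasDerivAt.comp_hasFDerivAt x hf.hasFDerivAt).fderiv, map_smul, gradient]

theorem gradient_mul {f g : E → ℝ} {x : E} (hf : DifferentiableAt ℝ f x)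
    (hg : DifferentiableAt ℝ g x) :
    gradient (fun y => f y * g y) x = f x • gradient g x + g x • gradient f x := by
  rw [gradient, fderiv_fun_mul hf hg, map_add, map_smul, map_smul, gradient, gradient]

variable [FiniteDimensional ℝ E] [MeasurableSpace E] [BorelSpace E] {μ : Measure E}
  [μ.IsAddHaarMeasure]

theorem integral_smul_gradient_eq_neg {f φ : E → ℝ} (hf : ContDiff ℝ 1 f) (hφ : ContDiff ℝ 1 φ)
    (hφc : HasCompactSupport φ) :
    ∫ x, f x • gradient φ x ∂μ = -∫ x, φ x • gradient f x ∂μ := by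
  have hint : Integrable (fun x => f x • gradient φ x) μ :=
    (hf.continuous.smul (continuous_gradient hφ)).integrable_of_hasCompactSupport
      (hasCompactSupport_gradient hφc).smul_left
  have hint' : Integrable (fun x => φ x • gradient f x) μ :=
    (hφ.continuous.smul (continuous_gradient hf)).integrable_of_hasCompactSupport hφc.smul_right
  refine ext_inner_left ℝ fun e => ?_
  rw [inner_neg_right, ← integral_inner hint, ← integral_inner hint']
  have h1 := hint.const_inner (𝕜 := ℝ) e
  have h2 := hint'.const_inner (𝕜 := ℝ) e
  simp only [inner_smul_right, inner_gradient_right, conj_trivial] at h1 h2 ⊢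
  simp only [mul_comm (φ _)] at h2 ⊢
  exact integral_mul_fderiv_eq_neg_fderiv_mul_of_integrable h2 h1
    ((hf.continuous.mul hφ.continuous).integrable_of_hasCompactSupport hφc.mul_left)
    (fun x _ => hf.differentiable one_ne_zero x) (fun x _ => hφ.differentiable one_ne_zero x)

theorem gradient_mollify {u : E → ℝ} (hu : LocallyIntegrable u μ) (k : ℕ) (x : E) :
    gradient (mollify μ k u) x =
      -∫ y, u y • gradient (fun z => (stdBump E k).normed μ (x - z)) y ∂μ := by
  have hκ : ContDiff ℝ 1 ((stdBump E k).normed μ) := (stdBump E k).contDiff_normed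
  have hderiv : fderiv ℝ (mollify μ k u) x =
      ∫ y, u y • fderiv ℝ ((stdBump E k).normed μ) (x - y) ∂μ := by
    refine ((stdBump E k).hasCompactSupport_normed.hasFDerivAt_convolution_left
      (ContinuousLinearMap.lsmul ℝ ℝ) hκ hu x).fderiv.trans ?_
    rw [convolution_eq_swap]
    refine integral_congr_ae (Eventually.of_forall fun y => ?_)
    ext e
    simp [ContinuousLinearMap.precompL_apply, mul_comm]
  rw [gradient, hderiv, ← integral_neg]
  refine ((InnerProductSpace.toDual ℝ
    E).symm.toContinuousLinearEquiv.integral_comp_comm _).symm.trans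
    (integral_congr_ae (Eventually.of_forall fun y => ?_))
  beta_reduce
  rw [gradient_comp_const_sub (hκ.differentiable one_ne_zero _), smul_neg, neg_neg]
  exact map_smul (InnerProductSpace.toDual ℝ E).symm _ _

end Gradient

section IsDistribGradOn

variable {n : ℕ} {E : Set (Euc n)} {u : Euc n → ℝ} {v : Euc n → Euc n}

theorem isDistribGradOn_iff_integral :
    IsDistribGradOn u v E ↔ ∀ φ : Euc n → ℝ, ContDiff ℝ (⊤ : ℕ∞) φ → HasCompactSupport φ →
      tsupport φ ⊆ E → ∫ x, u x • gradient φ x = -∫ x, φ x • v x := by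
  refine forall₄_congr fun φ _ _ hφE => ?_
  rw [setIntegral_eq_integral_of_forall_compl_eq_zero fun x hx => ?_,
    setIntegral_eq_integral_of_forall_compl_eq_zero fun x hx => ?_]
  · rw [image_eq_zero_of_notMem_tsupport fun h => hx (hφE h), zero_smul]
  · rw [gradient_of_notMem_tsupport fun h => hx (hφE h), smul_zero]

theorem isDistribGradOn_of_tendstoL1Loc {uk : ℕ → Euc n → ℝ} {vk : ℕ → Euc n → Euc n}
    (huk : ∀ k, LocallyIntegrable (uk k)) (hvk : ∀ k, LocallyIntegrable (vk k))
    (hum : AEStronglyMeasurable u) (hvm : AEStronglyMeasurable v)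
    (hu : TendstoL1Loc volume uk u) (hv : TendstoL1Loc volume vk v)
    (hgrad : ∀ φ : Euc n → ℝ, ContDiff ℝ (⊤ : ℕ∞) φ → HasCompactSupport φ → tsupport φ ⊆ E →
      ∀ᶠ k in atTop, ∫ x, uk k x • gradient φ x = -∫ x, φ x • vk k x) :
    IsDistribGradOn u v E := by
  refine isDistribGradOn_iff_integral.2 fun φ hφ hφc hφE => ?_
  exact tendsto_nhds_unique_of_eventuallyEq
    (hu.tendsto_integral_smul_right huk hum (continuous_gradient (hφ.of_le (by simp)))
      (hasCompactSupport_gradient hφc))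
    (hv.tendsto_integral_smul_left hvk hvm hφ.continuous hφc).neg (hgrad φ hφ hφc hφE)

namespace IsDistribGradOn

theorem gradient_mollify_eq (h : IsDistribGradOn u v E) (hu : LocallyIntegrable u) {k : ℕ}
    {x : Euc n} (hx : closedBall x (stdBump (Euc n) k).rOut ⊆ E) :
    gradient (mollify volume k u) x = mollify volume k v x := by
  rw [gradient_mollify hu, mollify_apply, neg_eq_iff_eq_neg]
  exact isDistribGradOn_iff_integral.1 h _
    ((stdBump (Euc n) k).contDiff_normed.comp (contDiff_const.sub contDiff_id))
    (hasCompactSupport_stdBump_normed_const_sub volume k x)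
    ((tsupport_stdBump_normed_const_sub volume k x).trans hx)

theorem comp (h : IsDistribGradOn u v E) (hE : IsOpen E) (hu : LocallyIntegrable u)
    (hv : LocallyIntegrable v) {T : ℝ → ℝ} (hT : ContDiff ℝ 1 T) {C : ℝ≥0}
    (hT' : ∀ t, ‖deriv T t‖₊ ≤ C) : IsDistribGradOn (T ∘ u) (fun x => deriv T (u x) • v x) E := by
  have hTd : Differentiable ℝ T := hT.differentiable one_ne_zero
  have hT'c : Continuous (deriv T) := hT.continuous_deriv le_rfl
  have hum (k : ℕ) := contDiff_mollify hu k
  have hvm (k : ℕ) := contDiff_mollify hv k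
  refine isDistribGradOn_of_tendstoL1Loc
    (fun k => (hT.continuous.comp (hum k).continuous).locallyIntegrable)
    (fun k => ((hT'c.comp (hum k).continuous).smul (hvm k).continuous).locallyIntegrable)
    (hT.continuous.comp_aestronglyMeasurable hu.aestronglyMeasurable)
    ((hT'c.comp_aestronglyMeasurable hu.aestronglyMeasurable).smul hv.aestronglyMeasurable)
    ((tendstoL1Loc_mollify hu).lipschitz_comp (lipschitzWith_of_nnnorm_deriv_le hTd hT'))
    ((tendstoL1Loc_mollify hv).smul_of_bounded_of_tendsto_ae hv
      (fun k => (hT'c.comp (hum k).continuous).aestronglyMeasurable)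
      (fun k x => ENNReal.coe_le_coe.2 (hT' _)) ?_) fun φ hφ hφc hφE => ?_
  · filter_upwards [ae_tendsto_mollify hu] with x hx using (hT'c.tendsto _).comp hx
  · obtain ⟨r, hr, hrE⟩ := hφc.isCompact.exists_cthickening_subset_open hE hφE
    filter_upwards [(tendsto_stdBump_rOut (Euc n)).eventually (gt_mem_nhds hr)] with k hk
    rw [integral_smul_gradient_eq_neg (hT.comp ((hum k).of_le (by simp))) (hφ.of_le (by simp)) hφc]
    congr 1
    refine integral_congr_ae (Eventually.of_forall fun x => ?_)
    by_cases hx : x ∈ tsupport φ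
    · have hball : closedBall x (stdBump (Euc n) k).rOut ⊆ E :=
        ((closedBall_subset_closedBall hk.le).trans (closedBall_subset_cthickening hx r)).trans hrE
      have hdiff : DifferentiableAt ℝ (mollify volume k u) x :=
        (hum k).differentiable (by simp) x
      simp only [gradient_comp_eq_deriv_smul (hTd _) hdiff, h.gradient_mollify_eq hu hball]
      rfl
    · simp only [image_eq_zero_of_notMem_tsupport hx, zero_smul]

end IsDistribGradOn

end IsDistribGradOn

/-! ### Ahlfors regular sets and the weight -/

theorem volume_ball_eq_ofReal {n : ℕ} (x : Euc n) {r : ℝ} (hr : 0 < r) :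
    volume (ball x r) = ENNReal.ofReal (r ^ n * volume.real (ball (0 : Euc n) 1)) := by
  rw [Measure.addHaar_ball_of_pos _ _ hr, ENNReal.ofReal_mul (by positivity), Measure.real,
    ENNReal.ofReal_toReal measure_ball_lt_top.ne, finrank_euclideanSpace, Fintype.card_fin]

theorem volume_real_ball_pos {n : ℕ} (x : Euc n) {r : ℝ} (hr : 0 < r) :
    0 < volume.real (ball x r) :=
  ENNReal.toReal_pos (measure_ball_pos _ _ hr).ne' measure_ball_lt_top.ne

/-- `Γ` is nonempty, closed and `d`-homogeneous in the sense of Assouad, the latter expressed by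
the volume of its tubular neighbourhoods at all scales. -/
structure IsAssouadHomogeneous {n : ℕ} (d : ℝ) (Γ : Set (Euc n)) : Prop where
  nonempty : Γ.Nonempty
  isClosed : IsClosed Γ
  exists_volume_tube_le : ∃ S : ℝ, 0 < S ∧ ∀ γ ∈ Γ, ∀ R s : ℝ, 0 < s → s ≤ R →
    volume (ball γ R ∩ thickening s Γ) ≤ ENNReal.ofReal (S * R ^ d * s ^ ((n : ℝ) - d))

namespace AhlforsRegular

variable {n : ℕ} {d C₀ : ℝ} {Γ : Set (Euc n)}

theorem card_le_of_pairwiseDisjoint_ball (hreg : AhlforsRegular n d C₀ Γ) (hC₀ : 0 < C₀)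
    (hcl : IsClosed Γ) {γ : Euc n} (hγ : γ ∈ Γ) {R s : ℝ} (hs : 0 < s) (hsR : s ≤ R)
    {F : Finset (Euc n)} (hF : (F : Set (Euc n)) ⊆ Γ ∩ ball γ (2 * R))
    (hdisj : (F : Set (Euc n)).PairwiseDisjoint (ball · s)) :
    (F.card : ℝ) ≤ C₀ ^ 2 * 3 ^ d * (R ^ d / s ^ d) := by
  have hR : 0 < R := hs.trans_le hsR
  have hsub : ⋃ q ∈ F, Γ ∩ ball q s ⊆ Γ ∩ ball γ (3 * R) := by
    refine iUnion₂_subset fun q hq => inter_subset_inter_right Γ (ball_subset_ball' ?_)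
    linarith [mem_ball.1 (hF hq).2]
  have hmass : (F.card : ℝ≥0∞) * ENNReal.ofReal (C₀⁻¹ * s ^ d) ≤
      ENNReal.ofReal (C₀ * (3 * R) ^ d) := by
    calc (F.card : ℝ≥0∞) * ENNReal.ofReal (C₀⁻¹ * s ^ d)
        = ∑ _q ∈ F, ENNReal.ofReal (C₀⁻¹ * s ^ d) := by rw [Finset.sum_const, nsmul_eq_mul]
      _ ≤ ∑ q ∈ F, μH[d] (Γ ∩ ball q s) :=
          Finset.sum_le_sum fun q hq => (hreg q (hF hq).1 s hs).1
      _ = μH[d] (⋃ q ∈ F, Γ ∩ ball q s) :=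
          (measure_biUnion_finset (hdisj.mono fun _ => inter_subset_right)
            fun q _ => hcl.measurableSet.inter measurableSet_ball).symm
      _ ≤ μH[d] (Γ ∩ ball γ (3 * R)) := measure_mono hsub
      _ ≤ ENNReal.ofReal (C₀ * (3 * R) ^ d) := (hreg γ hγ (3 * R) (by positivity)).2
  rw [← ENNReal.ofReal_natCast, ← ENNReal.ofReal_mul (by positivity),
    ENNReal.ofReal_le_ofReal_iff (by positivity), Real.mul_rpow (by norm_num) hR.le] at hmass
  rw [← mul_div_assoc, le_div_iff₀ (by positivity)]
  calc (F.card : ℝ) * s ^ d = C₀ * (F.card * (C₀⁻¹ * s ^ d)) := by field_simp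
    _ ≤ C₀ * (C₀ * (3 ^ d * R ^ d)) := by gcongr
    _ = C₀ ^ 2 * 3 ^ d * R ^ d := by ring

theorem exists_finset_card_le_tube_subset (hreg : AhlforsRegular n d C₀ Γ) (hC₀ : 0 < C₀)
    (hcl : IsClosed Γ) {γ : Euc n} (hγ : γ ∈ Γ) {R s : ℝ} (hs : 0 < s) (hsR : s ≤ R) :
    ∃ F : Finset (Euc n), (F.card : ℝ) ≤ C₀ ^ 2 * 3 ^ d * (R ^ d / s ^ d) ∧
      ball γ R ∩ thickening s Γ ⊆ ⋃ q ∈ F, closedBall q (5 * s) := by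
  obtain ⟨t, htΓ, hdisj, hcover⟩ :=
    Vitali.exists_disjoint_subfamily_covering_enlargement_closedBall
      (Γ ∩ ball γ (2 * R)) (fun x => x) (fun _ => s) s (fun _ _ => le_rfl) 5 (by norm_num)
  have hcard (F : Finset (Euc n)) (hF : (F : Set (Euc n)) ⊆ t) :
      (F.card : ℝ) ≤ C₀ ^ 2 * 3 ^ d * (R ^ d / s ^ d) :=
    hreg.card_le_of_pairwiseDisjoint_ball hC₀ hcl hγ hs hsR (hF.trans htΓ)
      ((hdisj.subset hF).mono fun _ => ball_subset_closedBall)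
  have hfin : t.Finite := by
    by_contra hinf
    obtain ⟨N, hN⟩ := exists_nat_gt (C₀ ^ 2 * 3 ^ d * (R ^ d / s ^ d))
    obtain ⟨F, hF, rfl⟩ := Set.Infinite.exists_subset_card_eq hinf N
    exact (hcard F hF).not_gt hN
  refine ⟨hfin.toFinset, hcard _ (by simp), fun x ⟨hxγ, hxΓ⟩ => ?_⟩
  obtain ⟨p, hp, hxp⟩ := mem_thickening_iff.1 hxΓ
  have hpγ : p ∈ ball γ (2 * R) := by
    rw [mem_ball] at hxγ ⊢
    linarith [dist_triangle_left p γ x]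
  obtain ⟨q, hq, hsub⟩ := hcover p ⟨hp, hpγ⟩
  exact mem_iUnion₂.2 ⟨q, hfin.mem_toFinset.2 hq, hsub (mem_closedBall.2 hxp.le)⟩

theorem isAssouadHomogeneous (hreg : AhlforsRegular n d C₀ Γ) (hC₀ : 0 < C₀) (hne : Γ.Nonempty)
    (hcl : IsClosed Γ) : IsAssouadHomogeneous d Γ := by
  have hκ := volume_real_ball_pos (0 : Euc n) one_pos
  set κ := volume.real (ball (0 : Euc n) 1)
  refine ⟨hne, hcl, C₀ ^ 2 * 3 ^ d * (5 ^ n * κ), by positivity, fun γ hγ R s hs hsR => ?_⟩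
  obtain ⟨F, hcard, hcover⟩ := hreg.exists_finset_card_le_tube_subset hC₀ hcl hγ hs hsR
  calc volume (ball γ R ∩ thickening s Γ)
      ≤ ∑ q ∈ F, volume (closedBall q (5 * s)) :=
        (measure_mono hcover).trans (measure_biUnion_finset_le _ _)
    _ = ∑ _q ∈ F, ENNReal.ofReal ((5 * s) ^ n * κ) := by
        refine Finset.sum_congr rfl fun q _ => ?_
        rw [Measure.addHaar_closedBall _ q (by positivity),
          ← volume_ball_eq_ofReal q (by positivity),
          Measure.addHaar_ball_of_pos _ q (by positivity)]
    _ = ENNReal.ofReal (F.card * ((5 * s) ^ n * κ)) := by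
        rw [Finset.sum_const, nsmul_eq_mul, ENNReal.ofReal_mul (Nat.cast_nonneg _),
          ENNReal.ofReal_natCast]
    _ ≤ ENNReal.ofReal (C₀ ^ 2 * 3 ^ d * (R ^ d / s ^ d) * ((5 * s) ^ n * κ)) := by gcongr
    _ = ENNReal.ofReal (C₀ ^ 2 * 3 ^ d * (5 ^ n * κ) * R ^ d * s ^ ((n : ℝ) - d)) := by
        rw [Real.rpow_sub hs, Real.rpow_natCast, mul_pow]
        ring_nf

end AhlforsRegular

section Weight

variable {n : ℕ} {d : ℝ} {Γ : Set (Euc n)}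

theorem measurable_weightW : Measurable (weightW n d Γ) :=
  measurable_infDist.pow_const _

theorem weightW_eq_zero_of_infDist_eq_zero (hdn : d < (n : ℝ) - 1) {x : Euc n}
    (hx : infDist x Γ = 0) : weightW n d Γ x = 0 := by
  rw [weightW, hx, Real.zero_rpow (by linarith)]

theorem weightW_le_of_le_infDist (hdn : d < (n : ℝ) - 1) {x : Euc n} {r : ℝ} (hr : 0 < r)
    (hx : r ≤ infDist x Γ) : weightW n d Γ x ≤ r ^ (d + 1 - (n : ℝ)) :=
  Real.rpow_le_rpow_of_nonpos hr hx (by linarith)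

theorem le_weightW_of_infDist_le (hdn : d < (n : ℝ) - 1) {x : Euc n} {r : ℝ}
    (hx₀ : 0 < infDist x Γ) (hx : infDist x Γ ≤ r) : r ^ (d + 1 - (n : ℝ)) ≤ weightW n d Γ x :=
  Real.rpow_le_rpow_of_nonpos hx₀ hx (by linarith)

theorem ofReal_weightW_le_tsum_indicator_thickening (hdn : d < (n : ℝ) - 1) {x : Euc n} {ρ : ℝ}
    (hρ : 0 < ρ) (hne : Γ.Nonempty) (hx : infDist x Γ ≤ ρ) :
    ENNReal.ofReal (weightW n d Γ x) ≤ ∑' k : ℕ, (thickening (2 * ((1 / 2) ^ k * ρ)) Γ).indicator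
      (fun _ => ENNReal.ofReal (((1 / 2) ^ k * ρ / 2) ^ (d + 1 - (n : ℝ)))) x := by
  rcases (infDist_nonneg (x := x) (s := Γ)).eq_or_lt with h0 | hpos
  · rw [weightW_eq_zero_of_infDist_eq_zero hdn h0.symm, ENNReal.ofReal_zero]
    exact zero_le
  obtain ⟨k, hk_lt, hk_le⟩ := exists_nat_pow_near_of_lt_one (x := infDist x Γ / ρ) (y := 1 / 2)
    (by positivity) ((div_le_one hρ).2 hx) (by norm_num) (by norm_num)
  have hlow : (1 / 2) ^ k * ρ / 2 ≤ infDist x Γ := by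
    rw [lt_div_iff₀ hρ, pow_succ] at hk_lt
    linarith
  have hmem : x ∈ thickening (2 * ((1 / 2) ^ k * ρ)) Γ := by
    rw [div_le_iff₀ hρ] at hk_le
    have : 0 < (1 / 2 : ℝ) ^ k * ρ := by positivity
    obtain ⟨p, hp, hxp⟩ := (infDist_lt_iff hne).1
      (show infDist x Γ < 2 * ((1 / 2) ^ k * ρ) by linarith)
    exact mem_thickening_iff.2 ⟨p, hp, hxp⟩
  refine le_trans ?_ (ENNReal.le_tsum k)
  rw [indicator_of_mem hmem]
  exact ENNReal.ofReal_le_ofReal (weightW_le_of_le_infDist hdn (by positivity) hlow)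

end Weight

namespace IsAssouadHomogeneous

variable {n : ℕ} {d : ℝ} {Γ : Set (Euc n)}

theorem volume_eq_zero (hΓ : IsAssouadHomogeneous d Γ) (hdn : d < n) : volume Γ = 0 := by
  obtain ⟨S, -, htube⟩ := hΓ.exists_volume_tube_le
  obtain ⟨γ, hγ⟩ := hΓ.nonempty
  have hnull (N : ℕ) : volume (Γ ∩ ball γ (N + 1)) = 0 := by
    have hlim : Tendsto (fun s : ℝ => ENNReal.ofReal (S * (N + 1) ^ d * s ^ ((n : ℝ) - d)))
        (𝓝[>] 0) (𝓝 0) := by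
      have hpow := ((Real.continuousAt_rpow_const 0 ((n : ℝ) - d)
        (Or.inr (by linarith))).tendsto.const_mul (S * (N + 1) ^ d)).mono_left
        (nhdsWithin_le_nhds (s := Ioi 0))
      simpa [Real.zero_rpow (sub_pos.2 hdn).ne'] using ENNReal.tendsto_ofReal hpow
    refine le_antisymm (ge_of_tendsto hlim ?_) zero_le
    have hle : ∀ᶠ s : ℝ in 𝓝[>] 0, s ≤ N + 1 :=
      (ge_mem_nhds (by positivity)).filter_mono nhdsWithin_le_nhds
    filter_upwards [self_mem_nhdsWithin, hle] with s hs hsN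
    have hsub : Γ ∩ ball γ (N + 1) ⊆ ball γ (N + 1) ∩ thickening s Γ := fun x hx =>
      ⟨hx.2, self_subset_thickening hs Γ hx.1⟩
    exact (measure_mono hsub).trans (htube γ hγ _ s hs hsN)
  refine measure_mono_null (fun x hx => ?_) (measure_iUnion_null hnull)
  obtain ⟨N, hN⟩ := exists_nat_gt (dist x γ)
  exact mem_iUnion.2 ⟨N, hx, mem_ball.2 (by linarith)⟩

theorem exists_rpow_mul_volume_tube_le (hΓ : IsAssouadHomogeneous d Γ) :
    ∃ c : ℝ, 0 < c ∧ ∀ γ ∈ Γ, ∀ r ρ : ℝ, 0 < r → r ≤ ρ →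
      ENNReal.ofReal ((r / 2) ^ (d + 1 - (n : ℝ))) * volume (ball γ ρ ∩ thickening (2 * r) Γ) ≤
        ENNReal.ofReal (c * ρ ^ d * r) := by
  obtain ⟨S, hS, htube⟩ := hΓ.exists_volume_tube_le
  set b : ℝ := d + 1 - n
  refine ⟨S * 2 ^ d * (2 ^ (1 - b) / 2 ^ b), by positivity, fun γ hγ r ρ hr hrρ => ?_⟩
  have hρ : 0 < ρ := hr.trans_le hrρ
  calc ENNReal.ofReal ((r / 2) ^ b) * volume (ball γ ρ ∩ thickening (2 * r) Γ)
      ≤ ENNReal.ofReal ((r / 2) ^ b) *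
          ENNReal.ofReal (S * (2 * ρ) ^ d * (2 * r) ^ ((n : ℝ) - d)) := by
        gcongr
        exact (measure_mono (inter_subset_inter_left _ (ball_subset_ball (by linarith)))).trans
          (htube γ hγ (2 * ρ) (2 * r) (by positivity) (by linarith))
    _ = ENNReal.ofReal (S * 2 ^ d * (2 ^ (1 - b) / 2 ^ b) * ρ ^ d * r) := by
        rw [← ENNReal.ofReal_mul (by positivity), Real.div_rpow hr.le zero_le_two,
          Real.mul_rpow zero_le_two hρ.le, Real.mul_rpow zero_le_two hr.le,
          show (n : ℝ) - d = 1 - b by ring, Real.rpow_sub hr 1 b, Real.rpow_one]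
        congr 1
        have : r ^ b ≠ 0 := by positivity
        field_simp

theorem exists_measW_ball_le (hΓ : IsAssouadHomogeneous d Γ) (hdn : d < (n : ℝ) - 1) :
    ∃ S : ℝ, 0 < S ∧ ∀ γ ∈ Γ, ∀ ρ : ℝ, 0 < ρ →
      measW n d Γ (ball γ ρ) ≤ ENNReal.ofReal (S * ρ ^ (d + 1)) := by
  obtain ⟨c, hc, hscale⟩ := hΓ.exists_rpow_mul_volume_tube_le
  set b : ℝ := d + 1 - n
  refine ⟨c * 2, by positivity, fun γ hγ ρ hρ => ?_⟩
  have hscale_pos (k : ℕ) : 0 < (1 / 2 : ℝ) ^ k * ρ := by positivity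
  calc measW n d Γ (ball γ ρ) = ∫⁻ x in ball γ ρ, ENNReal.ofReal (weightW n d Γ x) :=
        withDensity_apply _ measurableSet_ball
    _ ≤ ∫⁻ x in ball γ ρ, ∑' k : ℕ, (thickening (2 * ((1 / 2) ^ k * ρ)) Γ).indicator
          (fun _ => ENNReal.ofReal (((1 / 2) ^ k * ρ / 2) ^ b)) x :=
        setLIntegral_mono' measurableSet_ball fun x hx =>
          ofReal_weightW_le_tsum_indicator_thickening hdn hρ hΓ.nonempty
            ((infDist_le_dist_of_mem hγ).trans (mem_ball.1 hx).le)
    _ = ∑' k : ℕ, ENNReal.ofReal (((1 / 2) ^ k * ρ / 2) ^ b) *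
          volume (ball γ ρ ∩ thickening (2 * ((1 / 2) ^ k * ρ)) Γ) := by
        rw [lintegral_tsum fun k =>
          (measurable_const.indicator isOpen_thickening.measurableSet).aemeasurable]
        congr 1 with k
        rw [lintegral_indicator_const isOpen_thickening.measurableSet,
          Measure.restrict_apply isOpen_thickening.measurableSet, inter_comm]
    _ ≤ ∑' k : ℕ, ENNReal.ofReal (c * ρ ^ d * ((1 / 2) ^ k * ρ)) :=
        ENNReal.tsum_le_tsum fun k => hscale γ hγ _ ρ (hscale_pos k)
          (mul_le_of_le_one_left hρ.le (pow_le_one₀ (by norm_num) (by norm_num)))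
    _ = ENNReal.ofReal (c * 2 * ρ ^ (d + 1)) := by
        have hsum : HasSum (fun k : ℕ => c * ρ ^ d * ((1 / 2) ^ k * ρ)) (c * ρ ^ d * (2 * ρ)) :=
          (hasSum_geometric_two.mul_right ρ).mul_left _
        rw [← ENNReal.ofReal_tsum_of_nonneg (fun k => by positivity) hsum.summable, hsum.tsum_eq,
          Real.rpow_add_one hρ.ne']
        ring_nf

theorem isLocallyFiniteMeasure_measW (hΓ : IsAssouadHomogeneous d Γ) (hdn : d < (n : ℝ) - 1) :
    IsLocallyFiniteMeasure (measW n d Γ) := by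
  obtain ⟨S, -, hball⟩ := hΓ.exists_measW_ball_le hdn
  obtain ⟨γ, hγ⟩ := hΓ.nonempty
  exact ⟨fun x => ⟨ball γ (dist x γ + 1), isOpen_ball.mem_nhds (mem_ball.2 (lt_add_one _)),
    (hball γ hγ _ (by positivity)).trans_lt ENNReal.ofReal_lt_top⟩⟩

theorem ae_infDist_pos (hΓ : IsAssouadHomogeneous d Γ) (hdn : d < (n : ℝ) - 1) :
    ∀ᵐ x : Euc n, 0 < infDist x Γ := by
  filter_upwards [measure_eq_zero_iff_ae_notMem.1 (hΓ.volume_eq_zero (by linarith))] with x hx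
  exact (hΓ.isClosed.notMem_iff_infDist_pos hΓ.nonempty).1 hx

end IsAssouadHomogeneous

section Weight

variable {n : ℕ} {d : ℝ} {Γ : Set (Euc n)}

theorem weightW_le_mul_of_dist_le (hdn : d < (n : ℝ) - 1) {x z : Euc n} (hz : 0 < infDist z Γ)
    (hx : dist z x ≤ infDist z Γ / 2) :
    weightW n d Γ x ≤ 2 ^ ((n : ℝ) - d - 1) * weightW n d Γ z := by
  have hhalf : infDist z Γ / 2 ≤ infDist x Γ := by
    linarith [infDist_le_infDist_add_dist (s := Γ) (x := z) (y := x)]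
  refine (weightW_le_of_le_infDist hdn (half_pos hz) hhalf).trans_eq ?_
  rw [weightW, Real.div_rpow hz.le zero_le_two, show (n : ℝ) - d - 1 = -(d + 1 - n) by ring,
    Real.rpow_neg zero_le_two, div_eq_inv_mul]

end Weight

namespace IsAssouadHomogeneous

variable {n : ℕ} {d : ℝ} {Γ : Set (Euc n)}

theorem exists_isA1Weight (hΓ : IsAssouadHomogeneous d Γ) (hdn : d < (n : ℝ) - 1) :
    ∃ A : ℝ≥0∞, A ≠ ∞ ∧
      IsA1Weight volume (fun x => ENNReal.ofReal (weightW n d Γ x)) A := by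
  obtain ⟨S, hS, hball⟩ := hΓ.exists_measW_ball_le hdn
  have hκ := volume_real_ball_pos (0 : Euc n) one_pos
  set κ := volume.real (ball (0 : Euc n) 1)
  refine ⟨ENNReal.ofReal (2 ^ ((n : ℝ) - d - 1) + S * 3 ^ n / κ), ENNReal.ofReal_ne_top,
    measurable_weightW.ennreal_ofReal, ?_⟩
  filter_upwards [hΓ.ae_infDist_pos hdn] with z hz r hr
  rw [ENNReal.ofReal_add (by positivity) (by positivity), add_mul, add_mul]
  rcases le_or_gt r (infDist z Γ / 2) with hnear | hfar
  · refine le_add_right ?_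
    calc ∫⁻ x in ball z r, ENNReal.ofReal (weightW n d Γ x)
        ≤ ∫⁻ _ in ball z r, ENNReal.ofReal (2 ^ ((n : ℝ) - d - 1) * weightW n d Γ z) :=
          setLIntegral_mono' measurableSet_ball fun x hx => ENNReal.ofReal_le_ofReal
            (weightW_le_mul_of_dist_le hdn hz ((mem_ball'.1 hx).le.trans hnear))
      _ = _ := by
          rw [setLIntegral_const, ENNReal.ofReal_mul (by positivity), mul_right_comm]
  · refine le_add_left ?_
    obtain ⟨γ, hγ, hzγ⟩ := hΓ.isClosed.exists_infDist_eq_dist hΓ.nonempty z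
    calc ∫⁻ x in ball z r, ENNReal.ofReal (weightW n d Γ x)
        ≤ ∫⁻ x in ball γ (3 * r), ENNReal.ofReal (weightW n d Γ x) :=
          lintegral_mono_set (ball_subset_ball' (by linarith))
      _ = measW n d Γ (ball γ (3 * r)) := (withDensity_apply _ measurableSet_ball).symm
      _ ≤ ENNReal.ofReal (S * (3 * r) ^ (d + 1)) := hball γ hγ _ (by positivity)
      _ ≤ ENNReal.ofReal (S * 3 ^ n / κ * (r ^ n * κ) * weightW n d Γ z) := by
          refine ENNReal.ofReal_le_ofReal ?_
          calc S * (3 * r) ^ (d + 1) = S * ((3 * r) ^ n * (3 * r) ^ (d + 1 - n)) := by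
                rw [← Real.rpow_natCast, ← Real.rpow_add (by positivity), add_sub_cancel]
            _ ≤ S * ((3 * r) ^ n * weightW n d Γ z) := by
                gcongr
                exact le_weightW_of_infDist_le hdn hz (by linarith)
            _ = S * 3 ^ n / κ * (r ^ n * κ) * weightW n d Γ z := by
                rw [mul_pow]
                field_simp
      _ = _ := by
          rw [volume_ball_eq_ofReal z hr, ENNReal.ofReal_mul (by positivity),
            ENNReal.ofReal_mul (by positivity)]

end IsAssouadHomogeneous

/-! ### Removability of the singular set -/

section DistCutoff

variable {n : ℕ}

theorem exists_abs_deriv_smoothTransition_le :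
    ∃ B : ℝ, 0 < B ∧ ∀ t, |deriv Real.smoothTransition t| ≤ B := by
  have hsmooth : ContDiff ℝ 1 Real.smoothTransition := Real.smoothTransition.contDiff
  have hcont : Continuous (deriv Real.smoothTransition) := hsmooth.continuous_deriv le_rfl
  obtain ⟨B, hB⟩ :=
    (isCompact_Icc (a := (0 : ℝ)) (b := 1)).exists_bound_of_continuousOn hcont.continuousOn
  refine ⟨|B| + 1, by positivity, fun t => ?_⟩
  by_cases ht : t ∈ Icc (0 : ℝ) 1
  · exact (hB t ht).trans (by linarith [le_abs_self B])
  have hzero : deriv Real.smoothTransition t = 0 := by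
    rw [mem_Icc, not_and_or, not_le, not_le] at ht
    rcases ht with ht | ht
    · refine EventuallyEq.deriv_eq (f := fun _ => (0 : ℝ)) ?_ |>.trans (deriv_const t 0)
      filter_upwards [gt_mem_nhds ht] with s hs using Real.smoothTransition.zero_of_nonpos hs.le
    · refine EventuallyEq.deriv_eq (f := fun _ => (1 : ℝ)) ?_ |>.trans (deriv_const t 1)
      filter_upwards [lt_mem_nhds ht] with s hs using Real.smoothTransition.one_of_one_le hs.le
  rw [hzero, abs_zero]
  positivity

theorem lipschitzWith_mollify {f : Euc n → ℝ} {C : ℝ≥0} (hf : LipschitzWith C f) (k : ℕ) :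
    LipschitzWith C (mollify volume k f) := by
  set κ := (stdBump (Euc n) k).normed volume
  have hκc : HasCompactSupport κ := (stdBump (Euc n) k).hasCompactSupport_normed
  have hκ : Continuous κ := (stdBump (Euc n) k).continuous_normed
  have hint (x : Euc n) : Integrable (fun t => κ t • f (x - t)) :=
    (hκ.smul (hf.continuous.comp (by fun_prop))).integrable_of_hasCompactSupport hκc.smul_right
  refine LipschitzWith.of_dist_le_mul fun x y => ?_
  have happly (x : Euc n) : mollify volume k f x = ∫ t, κ t • f (x - t) := rfl
  rw [dist_eq_norm, happly, happly, ← integral_sub (hint x) (hint y)]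
  calc ‖∫ t, (κ t • f (x - t) - κ t • f (y - t))‖ ≤ ∫ t, κ t * (C * dist x y) := by
        refine norm_integral_le_of_norm_le ((hκ.integrable_of_hasCompactSupport hκc).mul_const _)
          (Eventually.of_forall fun t => ?_)
        have hκt : 0 ≤ κ t := (stdBump (Euc n) k).nonneg_normed t
        rw [← smul_sub, norm_smul, Real.norm_of_nonneg hκt, ← dist_eq_norm]
        gcongr
        simpa using hf.dist_le_mul (x - t) (y - t)
    _ = C * dist x y := by
        rw [integral_mul_const, (stdBump (Euc n) k).integral_normed, one_mul]

/-- A smooth cutoff that vanishes where `dist(x, Γ) ≤ 1 / (k + 1)` and equals `1` where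
`dist(x, Γ) ≥ 4 / (k + 1)`. The distance is mollified to make it smooth. -/
def distCutoff (Γ : Set (Euc n)) (k : ℕ) (x : Euc n) : ℝ :=
  Real.smoothTransition (mollify volume k (infDist · Γ) x * (k + 1) - 2)

variable (Γ : Set (Euc n)) (k : ℕ)

theorem locallyIntegrable_infDist : LocallyIntegrable fun x => infDist x Γ :=
  (continuous_infDist_pt Γ).locallyIntegrable

theorem contDiff_distCutoff : ContDiff ℝ (⊤ : ℕ∞) (distCutoff Γ k) :=
  Real.smoothTransition.contDiff.comp
    (((contDiff_mollify (locallyIntegrable_infDist Γ) k).mul contDiff_const).sub contDiff_const)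

theorem enorm_distCutoff_le_one (x : Euc n) : ‖distCutoff Γ k x‖ₑ ≤ 1 := by
  rw [distCutoff, Real.enorm_of_nonneg (Real.smoothTransition.nonneg _)]
  exact ENNReal.ofReal_le_one.2 (Real.smoothTransition.le_one _)

theorem abs_mollify_infDist_sub_le (x : Euc n) :
    |mollify volume k (infDist · Γ) x - infDist x Γ| ≤ 1 / ((k : ℝ) + 1) := by
  refine ContDiffBump.dist_normed_convolution_le (φ := stdBump (Euc n) k) (g := (infDist · Γ))
    (continuous_infDist_pt Γ).aestronglyMeasurable fun y hy => ?_
  have hle := (lipschitz_infDist_pt Γ).dist_le_mul y x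
  rw [NNReal.coe_one, one_mul] at hle
  exact hle.trans (mem_ball.1 hy).le

variable {Γ k}

theorem distCutoff_eq_zero {x : Euc n} (hx : infDist x Γ ≤ 1 / ((k : ℝ) + 1)) :
    distCutoff Γ k x = 0 := by
  refine Real.smoothTransition.zero_of_nonpos (sub_nonpos.2 ?_)
  rw [← le_div_iff₀ (by positivity)]
  calc mollify volume k (infDist · Γ) x ≤ infDist x Γ + 1 / ((k : ℝ) + 1) := by
        linarith [(abs_le.1 (abs_mollify_infDist_sub_le Γ k x)).2]
    _ ≤ 1 / ((k : ℝ) + 1) + 1 / ((k : ℝ) + 1) := by gcongr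
    _ = 2 / ((k : ℝ) + 1) := by ring

theorem distCutoff_eq_one {x : Euc n} (hx : 4 / ((k : ℝ) + 1) ≤ infDist x Γ) :
    distCutoff Γ k x = 1 := by
  refine Real.smoothTransition.one_of_one_le (le_sub_iff_add_le.2 ?_)
  rw [← div_le_iff₀ (by positivity)]
  calc (1 + 2) / ((k : ℝ) + 1) = 4 / ((k : ℝ) + 1) - 1 / ((k : ℝ) + 1) := by ring
    _ ≤ infDist x Γ - 1 / ((k : ℝ) + 1) := by gcongr
    _ ≤ mollify volume k (infDist · Γ) x := by
        linarith [(abs_le.1 (abs_mollify_infDist_sub_le Γ k x)).1]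

theorem tsupport_distCutoff_subset : tsupport (distCutoff Γ k) ⊆ Γᶜ := by
  have hsub : tsupport (distCutoff Γ k) ⊆ {x | 1 / ((k : ℝ) + 1) ≤ infDist x Γ} :=
    closure_minimal (fun x hx => (not_le.1 fun h => hx (distCutoff_eq_zero h)).le)
      (isClosed_le continuous_const (continuous_infDist_pt Γ))
  intro x hx hxΓ
  have hle : 1 / ((k : ℝ) + 1) ≤ infDist x Γ := hsub hx
  rw [infDist_zero_of_mem hxΓ] at hle
  exact hle.not_gt (by positivity)

theorem gradient_distCutoff_eq_zero {x : Euc n} (hx : 4 / ((k : ℝ) + 1) < infDist x Γ) :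
    gradient (distCutoff Γ k) x = 0 := by
  have heq : distCutoff Γ k =ᶠ[𝓝 x] fun _ => 1 := by
    filter_upwards [(continuous_infDist_pt Γ).tendsto x (lt_mem_nhds hx)] with y hy
    exact distCutoff_eq_one (le_of_lt hy)
  rw [gradient, heq.fderiv_eq, fderiv_const_apply, map_zero]

theorem exists_enorm_gradient_distCutoff_le (Γ : Set (Euc n)) :
    ∃ B : ℝ, 0 < B ∧ ∀ k x, ‖gradient (distCutoff Γ k) x‖ₑ ≤ ENNReal.ofReal (B * (k + 1)) := by
  obtain ⟨B, hB, hderiv⟩ := exists_abs_deriv_smoothTransition_le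
  refine ⟨B, hB, fun k x => ?_⟩
  set g := mollify volume k (infDist · Γ)
  have hg : DifferentiableAt ℝ g x :=
    (contDiff_mollify (locallyIntegrable_infDist Γ) k).differentiable (by simp) x
  have hlin : HasFDerivAt (fun y => g y * (k + 1) - 2) (((k : ℝ) + 1) • fderiv ℝ g x) x :=
    (hg.hasFDerivAt.mul_const _).sub_const _
  have hst : DifferentiableAt ℝ Real.smoothTransition (g x * (k + 1) - 2) :=
    (Real.smoothTransition.contDiff (n := 1)).differentiable one_ne_zero _
  have hcomp : fderiv ℝ (distCutoff Γ k) x = _ :=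
    (hst.hasDerivAt.comp_hasFDerivAt x hlin).fderiv
  have hlip : ‖fderiv ℝ g x‖ ≤ 1 := by
    simpa using norm_fderiv_le_of_lipschitz ℝ (lipschitzWith_mollify (lipschitz_infDist_pt Γ) k)
  rw [enorm_gradient, hcomp, ← ofReal_norm, norm_smul, norm_smul,
    Real.norm_of_nonneg (by positivity : (0 : ℝ) ≤ k + 1)]
  refine ENNReal.ofReal_le_ofReal (mul_le_mul (hderiv _) ?_ (by positivity) hB.le)
  exact mul_le_of_le_one_right (by positivity) hlip

theorem tendsto_distCutoff {x : Euc n} (hx : 0 < infDist x Γ) :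
    Tendsto (fun k => distCutoff Γ k x) atTop (𝓝 1) := by
  have hlim : Tendsto (fun k : ℕ => 4 * (1 / ((k : ℝ) + 1))) atTop (𝓝 0) := by
    simpa using tendsto_one_div_add_atTop_nhds_zero_nat.const_mul (4 : ℝ)
  refine tendsto_const_nhds.congr' ?_
  filter_upwards [hlim.eventually (gt_mem_nhds hx)] with k hk
  rw [mul_one_div] at hk
  exact (distCutoff_eq_one hk.le).symm

end DistCutoff

section ArctanTrunc

/-- The truncation `t ↦ m arctan (t / m)` with `m = k + 1`: a bounded, `1`-Lipschitz function which
converges to the identity, together with its derivative, as `k → ∞`. -/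
def arctanTrunc (k : ℕ) (t : ℝ) : ℝ := (k + 1) * Real.arctan (t / (k + 1))

variable (k : ℕ) (t : ℝ)

theorem contDiff_arctanTrunc : ContDiff ℝ 1 (arctanTrunc k) :=
  contDiff_const.mul (Real.contDiff_arctan.comp (contDiff_id.div_const _))

theorem deriv_arctanTrunc : deriv (arctanTrunc k) t = 1 / (1 + (t / (k + 1)) ^ 2) := by
  have hderiv := (((hasDerivAt_id t).div_const ((k : ℝ) + 1)).arctan).const_mul ((k : ℝ) + 1)
  have hk : (k : ℝ) + 1 ≠ 0 := by positivity
  refine (hderiv.congr_deriv ?_).deriv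
  simp only [id]
  field_simp

theorem nnnorm_deriv_arctanTrunc_le : ‖deriv (arctanTrunc k) t‖₊ ≤ 1 := by
  rw [← NNReal.coe_le_coe, coe_nnnorm, deriv_arctanTrunc, Real.norm_of_nonneg (by positivity),
    NNReal.coe_one]
  exact div_le_one_of_le₀ (le_add_of_nonneg_right (by positivity)) (by positivity)

theorem abs_arctanTrunc_le : |arctanTrunc k t| ≤ (k + 1) * (Real.pi / 2) := by
  rw [arctanTrunc, abs_mul, abs_of_nonneg (by positivity : (0 : ℝ) ≤ k + 1)]
  gcongr
  exact abs_le.2 ⟨(Real.neg_pi_div_two_lt_arctan _).le, (Real.arctan_lt_pi_div_two _).le⟩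

theorem abs_arctanTrunc_le_abs : |arctanTrunc k t| ≤ |t| := by
  have hlip := (lipschitzWith_of_nnnorm_deriv_le
    ((contDiff_arctanTrunc k).differentiable one_ne_zero)
    (nnnorm_deriv_arctanTrunc_le k)).dist_le_mul t 0
  simpa [arctanTrunc] using hlip

theorem tendsto_div_natCast_add_one : Tendsto (fun k : ℕ => t / ((k : ℝ) + 1)) atTop (𝓝 0) := by
  simpa [div_eq_mul_inv] using tendsto_one_div_add_atTop_nhds_zero_nat.const_mul t

theorem tendsto_deriv_arctanTrunc : Tendsto (fun k => deriv (arctanTrunc k) t) atTop (𝓝 1) := by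
  simp only [deriv_arctanTrunc, one_div]
  simpa using (((tendsto_div_natCast_add_one t).pow 2).const_add 1).inv₀ (by simp)

theorem tendsto_arctanTrunc : Tendsto (fun k => arctanTrunc k t) atTop (𝓝 t) := by
  rcases eq_or_ne t 0 with rfl | ht
  · simp [arctanTrunc]
  have hne : Tendsto (fun k : ℕ => t / ((k : ℝ) + 1)) atTop (𝓝[≠] 0) :=
    tendsto_nhdsWithin_iff.2 ⟨tendsto_div_natCast_add_one t,
      Eventually.of_forall fun k => div_ne_zero ht (by positivity)⟩
  have hslope : Tendsto (fun k : ℕ => t * ((t / ((k : ℝ) + 1))⁻¹ • Real.arctan (t / (k + 1))))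
      atTop (𝓝 t) := by
    simpa [Function.comp_def] using
      (((Real.hasDerivAt_arctan 0).tendsto_slope_zero.comp hne).const_mul t)
  refine hslope.congr fun k => ?_
  rw [smul_eq_mul, inv_div, ← mul_assoc, mul_div_cancel₀ _ ht, arctanTrunc]

end ArctanTrunc

section Removability

variable {n : ℕ} {d : ℝ} {Γ E : Set (Euc n)} {u : Euc n → ℝ} {v : Euc n → Euc n}

theorem IsDistribGradOn.mul_smooth (h : IsDistribGradOn u v E) (hu : LocallyIntegrable u)
    (hv : LocallyIntegrable v) {χ : Euc n → ℝ} (hχ : ContDiff ℝ (⊤ : ℕ∞) χ)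
    (hχE : tsupport χ ⊆ E) :
    IsDistribGradOn (fun x => χ x * u x) (fun x => χ x • v x + u x • gradient χ x) univ := by
  refine isDistribGradOn_iff_integral.2 fun φ hφ hφc _ => ?_
  have hχ' : Continuous (gradient χ) := continuous_gradient (hχ.of_le (by simp))
  have hφ' : Continuous (gradient φ) := continuous_gradient (hφ.of_le (by simp))
  have hsupp₁ : HasCompactSupport fun x => φ x • gradient χ x :=
    hφc.mono fun _ => left_ne_zero_of_smul
  have hsupp₂ : HasCompactSupport fun x => χ x • gradient φ x :=
    (hasCompactSupport_gradient hφc).mono fun _ => right_ne_zero_of_smul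
  have hsupp₃ : HasCompactSupport fun x => φ x * χ x := hφc.mul_right
  have hint₁ : Integrable fun x => u x • (φ x • gradient χ x) :=
    hu.integrable_smul_right_of_hasCompactSupport (hφ.continuous.smul hχ') hsupp₁
  have hint₂ : Integrable fun x => u x • (χ x • gradient φ x) :=
    hu.integrable_smul_right_of_hasCompactSupport (hχ.continuous.smul hφ') hsupp₂
  have hint₃ : Integrable fun x => (φ x * χ x) • v x :=
    hv.integrable_smul_left_of_hasCompactSupport (hφ.continuous.mul hχ.continuous) hsupp₃
  have htest : ∫ x, u x • gradient (fun y => φ y * χ y) x = -∫ x, (φ x * χ x) • v x :=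
    isDistribGradOn_iff_integral.1 h _ (hφ.mul hχ) hsupp₃
      ((closure_mono (Function.support_mul_subset_right _ _)).trans hχE)
  have hprod (x : Euc n) : u x • gradient (fun y => φ y * χ y) x =
      u x • (φ x • gradient χ x) + u x • (χ x • gradient φ x) := by
    rw [gradient_mul (hφ.differentiable (by simp) x) (hχ.differentiable (by simp) x), smul_add]
  simp only [hprod] at htest
  rw [integral_add hint₁ hint₂, ← eq_sub_iff_add_eq'] at htest
  calc ∫ x, (χ x * u x) • gradient φ x = ∫ x, u x • (χ x • gradient φ x) := by
        simp only [smul_smul, mul_comm (u _)]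
    _ = -(∫ x, (φ x * χ x) • v x) - ∫ x, u x • (φ x • gradient χ x) := htest
    _ = -∫ x, ((φ x * χ x) • v x + u x • (φ x • gradient χ x)) := by
        rw [integral_add hint₃ hint₁, neg_add']
    _ = -∫ x, φ x • (χ x • v x + u x • gradient χ x) := by
        congr 1
        refine integral_congr_ae (Eventually.of_forall fun x => ?_)
        simp only [smul_add, smul_smul, mul_comm (u x)]

namespace IsAssouadHomogeneous

theorem tendsto_mul_volume_tube (hΓ : IsAssouadHomogeneous d Γ) (hdn : d < (n : ℝ) - 1)
    {γ : Euc n} (hγ : γ ∈ Γ) {R c : ℝ} (hR : 0 < R) (hc : 0 < c) :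
    Tendsto (fun k : ℕ =>
      ENNReal.ofReal (k + 1) * volume (ball γ R ∩ thickening (c / ((k : ℝ) + 1)) Γ))
      atTop (𝓝 0) := by
  obtain ⟨S, hS, htube⟩ := hΓ.exists_volume_tube_le
  have hexp : 0 < (n : ℝ) - d - 1 := by linarith
  have hwidth := tendsto_div_natCast_add_one c
  have hlim : Tendsto (fun k : ℕ => ENNReal.ofReal
      (c * S * R ^ d * (c / ((k : ℝ) + 1)) ^ ((n : ℝ) - d - 1))) atTop (𝓝 0) := by
    have := (hwidth.rpow_const (p := (n : ℝ) - d - 1) (Or.inr hexp.le)).const_mul (c * S * R ^ d)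
    rw [Real.zero_rpow hexp.ne', mul_zero] at this
    simpa using ENNReal.tendsto_ofReal this
  refine tendsto_of_tendsto_of_tendsto_of_le_of_le' tendsto_const_nhds hlim
    (Eventually.of_forall fun _ => zero_le) ?_
  filter_upwards [hwidth.eventually (gt_mem_nhds hR)] with k hk
  have hpos : 0 < c / ((k : ℝ) + 1) := by positivity
  calc ENNReal.ofReal (k + 1) * volume (ball γ R ∩ thickening (c / ((k : ℝ) + 1)) Γ)
      ≤ ENNReal.ofReal (k + 1) *
          ENNReal.ofReal (S * R ^ d * (c / ((k : ℝ) + 1)) ^ ((n : ℝ) - d)) := by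
        gcongr
        exact htube γ hγ R _ hpos hk.le
    _ = ENNReal.ofReal (c * S * R ^ d * (c / ((k : ℝ) + 1)) ^ ((n : ℝ) - d - 1)) := by
        rw [← ENNReal.ofReal_mul (by positivity), Real.rpow_sub_one hpos.ne']
        congr 1
        field_simp

theorem tendstoL1Loc_smul_gradient_distCutoff (hΓ : IsAssouadHomogeneous d Γ)
    (hdn : d < (n : ℝ) - 1) {B : ℝ≥0} (hB : ∀ x, ‖u x‖ₑ ≤ B) :
    TendstoL1Loc volume (fun k x => u x • gradient (distCutoff Γ k) x) 0 := by
  intro K hK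
  obtain ⟨γ, hγ⟩ := hΓ.nonempty
  obtain ⟨G, hG, hgrad⟩ := exists_enorm_gradient_distCutoff_le Γ
  obtain ⟨R, hR, hKR⟩ := hK.isBounded.subset_ball_lt 0 γ
  have hlim := ENNReal.Tendsto.const_mul (a := B * ENNReal.ofReal G)
    (hΓ.tendsto_mul_volume_tube hdn hγ hR (c := 5) (by norm_num)) (Or.inr (by finiteness))
  rw [mul_zero] at hlim
  refine tendsto_of_tendsto_of_tendsto_of_le_of_le tendsto_const_nhds hlim (fun _ => zero_le)
    fun k => ?_
  set tube := thickening (5 / ((k : ℝ) + 1)) Γ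
  have hpt (x : Euc n) : ‖u x • gradient (distCutoff Γ k) x - (0 : Euc n → Euc n) x‖ₑ ≤
      tube.indicator (fun _ => B * ENNReal.ofReal (G * (k + 1))) x := by
    rw [Pi.zero_apply, sub_zero, enorm_smul]
    by_cases hx : x ∈ tube
    · rw [indicator_of_mem hx]
      exact mul_le_mul' (hB x) (hgrad k x)
    · have hfar : 4 / ((k : ℝ) + 1) < infDist x Γ := by
        rw [mem_thickening_iff_infDist_lt hΓ.nonempty, not_lt] at hx
        exact lt_of_lt_of_le (by gcongr; norm_num) hx
      simp only [gradient_distCutoff_eq_zero hfar, enorm_zero, mul_zero, zero_le]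
  calc ∫⁻ x in K, ‖u x • gradient (distCutoff Γ k) x - (0 : Euc n → Euc n) x‖ₑ
      ≤ ∫⁻ x in ball γ R, tube.indicator (fun _ => B * ENNReal.ofReal (G * (k + 1))) x :=
        (lintegral_mono hpt).trans (lintegral_mono_set hKR)
    _ = B * ENNReal.ofReal (G * (k + 1)) * volume (ball γ R ∩ tube) := by
        rw [lintegral_indicator_const isOpen_thickening.measurableSet,
          Measure.restrict_apply isOpen_thickening.measurableSet, inter_comm]
    _ = B * ENNReal.ofReal G * (ENNReal.ofReal (k + 1) * volume (ball γ R ∩ tube)) := by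
        rw [ENNReal.ofReal_mul hG.le]
        ring

theorem isDistribGradOn_univ_of_bounded (hΓ : IsAssouadHomogeneous d Γ) (hdn : d < (n : ℝ) - 1)
    (hu : LocallyIntegrable u) (hv : LocallyIntegrable v) (h : IsDistribGradOn u v Γᶜ) {B : ℝ≥0}
    (hB : ∀ x, ‖u x‖ₑ ≤ B) : IsDistribGradOn u v univ := by
  have hχ (k : ℕ) := contDiff_distCutoff Γ k
  have hχm (k : ℕ) : AEStronglyMeasurable (distCutoff Γ k) :=
    (hχ k).continuous.aestronglyMeasurable
  have hχlim : ∀ᵐ x, Tendsto (fun k => distCutoff Γ k x) atTop (𝓝 1) := by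
    filter_upwards [hΓ.ae_infDist_pos hdn] with x hx using tendsto_distCutoff hx
  have hmul {F : Type} [NormedAddCommGroup F] [NormedSpace ℝ F] {g : Euc n → F}
      (hg : LocallyIntegrable g) : TendstoL1Loc volume (fun k x => distCutoff Γ k x • g x) g := by
    simpa only [one_smul] using (tendstoL1Loc_const volume g).smul_of_bounded_of_tendsto_ae
      (B := 1) hg hχm (fun k x => enorm_distCutoff_le_one Γ k x) hχlim
  have hgrad := (hmul hv).add (hΓ.tendstoL1Loc_smul_gradient_distCutoff hdn hB)
    (fun k => (hχm k).smul hv.aestronglyMeasurable) hv.aestronglyMeasurable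
  simp only [Pi.zero_apply, add_zero] at hgrad
  have hχv (k : ℕ) : LocallyIntegrable fun x => distCutoff Γ k x • v x :=
    hv.continuous_smul (hχ k).continuous
  have huχ (k : ℕ) : LocallyIntegrable fun x => u x • gradient (distCutoff Γ k) x :=
    hu.smul_continuous (continuous_gradient ((hχ k).of_le (by simp)))
  refine isDistribGradOn_of_tendstoL1Loc (fun k => hu.continuous_smul (hχ k).continuous)
    (fun k => (hχv k).add (huχ k)) hu.aestronglyMeasurable hv.aestronglyMeasurable (hmul hu) hgrad
    fun φ hφ hφc hφE => Eventually.of_forall fun k => ?_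
  exact isDistribGradOn_iff_integral.1
    (h.mul_smooth hu hv (hχ k) tsupport_distCutoff_subset) φ hφ hφc hφE

theorem isDistribGradOn_univ (hΓ : IsAssouadHomogeneous d Γ) (hdn : d < (n : ℝ) - 1)
    (hu : LocallyIntegrable u) (hv : LocallyIntegrable v) (h : IsDistribGradOn u v Γᶜ) :
    IsDistribGradOn u v univ := by
  have hT (k : ℕ) := contDiff_arctanTrunc k
  have hTum (k : ℕ) : AEStronglyMeasurable (arctanTrunc k ∘ u) :=
    (hT k).continuous.comp_aestronglyMeasurable hu.aestronglyMeasurable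
  have hT'um (k : ℕ) : AEStronglyMeasurable fun x => deriv (arctanTrunc k) (u x) :=
    ((hT k).continuous_deriv le_rfl).comp_aestronglyMeasurable hu.aestronglyMeasurable
  have hTu (k : ℕ) : LocallyIntegrable (arctanTrunc k ∘ u) :=
    hu.mono (hTum k) (Eventually.of_forall fun x => abs_arctanTrunc_le_abs k (u x))
  have hT'v (k : ℕ) : LocallyIntegrable fun x => deriv (arctanTrunc k) (u x) • v x := by
    refine hv.mono ((hT'um k).smul hv.aestronglyMeasurable) (Eventually.of_forall fun x => ?_)
    rw [norm_smul]
    exact mul_le_of_le_one_left (norm_nonneg _) (nnnorm_deriv_arctanTrunc_le k (u x))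
  have hulim : TendstoL1Loc volume (fun k => arctanTrunc k ∘ u) u :=
    tendstoL1Loc_of_enorm_le hTum hu
      (fun k x => enorm_le_iff_norm_le.2 (abs_arctanTrunc_le_abs k (u x)))
      (Eventually.of_forall fun x => tendsto_arctanTrunc (u x))
  have hvlim := (tendstoL1Loc_const volume v).smul_of_bounded_of_tendsto_ae hv hT'um
    (fun k x => ENNReal.coe_le_coe.2 (nnnorm_deriv_arctanTrunc_le k (u x)))
    (Eventually.of_forall fun x => tendsto_deriv_arctanTrunc (u x))
  simp only [one_smul] at hvlim
  refine isDistribGradOn_of_tendstoL1Loc hTu hT'v hu.aestronglyMeasurable hv.aestronglyMeasurable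
    hulim hvlim fun φ hφ hφc hφE => Eventually.of_forall fun k => ?_
  have hchain := h.comp hΓ.isClosed.isOpen_compl hu hv (hT k) (nnnorm_deriv_arctanTrunc_le k)
  refine isDistribGradOn_iff_integral.1 (hΓ.isDistribGradOn_univ_of_bounded hdn (hTu k) (hT'v k)
    hchain (B := ((k + 1) * (Real.pi / 2)).toNNReal) fun x => ?_) φ hφ hφc hφE
  rw [← ofReal_norm]
  exact ENNReal.ofReal_le_ofReal (abs_arctanTrunc_le k (u x))

end IsAssouadHomogeneous

end Removability

/-! ### The Poincaré inequality for distributional gradients -/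

section WeakPoincare

section

variable {E F : Type*} [NormedAddCommGroup E] [NormedSpace ℝ E] [FiniteDimensional ℝ E]
  [MeasurableSpace E] [BorelSpace E] {μ : Measure E} [μ.IsAddHaarMeasure] [NormedAddCommGroup F]
  [NormedSpace ℝ F] [CompleteSpace F] {W : E → ℝ≥0∞} {A : ℝ≥0∞}

theorem IsA1Weight.tendsto_eLpNorm_mollify_sub_restrict_ball (hW : IsA1Weight μ W A)
    (hA : A ≠ ⊤) [IsLocallyFiniteMeasure (μ.withDensity W)] {p : ℝ≥0∞} (hp : 1 ≤ p)
    (hp_top : p ≠ ⊤) {f : E → F} (hf : LocallyIntegrable f μ) {c : E} {R : ℝ}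
    (hfp : MemLp f p ((μ.withDensity W).restrict (ball c (R + 1)))) :
    Tendsto (fun k => eLpNorm (mollify μ k f - f) p ((μ.withDensity W).restrict (ball c R)))
      atTop (𝓝 0) := by
  set g : E → F := (ball c (R + 1)).indicator f
  have hg : LocallyIntegrable g μ := fun x =>
    (hf x).imp fun s hs => ⟨hs.1, IntegrableOn.indicator hs.2 measurableSet_ball⟩
  have hgp : MemLp g p (μ.withDensity W) := (memLp_indicator_iff_restrict measurableSet_ball).2 hfp
  refine tendsto_of_tendsto_of_tendsto_of_le_of_le tendsto_const_nhds
    (hW.tendsto_eLpNorm_mollify_sub hA hp hp_top hg hgp) (fun _ => zero_le) fun k => ?_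
  refine le_trans (le_of_eq (eLpNorm_congr_ae ?_)) (eLpNorm_mono_measure _ Measure.restrict_le_self)
  filter_upwards [ae_restrict_mem measurableSet_ball] with x hx
  have hsub : ball x (stdBump E k).rOut ⊆ ball c (R + 1) :=
    ball_subset_ball' (by linarith [stdBump_rOut_le_one E k, mem_ball.1 hx])
  have heq : EqOn f g (ball x (stdBump E k).rOut) := fun y hy => (indicator_of_mem (hsub hy) f).symm
  rw [Pi.sub_apply, Pi.sub_apply, mollify_congr_of_eqOn_ball heq,
    heq (mem_ball_self (stdBump E k).rOut_pos)]

theorem tendsto_setAverage_mollify {f : E → F} (hf : LocallyIntegrable f μ) (c : E) (R : ℝ) :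
    Tendsto (fun k => ⨍ y in ball c R, mollify μ k f y ∂μ) atTop
      (𝓝 (⨍ y in ball c R, f y ∂μ)) := by
  have hint {g : E → F} (hg : LocallyIntegrable g μ) : IntegrableOn g (ball c R) μ :=
    (hg.integrableOn_isCompact (isCompact_closedBall c R)).mono_set ball_subset_closedBall
  simp only [setAverage_eq]
  refine Tendsto.const_smul (tendsto_integral_of_L1 f (hint hf).aestronglyMeasurable
    (Eventually.of_forall fun k => hint (contDiff_mollify hf k).continuous.locallyIntegrable) ?_) _
  exact tendsto_of_tendsto_of_tendsto_of_le_of_le tendsto_const_nhds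
    (tendstoL1Loc_mollify hf _ (isCompact_closedBall c R)) (fun _ => zero_le)
    fun k => lintegral_mono_set ball_subset_closedBall

theorem IsA1Weight.eLpNorm_sub_average_le (hW : IsA1Weight μ W A) {f : E → F}
    (hf : ContDiff ℝ 1 f) (c : E) {R : ℝ} (hR : 0 < R) :
    eLpNorm (fun x => f x - ⨍ y in ball c R, f y ∂μ) 2 ((μ.withDensity W).restrict (ball c R)) ≤
      ENNReal.ofReal (2 * R) * (A * 2 ^ Module.finrank ℝ E) ^ (1 / 2 : ℝ) *
        eLpNorm (fderiv ℝ f) 2 ((μ.withDensity W).restrict (ball c R)) := by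
  have hf' : Continuous (fderiv ℝ f) := hf.continuous_fderiv one_ne_zero
  have hosc : AEStronglyMeasurable (fun x => f x - ⨍ y in ball c R, f y ∂μ)
      (μ.restrict (ball c R)) := (hf.continuous.sub continuous_const).aestronglyMeasurable
  rw [restrict_withDensity measurableSet_ball,
    eLpNorm_withDensity_eq hW.measurable one_le_two ENNReal.ofNat_ne_top hosc,
    eLpNorm_withDensity_eq hW.measurable one_le_two ENNReal.ofNat_ne_top
      hf'.aestronglyMeasurable]
  simp only [ENNReal.toReal_ofNat, ENNReal.rpow_two]
  calc _ ≤ (ENNReal.ofReal (2 * R) ^ 2 * (A * 2 ^ Module.finrank ℝ E) *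
        ∫⁻ z in ball c R, ‖fderiv ℝ f z‖ₑ ^ 2 * W z ∂μ) ^ (1 / 2 : ℝ) := by
        gcongr
        exact hW.poincare hf c hR
    _ = _ := by
        rw [ENNReal.mul_rpow_of_nonneg _ _ (by norm_num),
          ENNReal.mul_rpow_of_nonneg _ _ (by norm_num),
          ← ENNReal.rpow_two, ← ENNReal.rpow_mul]
        norm_num

end

theorem IsDistribGradOn.eLpNorm_sub_average_le {n : ℕ} {u : Euc n → ℝ} {v : Euc n → Euc n}
    (h : IsDistribGradOn u v univ) (hu : LocallyIntegrable u) (hv : LocallyIntegrable v)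
    {W : Euc n → ℝ≥0∞} {A : ℝ≥0∞} (hW : IsA1Weight volume W A) (hA : A ≠ ⊤)
    [IsLocallyFiniteMeasure ((volume : Measure (Euc n)).withDensity W)] (c : Euc n) {R : ℝ}
    (hR : 0 < R) (hvL2 : MemLp v 2 ((volume.withDensity W).restrict (ball c (R + 1)))) :
    eLpNorm (fun x => u x - ⨍ y in ball c R, u y) 2 ((volume.withDensity W).restrict (ball c R)) ≤
      ENNReal.ofReal (2 * R) * (A * 2 ^ n) ^ (1 / 2 : ℝ) *
        eLpNorm v 2 ((volume.withDensity W).restrict (ball c R)) := by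
  set ν := (volume.withDensity W).restrict (ball c R)
  set P := ENNReal.ofReal (2 * R) * (A * 2 ^ n) ^ (1 / 2 : ℝ)
  have hP : P ≠ ⊤ := ENNReal.mul_ne_top ENNReal.ofReal_ne_top
    (ENNReal.rpow_ne_top_of_nonneg (by norm_num) (ENNReal.mul_ne_top hA (by finiteness)))
  have hac : ν ≪ volume := Measure.restrict_le_self.absolutelyContinuous.trans
    (withDensity_absolutelyContinuous volume W)
  have hum (k : ℕ) := contDiff_mollify hu k
  have hvm : AEStronglyMeasurable v ν := hv.aestronglyMeasurable.mono_ac hac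
  have hgrad (k : ℕ) : eLpNorm (fderiv ℝ (mollify volume k u)) 2 ν ≤
      eLpNorm v 2 ν + eLpNorm (mollify volume k v - v) 2 ν := by
    have hvk : AEStronglyMeasurable (mollify volume k v) ν :=
      (contDiff_mollify hv k).continuous.aestronglyMeasurable
    refine le_trans (le_of_eq (eLpNorm_congr_enorm_ae (Eventually.of_forall fun x => ?_)))
      (le_trans (le_of_eq (by rw [add_sub_cancel])) (eLpNorm_add_le hvm (hvk.sub hvm) one_le_two))
    rw [← enorm_gradient, h.gradient_mollify_eq hu (subset_univ _)]
  have hrhs : Tendsto (fun k => P * (eLpNorm v 2 ν + eLpNorm (mollify volume k v - v) 2 ν)) atTop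
      (𝓝 (P * eLpNorm v 2 ν)) := by
    simpa using ENNReal.Tendsto.const_mul ((hW.tendsto_eLpNorm_mollify_sub_restrict_ball hA
      one_le_two ENNReal.ofNat_ne_top hv hvL2).const_add (eLpNorm v 2 ν)) (Or.inr hP)
  have hlim : ∀ᵐ x ∂ν, Tendsto
      (fun k => mollify volume k u x - ⨍ y in ball c R, mollify volume k u y) atTop
      (𝓝 (u x - ⨍ y in ball c R, u y)) := by
    filter_upwards [hac.ae_le (ae_tendsto_mollify hu)] with x hx
    exact hx.sub (tendsto_setAverage_mollify hu c R)
  refine (Lp.eLpNorm_lim_le_liminf_eLpNorm (fun k =>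
    ((hum k).continuous.sub continuous_const).aestronglyMeasurable) _ hlim).trans ?_
  rw [← hrhs.liminf_eq]
  refine liminf_le_liminf (Eventually.of_forall fun k => ?_)
  have hk := hW.eLpNorm_sub_average_le ((hum k).of_le (by simp)) c hR
  rw [finrank_euclideanSpace, Fintype.card_fin] at hk
  exact hk.trans (mul_le_mul_right (hgrad k) _)

end WeakPoincare

/-! ### Averages over dyadic balls -/

theorem sq_eLpNorm_two {α F : Type*} [MeasurableSpace α] [NormedAddCommGroup F] (f : α → F)
    (μ : Measure α) : eLpNorm f 2 μ ^ 2 = ∫⁻ x, ‖f x‖ₑ ^ 2 ∂μ := by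
  have hsq := eLpNorm_nnreal_pow_eq_lintegral (p := 2) (f := f) (μ := μ) two_ne_zero
  simpa only [NNReal.coe_ofNat, ENNReal.rpow_two, ENNReal.coe_ofNat] using hsq

theorem enorm_sub_average_mul_le_eLpNorm {α F : Type*} [MeasurableSpace α] [NormedAddCommGroup F]
    [NormedSpace ℝ F] [CompleteSpace F] {μ : Measure α} [IsFiniteMeasure μ] [NeZero μ] {f : α → F}
    (hf : Integrable f μ) (a : F) :
    ‖a - ⨍ x, f x ∂μ‖ₑ * μ univ ^ (1 / 2 : ℝ) ≤ eLpNorm (fun x => f x - a) 2 μ := by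
  have hsq := enorm_sub_average_sq_le hf a
  rw [laverage_eq, ENNReal.le_div_iff_mul_le (Or.inl (NeZero.ne _))
    (Or.inl (measure_ne_top μ _))] at hsq
  rw [eLpNorm_eq_lintegral_rpow_enorm_toReal two_ne_zero ENNReal.ofNat_ne_top]
  simp only [ENNReal.toReal_ofNat, ENNReal.rpow_two, ← neg_sub a, enorm_neg]
  calc ‖a - ⨍ x, f x ∂μ‖ₑ * μ univ ^ (1 / 2 : ℝ)
      = (‖a - ⨍ x, f x ∂μ‖ₑ ^ 2 * μ univ) ^ (1 / 2 : ℝ) := by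
        rw [ENNReal.mul_rpow_of_nonneg _ _ (by norm_num), ← ENNReal.rpow_two, ← ENNReal.rpow_mul]
        norm_num
    _ ≤ _ := by gcongr

namespace IsAssouadHomogeneous

variable {n : ℕ} {d : ℝ} {Γ : Set (Euc n)} {u : Euc n → ℝ} {v : Euc n → Euc n}

theorem setLIntegral_compl_measW_eq (hΓ : IsAssouadHomogeneous d Γ) (hdn : d < n)
    (g : Euc n → Euc n) :
    ∫⁻ z in Γᶜ, ENNReal.ofReal (‖g z‖ ^ 2) ∂measW n d Γ = eLpNorm g 2 (measW n d Γ) ^ 2 := by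
  have hnull : ∀ᵐ z ∂measW n d Γ, z ∈ Γᶜ := measure_eq_zero_iff_ae_notMem.1
    (withDensity_absolutelyContinuous _ _ (hΓ.volume_eq_zero hdn))
  simp only [Measure.restrict_eq_self_of_ae_mem hnull, sq_eLpNorm_two,
    ENNReal.ofReal_pow (norm_nonneg _), ofReal_norm]

theorem memLp_of_memW (hΓ : IsAssouadHomogeneous d Γ) (hdn : d < n) (h : MemW n d Γ u v) :
    MemLp v 2 (measW n d Γ) := by
  have hnull : ∀ᵐ z : Euc n, z ∈ Γᶜ := measure_eq_zero_iff_ae_notMem.1 (hΓ.volume_eq_zero hdn)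
  have hm : AEStronglyMeasurable v := by
    rw [← Measure.restrict_eq_self_of_ae_mem hnull]
    exact h.gradLocInt.aestronglyMeasurable
  refine ⟨hm.mono_ac (withDensity_absolutelyContinuous _ _), lt_top_iff_ne_top.2 fun htop => ?_⟩
  exact h.l2.ne (by rw [hΓ.setLIntegral_compl_measW_eq hdn, htop, ENNReal.top_pow two_ne_zero])

theorem volume_restrict_ball_le (hΓ : IsAssouadHomogeneous d Γ) (hdn : d < (n : ℝ) - 1)
    {x₀ : Euc n} (hx₀ : x₀ ∈ Γ) (R : ℝ) :
    volume.restrict (ball x₀ R) ≤ ENNReal.ofReal (R ^ ((n : ℝ) - 1 - d)) • measW n d Γ := by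
  refine Measure.le_iff.2 fun s hs => ?_
  rw [Measure.restrict_apply hs, Measure.smul_apply, smul_eq_mul, measW, withDensity_apply _ hs,
    ← setLIntegral_one, ← lintegral_const_mul' _ _ ENNReal.ofReal_ne_top]
  refine le_trans ?_ (lintegral_mono_set (inter_subset_left (t := ball x₀ R)))
  refine setLIntegral_mono_ae' (hs.inter measurableSet_ball) ?_
  filter_upwards [hΓ.ae_infDist_pos hdn] with x hx hxs
  have hxR : infDist x Γ ≤ R := (infDist_le_dist_of_mem hx₀).trans (mem_ball.1 hxs.2).le
  have hR : 0 < R := hx.trans_le hxR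
  rw [← ENNReal.ofReal_mul (by positivity), ENNReal.one_le_ofReal]
  calc 1 = R ^ ((n : ℝ) - 1 - d) * R ^ (d + 1 - (n : ℝ)) := by
        rw [← Real.rpow_add hR, ← Real.rpow_zero R]; congr 1; ring
    _ ≤ _ := by gcongr; exact le_weightW_of_infDist_le hdn hx hxR

theorem eLpNorm_restrict_ball_le (hΓ : IsAssouadHomogeneous d Γ) (hdn : d < (n : ℝ) - 1)
    {x₀ : Euc n} (hx₀ : x₀ ∈ Γ) (R : ℝ) :
    eLpNorm v 2 (volume.restrict (ball x₀ R)) ≤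
      ENNReal.ofReal (R ^ ((n : ℝ) - 1 - d)) ^ (1 / 2 : ℝ) * eLpNorm v 2 (measW n d Γ) := by
  refine (eLpNorm_mono_measure v (hΓ.volume_restrict_ball_le hdn hx₀ R)).trans_eq ?_
  rw [eLpNorm_smul_measure_of_ne_top ENNReal.ofNat_ne_top, smul_eq_mul, ENNReal.toReal_div,
    ENNReal.toReal_one, ENNReal.toReal_ofNat]

theorem memLp_restrict_ball (hΓ : IsAssouadHomogeneous d Γ) (hdn : d < (n : ℝ) - 1)
    (hv : MemLp v 2 (measW n d Γ)) {x₀ : Euc n} (hx₀ : x₀ ∈ Γ) (R : ℝ) :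
    MemLp v 2 (volume.restrict (ball x₀ R)) :=
  (hv.smul_measure ENNReal.ofReal_ne_top).mono_measure (hΓ.volume_restrict_ball_le hdn hx₀ R)

theorem locallyIntegrable_of_memLp (hΓ : IsAssouadHomogeneous d Γ) (hdn : d < (n : ℝ) - 1)
    (hv : MemLp v 2 (measW n d Γ)) : LocallyIntegrable v := by
  obtain ⟨x₀, hx₀⟩ := hΓ.nonempty
  refine fun x => ⟨ball x₀ (dist x x₀ + 1), isOpen_ball.mem_nhds (mem_ball.2 (lt_add_one _)), ?_⟩
  have : IsFiniteMeasure (volume.restrict (ball x₀ (dist x x₀ + 1))) :=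
    isFiniteMeasure_restrict.2 measure_ball_lt_top.ne
  exact (hΓ.memLp_restrict_ball hdn hv hx₀ _).integrable one_le_two

end IsAssouadHomogeneous

/-- A bound for the difference of the averages of a function over the balls of radii `R` and `2 * R`
around a point of `Γ`, in units of `R ^ ((1 - d) / 2) * ‖u‖_W`. -/
def averageStepConst (n : ℕ) (d : ℝ) : ℝ :=
  4 * 2 ^ (((n : ℝ) + (n - 1 - d)) / 2) / volume.real (ball (0 : Euc n) 1) ^ (1 / 2 : ℝ)

theorem averageStepConst_pos (n : ℕ) (d : ℝ) : 0 < averageStepConst n d := by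
  have := volume_real_ball_pos (0 : Euc n) one_pos
  rw [averageStepConst]
  positivity

theorem averageStepConst_mul_rpow {n : ℕ} {d R : ℝ} (hR : 0 < R) :
    averageStepConst n d * R ^ ((1 - d) / 2) *
      (R ^ n * volume.real (ball (0 : Euc n) 1)) ^ (1 / 2 : ℝ) =
    2 * (2 * R) * (2 ^ n) ^ (1 / 2 : ℝ) * ((2 * R) ^ ((n : ℝ) - 1 - d)) ^ (1 / 2 : ℝ) := by
  have hκ := volume_real_ball_pos (0 : Euc n) one_pos
  rw [averageStepConst]
  set κ := volume.real (ball (0 : Euc n) 1)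
  have hsqrt {t : ℝ} (ht : 0 < t) (s : ℝ) : (t ^ s) ^ (1 / 2 : ℝ) = t ^ (s / 2) := by
    rw [← Real.rpow_mul ht.le, mul_one_div]
  have hR_pow : R ^ ((1 - d) / 2) * R ^ ((n : ℝ) / 2) = R * R ^ (((n : ℝ) - 1 - d) / 2) := by
    rw [← Real.rpow_add hR]
    nth_rw 2 [← Real.rpow_one R]
    rw [← Real.rpow_add hR]
    congr 1; ring
  rw [add_div, Real.rpow_add two_pos, Real.mul_rpow (by positivity) hκ.le,
    ← Real.rpow_natCast, ← Real.rpow_natCast, hsqrt hR, hsqrt two_pos, hsqrt (by positivity),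
    Real.mul_rpow two_pos.le hR.le]
  field_simp
  linear_combination 4 * hR_pow

namespace IsDistribGradOn

variable {n : ℕ} {d : ℝ} {Γ : Set (Euc n)} {u : Euc n → ℝ} {v : Euc n → Euc n}

theorem eLpNorm_sub_average_le_volume (h : IsDistribGradOn u v univ) (hu : LocallyIntegrable u)
    (hv : LocallyIntegrable v) (c : Euc n) {R : ℝ} (hR : 0 < R)
    (hvL2 : MemLp v 2 (volume.restrict (ball c (R + 1)))) :
    eLpNorm (fun x => u x - ⨍ y in ball c R, u y) 2 (volume.restrict (ball c R)) ≤
      ENNReal.ofReal (2 * R) * (2 ^ n) ^ (1 / 2 : ℝ) *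
        eLpNorm v 2 (volume.restrict (ball c R)) := by
  have hone : (volume : Measure (Euc n)).withDensity 1 = volume := withDensity_one
  have : IsLocallyFiniteMeasure ((volume : Measure (Euc n)).withDensity 1) := by
    rw [hone]; infer_instance
  have hle := h.eLpNorm_sub_average_le hu hv (isA1Weight_one volume) ENNReal.one_ne_top c hR
    (by rwa [hone])
  rwa [hone, one_mul] at hle

theorem enorm_average_two_mul_sub_average_le (h : IsDistribGradOn u v univ)
    (hu : LocallyIntegrable u) (hΓ : IsAssouadHomogeneous d Γ) (hdn : d < (n : ℝ) - 1)
    (hv : MemLp v 2 (measW n d Γ)) {x₀ : Euc n} (hx₀ : x₀ ∈ Γ) {R : ℝ} (hR : 0 < R) :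
    ‖(⨍ y in ball x₀ (2 * R), u y) - ⨍ y in ball x₀ R, u y‖ₑ ≤
      ENNReal.ofReal (averageStepConst n d * R ^ ((1 - d) / 2)) * eLpNorm v 2 (measW n d Γ) := by
  set a := ⨍ y in ball x₀ (2 * R), u y
  set s : ℝ := R ^ n * volume.real (ball (0 : Euc n) 1)
  have hs : 0 < s := mul_pos (by positivity) (volume_real_ball_pos _ one_pos)
  have hC := averageStepConst_pos n d
  have hint : IntegrableOn u (ball x₀ R) :=
    (hu.integrableOn_isCompact (isCompact_closedBall x₀ R)).mono_set ball_subset_closedBall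
  have : IsFiniteMeasure (volume.restrict (ball x₀ R)) :=
    isFiniteMeasure_restrict.2 measure_ball_lt_top.ne
  have : NeZero (volume.restrict (ball x₀ R)) :=
    ⟨by simpa using (measure_ball_pos volume x₀ hR).ne'⟩
  have hsub : ball x₀ R ⊆ ball x₀ (2 * R) := ball_subset_ball (by linarith)
  refine (ENNReal.mul_le_mul_iff_left (c := ENNReal.ofReal (s ^ (1 / 2 : ℝ))) (by positivity)
    ENNReal.ofReal_ne_top).1 ?_
  calc ‖a - ⨍ y in ball x₀ R, u y‖ₑ * ENNReal.ofReal (s ^ (1 / 2 : ℝ))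
      ≤ eLpNorm (fun x => u x - a) 2 (volume.restrict (ball x₀ R)) := by
        rw [← ENNReal.ofReal_rpow_of_pos hs, ← volume_ball_eq_ofReal x₀ hR,
          ← Measure.restrict_apply_univ]
        exact enorm_sub_average_mul_le_eLpNorm hint a
    _ ≤ eLpNorm (fun x => u x - a) 2 (volume.restrict (ball x₀ (2 * R))) :=
        eLpNorm_mono_measure _ (Measure.restrict_mono hsub le_rfl)
    _ ≤ ENNReal.ofReal (2 * (2 * R)) * (2 ^ n) ^ (1 / 2 : ℝ) *
          (ENNReal.ofReal ((2 * R) ^ ((n : ℝ) - 1 - d)) ^ (1 / 2 : ℝ) *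
            eLpNorm v 2 (measW n d Γ)) := by
        refine (h.eLpNorm_sub_average_le_volume hu (hΓ.locallyIntegrable_of_memLp hdn hv) x₀
          (by positivity) (hΓ.memLp_restrict_ball hdn hv hx₀ _)).trans ?_
        gcongr
        exact hΓ.eLpNorm_restrict_ball_le hdn hx₀ _
    _ = ENNReal.ofReal (averageStepConst n d * R ^ ((1 - d) / 2) * s ^ (1 / 2 : ℝ)) *
          eLpNorm v 2 (measW n d Γ) := by
        rw [← mul_assoc, averageStepConst_mul_rpow hR,
          ENNReal.ofReal_mul (p := _ * _) (by positivity),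
          ENNReal.ofReal_mul (p := 2 * (2 * R)) (by positivity),
          ENNReal.ofReal_rpow_of_pos (by positivity),
          ← ENNReal.ofReal_rpow_of_pos (x := 2 ^ n) (by positivity), ENNReal.ofReal_pow two_pos.le,
          ENNReal.ofReal_ofNat]
    _ = _ := by
        rw [ENNReal.ofReal_mul (by positivity)]
        ring

end IsDistribGradOn

theorem exists_tendsto_of_enorm_sub_le_geometric {a : ℕ → ℝ} {D r : ℝ} {E : ℝ≥0∞} (hE : E ≠ ⊤)
    (hr0 : 0 ≤ r) (hr : r < 1) (hD : 0 ≤ D)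
    (h : ∀ j, ‖a (j + 1) - a j‖ₑ ≤ ENNReal.ofReal (D * r ^ j) * E) :
    ∃ l, Tendsto a atTop (𝓝 l) ∧ ∀ j, |a j - l| ≤ D / (1 - r) * r ^ j * E.toReal := by
  have hdist (j : ℕ) : dist (a j) (a (j + 1)) ≤ D * E.toReal * r ^ j := by
    have hj := ENNReal.toReal_mono (by finiteness) (h j)
    rw [toReal_enorm, ENNReal.toReal_mul, ENNReal.toReal_ofReal (by positivity)] at hj
    rw [dist_comm, dist_eq_norm]
    linarith
  obtain ⟨l, hl⟩ := cauchySeq_tendsto_of_complete (cauchySeq_of_le_geometric r _ hr hdist)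
  refine ⟨l, hl, fun j => ?_⟩
  have hj := dist_le_of_le_geometric_of_tendsto r _ hr hdist hl j
  rw [Real.dist_eq] at hj
  exact hj.trans_eq (by ring)

theorem IsDistribGradOn.exists_tendsto_average {n : ℕ} {d : ℝ} {Γ : Set (Euc n)} {u : Euc n → ℝ}
    {v : Euc n → Euc n} (h : IsDistribGradOn u v univ) (hu : LocallyIntegrable u)
    (hΓ : IsAssouadHomogeneous d Γ) (hdn : d < (n : ℝ) - 1) (hd : 1 < d)
    (hv : MemLp v 2 (measW n d Γ)) {x₀ : Euc n} (hx₀ : x₀ ∈ Γ) :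
    ∃ l : ℝ, Tendsto (fun j : ℕ => ⨍ y in ball x₀ ((2 : ℝ) ^ j), u y) atTop (𝓝 l) ∧
      ∀ j : ℕ, |(⨍ y in ball x₀ ((2 : ℝ) ^ j), u y) - l| ≤
        averageStepConst n d / (1 - 2 ^ ((1 - d) / 2)) * 2 ^ ((j : ℝ) * (1 - d) / 2) *
          (eLpNorm v 2 (measW n d Γ)).toReal := by
  have hpow (j : ℕ) : ((2 : ℝ) ^ j) ^ ((1 - d) / 2) = ((2 : ℝ) ^ ((1 - d) / 2)) ^ j := by
    rw [← Real.rpow_natCast, ← Real.rpow_natCast, ← Real.rpow_mul two_pos.le,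
      ← Real.rpow_mul two_pos.le, mul_comm]
  have hstep (j : ℕ) := h.enorm_average_two_mul_sub_average_le hu hΓ hdn hv hx₀
    (pow_pos two_pos j)
  simp only [← pow_succ', hpow] at hstep
  have hratio : (2 : ℝ) ^ ((1 - d) / 2) < 1 :=
    Real.rpow_lt_one_of_one_lt_of_neg one_lt_two (by linarith)
  obtain ⟨l, hl, hbound⟩ := exists_tendsto_of_enorm_sub_le_geometric
    (a := fun j => ⨍ y in ball x₀ ((2 : ℝ) ^ j), u y) hv.2.ne (by positivity) hratio
    (averageStepConst_pos n d).le hstep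
  refine ⟨l, hl, fun j => ?_⟩
  rw [mul_div_assoc, Real.rpow_mul two_pos.le, Real.rpow_natCast, hpow]
  exact hbound j

theorem IsAssouadHomogeneous.exists_eLpNorm_const_restrict_ball_le {n : ℕ} {d : ℝ}
    {Γ : Set (Euc n)} (hΓ : IsAssouadHomogeneous d Γ) (hdn : d < (n : ℝ) - 1) :
    ∃ S : ℝ, 0 < S ∧ ∀ x ∈ Γ, ∀ R : ℝ, 0 < R → ∀ a : ℝ,
      eLpNorm (fun _ => a) 2 ((measW n d Γ).restrict (ball x R)) ≤
        ENNReal.ofReal (|a| * (S * R ^ ((d + 1) / 2))) := by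
  obtain ⟨S, hS, hball⟩ := hΓ.exists_measW_ball_le hdn
  refine ⟨S ^ (1 / 2 : ℝ), by positivity, fun x hx R hR a => ?_⟩
  rw [eLpNorm_const' a two_ne_zero ENNReal.ofNat_ne_top, Measure.restrict_apply_univ,
    ENNReal.toReal_ofNat, ENNReal.ofReal_mul (abs_nonneg a), ← Real.enorm_eq_ofReal_abs]
  gcongr
  refine (ENNReal.rpow_le_rpow (hball x hx R hR) (by norm_num)).trans_eq ?_
  rw [ENNReal.ofReal_rpow_of_nonneg (by positivity) (by norm_num),
    Real.mul_rpow hS.le (by positivity), ← Real.rpow_mul hR.le, mul_one_div]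

namespace IsDistribGradOn

variable {n : ℕ} {d : ℝ} {Γ : Set (Euc n)} {u : Euc n → ℝ} {v : Euc n → Euc n} {x₀ : Euc n}

theorem exists_eLpNorm_average_restrict_ball_le (h : IsDistribGradOn u v univ)
    (hu : LocallyIntegrable u) (hΓ : IsAssouadHomogeneous d Γ) (hdn : d < (n : ℝ) - 1)
    (hd : 1 < d) (hv : MemLp v 2 (measW n d Γ)) (hx₀ : x₀ ∈ Γ)
    (h0 : Tendsto (fun j : ℕ => ⨍ y in ball x₀ ((2 : ℝ) ^ j), u y) atTop (𝓝 0)) :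
    ∃ K : ℝ, ∀ j : ℕ,
      eLpNorm (fun _ => ⨍ y in ball x₀ ((2 : ℝ) ^ j), u y) 2
        ((measW n d Γ).restrict (ball x₀ (2 ^ j))) ≤ ENNReal.ofReal (K * 2 ^ j) := by
  obtain ⟨S, hS, hconst⟩ := hΓ.exists_eLpNorm_const_restrict_ball_le hdn
  obtain ⟨l, hl, hdecay⟩ := h.exists_tendsto_average hu hΓ hdn hd hv hx₀
  obtain rfl := tendsto_nhds_unique hl h0
  set M := averageStepConst n d / (1 - 2 ^ ((1 - d) / 2)) * (eLpNorm v 2 (measW n d Γ)).toReal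
  refine ⟨M * S, fun j => (hconst x₀ hx₀ _ (by positivity) _).trans
    (ENNReal.ofReal_le_ofReal ?_)⟩
  have hj := hdecay j
  rw [sub_zero] at hj
  have hscale : (2 : ℝ) ^ ((j : ℝ) * (1 - d) / 2) * ((2 : ℝ) ^ j) ^ ((d + 1) / 2) = 2 ^ j := by
    rw [← Real.rpow_natCast, ← Real.rpow_mul two_pos.le, ← Real.rpow_add two_pos]
    congr 1; ring
  calc _ ≤ M * 2 ^ ((j : ℝ) * (1 - d) / 2) * (S * ((2 : ℝ) ^ j) ^ ((d + 1) / 2)) := by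
        gcongr; linarith
    _ = M * S * 2 ^ j := by linear_combination M * S * hscale

theorem exists_eLpNorm_restrict_ball_le (h : IsDistribGradOn u v univ) (hu : LocallyIntegrable u)
    (hΓ : IsAssouadHomogeneous d Γ) (hdn : d < (n : ℝ) - 1) (hd : 1 < d)
    (hv : MemLp v 2 (measW n d Γ)) (hx₀ : x₀ ∈ Γ)
    (h0 : Tendsto (fun j : ℕ => ⨍ y in ball x₀ ((2 : ℝ) ^ j), u y) atTop (𝓝 0)) :
    ∃ K : ℝ≥0∞, K ≠ ⊤ ∧ ∀ j : ℕ,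
      eLpNorm u 2 ((measW n d Γ).restrict (ball x₀ (2 ^ j))) ≤ K * 2 ^ j := by
  obtain ⟨A, hA, hW⟩ := hΓ.exists_isA1Weight hdn
  obtain ⟨K, hK⟩ := h.exists_eLpNorm_average_restrict_ball_le hu hΓ hdn hd hv hx₀ h0
  have : IsLocallyFiniteMeasure
    (volume.withDensity fun x => ENNReal.ofReal (weightW n d Γ x)) :=
    hΓ.isLocallyFiniteMeasure_measW hdn
  have hum : AEStronglyMeasurable u (measW n d Γ) :=
    hu.aestronglyMeasurable.mono_ac (withDensity_absolutelyContinuous _ _)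
  refine ⟨ENNReal.ofReal 2 * (A * 2 ^ n) ^ (1 / 2 : ℝ) * eLpNorm v 2 (measW n d Γ) +
    ENNReal.ofReal K, by have := hv.2.ne; finiteness, fun j => ?_⟩
  have htwo : (2 : ℝ≥0∞) ^ j = ENNReal.ofReal (2 ^ j) := by
    rw [ENNReal.ofReal_pow two_pos.le, ENNReal.ofReal_ofNat]
  set a := ⨍ y in ball x₀ ((2 : ℝ) ^ j), u y
  have hosc := h.eLpNorm_sub_average_le hu (hΓ.locallyIntegrable_of_memLp hdn hv) hW hA x₀
    (R := 2 ^ j) (by positivity) (hv.restrict _)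
  calc eLpNorm u 2 ((measW n d Γ).restrict (ball x₀ (2 ^ j)))
      = eLpNorm ((fun x => u x - a) + fun _ => a) 2
          ((measW n d Γ).restrict (ball x₀ (2 ^ j))) := by
        congr 1; ext x; exact (sub_add_cancel _ _).symm
    _ ≤ _ := eLpNorm_add_le (hum.restrict.sub aestronglyMeasurable_const)
        aestronglyMeasurable_const one_le_two
    _ ≤ ENNReal.ofReal (2 * 2 ^ j) * (A * 2 ^ n) ^ (1 / 2 : ℝ) * eLpNorm v 2 (measW n d Γ) +
          ENNReal.ofReal (K * 2 ^ j) := by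
        refine add_le_add (hosc.trans ?_) (hK j)
        gcongr
        exact Measure.restrict_le_self
    _ = _ := by
        rw [ENNReal.ofReal_mul two_pos.le, ENNReal.ofReal_mul' (by positivity), ← htwo]
        ring

end IsDistribGradOn

theorem tendsto_eLpNorm_smul_zero {α F : Type*} [MeasurableSpace α] [NormedAddCommGroup F]
    [NormedSpace ℝ F] {μ : Measure α} {p : ℝ≥0∞} (hp : p ≠ 0) (hp_top : p ≠ ⊤) {f : α → F}
    (hf : MemLp f p μ) {c : ℕ → α → ℝ} (hcm : ∀ k, AEStronglyMeasurable (c k) μ)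
    (hc1 : ∀ k x, ‖c k x‖ₑ ≤ 1) (hc : ∀ᵐ x ∂μ, Tendsto (fun k => c k x) atTop (𝓝 0)) :
    Tendsto (fun k => eLpNorm (fun x => c k x • f x) p μ) atTop (𝓝 0) := by
  have hp0 : 0 < p.toReal := ENNReal.toReal_pos hp hp_top
  have hlim : Tendsto (fun k => ∫⁻ x, ‖c k x • f x‖ₑ ^ p.toReal ∂μ) atTop
      (𝓝 (∫⁻ _, 0 ∂μ)) := by
    refine tendsto_lintegral_of_dominated_convergence' (fun x => ‖f x‖ₑ ^ p.toReal)
      (fun k => ((hcm k).smul hf.1).enorm.pow_const _)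
      (fun k => Eventually.of_forall fun x => ?_)
      (lintegral_rpow_enorm_lt_top_of_eLpNorm_lt_top hp hp_top hf.2).ne ?_
    · refine ENNReal.rpow_le_rpow ?_ hp0.le
      rw [enorm_smul]
      exact mul_le_of_le_one_left' (hc1 k x)
    · filter_upwards [hc] with x hx
      have hx0 := (hx.smul_const (f x)).enorm.ennrpow_const p.toReal
      rwa [zero_smul, enorm_zero, ENNReal.zero_rpow_of_pos hp0] at hx0
  have hroot := hlim.ennrpow_const (1 / p.toReal)
  rw [lintegral_zero, ENNReal.zero_rpow_of_pos (by positivity)] at hroot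
  simpa only [eLpNorm_eq_lintegral_rpow_enorm_toReal hp hp_top] using hroot

section DyadicSum

variable {E : Type*} [PseudoMetricSpace E] {x₀ : E}

theorem ofReal_one_div_one_add_sq_dist_le_sum {J : ℕ} {x : E} (hx : x ∈ ball x₀ (2 ^ J)) :
    ENNReal.ofReal (1 / (1 + dist x x₀ ^ 2)) ≤
      ∑ j ∈ Finset.range (J + 1), (ball x₀ (2 ^ j)).indicator (fun _ => 4 * (4 ^ j)⁻¹) x := by
  classical
  have hex : ∃ j : ℕ, x ∈ ball x₀ (2 ^ j) := ⟨J, hx⟩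
  have hmem : Nat.find hex ∈ Finset.range (J + 1) :=
    Finset.mem_range_succ_iff.2 (Nat.find_min' hex hx)
  refine le_trans ?_ (Finset.single_le_sum (fun _ _ => zero_le) hmem)
  rw [indicator_of_mem (Nat.find_spec hex)]
  rcases hj : Nat.find hex with _ | i
  · rw [pow_zero, inv_one, mul_one]
    exact (ENNReal.ofReal_le_one.2 (div_le_one_of_le₀ (by nlinarith) (by positivity))).trans
      (by norm_num)
  · have hfar : (2 : ℝ) ^ i ≤ dist x x₀ :=
      not_lt.1 (Nat.find_min hex (m := i) (by omega))
    have hpow : (4 : ℝ) ^ i ≤ 1 + dist x x₀ ^ 2 := by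
      calc (4 : ℝ) ^ i = (2 ^ i) ^ 2 := by rw [← pow_mul, mul_comm, pow_mul]; norm_num
        _ ≤ dist x x₀ ^ 2 := by gcongr
        _ ≤ 1 + dist x x₀ ^ 2 := by linarith
    calc ENNReal.ofReal (1 / (1 + dist x x₀ ^ 2)) ≤ ENNReal.ofReal (4 ^ i)⁻¹ := by
          rw [one_div]; gcongr
      _ = (4 ^ i)⁻¹ := by
          rw [ENNReal.ofReal_inv_of_pos (by positivity), ENNReal.ofReal_pow (by norm_num),
            ENNReal.ofReal_ofNat]
      _ = 4 * (4 ^ (i + 1))⁻¹ := by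
          rw [pow_succ', ENNReal.mul_inv (by simp) (by simp), ← mul_assoc,
            ENNReal.mul_inv_cancel (by simp) (by simp), one_mul]

variable [MeasurableSpace E] [OpensMeasurableSpace E] {μ : Measure E}

theorem setLIntegral_one_div_one_add_sq_dist_mul_le {F : E → ℝ≥0∞} (hF : AEMeasurable F μ)
    {K : ℝ≥0∞} (h : ∀ j : ℕ, ∫⁻ x in ball x₀ (2 ^ j), F x ∂μ ≤ K * 4 ^ j) (J : ℕ) :
    ∫⁻ x in ball x₀ (2 ^ J), ENNReal.ofReal (1 / (1 + dist x x₀ ^ 2)) * F x ∂μ ≤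
      (J + 1) * (4 * K) := by
  calc _ ≤ ∫⁻ x, ∑ j ∈ Finset.range (J + 1),
          (ball x₀ (2 ^ j)).indicator (fun y => 4 * (4 ^ j)⁻¹ * F y) x ∂μ := by
        refine le_trans (setLIntegral_mono' measurableSet_ball fun x hx => ?_)
          (setLIntegral_le_lintegral (ball x₀ (2 ^ J)) _)
        refine (mul_le_mul_left (ofReal_one_div_one_add_sq_dist_le_sum hx) _).trans_eq ?_
        simp only [Finset.sum_mul, indicator_mul_left]
    _ = ∑ j ∈ Finset.range (J + 1), 4 * (4 ^ j)⁻¹ * ∫⁻ x in ball x₀ (2 ^ j), F x ∂μ := by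
        rw [lintegral_finsetSum' _ fun j _ =>
          (hF.const_mul _).indicator measurableSet_ball]
        simp only [lintegral_indicator measurableSet_ball]
        refine Finset.sum_congr rfl fun j _ => lintegral_const_mul' _ _ (by finiteness)
    _ ≤ ∑ _j ∈ Finset.range (J + 1), 4 * K := by
        refine Finset.sum_le_sum fun j _ => ?_
        calc _ ≤ 4 * (4 ^ j : ℝ≥0∞)⁻¹ * (K * 4 ^ j) := by gcongr; exact h j
          _ = 4 * K * ((4 ^ j)⁻¹ * 4 ^ j) := by ring
          _ = 4 * K := by rw [ENNReal.inv_mul_cancel (by positivity) (by finiteness), mul_one]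
    _ = (J + 1) * (4 * K) := by simp

end DyadicSum

/-! ### Logarithmic cutoffs -/

section LogCutoff

variable {E : Type*} [NormedAddCommGroup E]

/-- The logarithmic cutoff centred at `x₀`: a smooth function with values in `[0, 1]`, equal to `1`
where `log (1 + ‖x - x₀‖ ^ 2) ≤ N + 1` and to `0` where it is at least `2 * (N + 1)`. -/
def logCutoff (x₀ : E) (N : ℕ) (x : E) : ℝ :=
  Real.smoothTransition (2 - Real.log (1 + ‖x - x₀‖ ^ 2) / (N + 1))

variable {x₀ : E} {N : ℕ} {x : E}

theorem logCutoff_nonneg : 0 ≤ logCutoff x₀ N x :=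
  Real.smoothTransition.nonneg _

theorem logCutoff_le_one : logCutoff x₀ N x ≤ 1 :=
  Real.smoothTransition.le_one _

theorem enorm_logCutoff_le_one : ‖logCutoff x₀ N x‖ₑ ≤ 1 := by
  rw [Real.enorm_eq_ofReal logCutoff_nonneg]
  exact ENNReal.ofReal_le_one.2 logCutoff_le_one

theorem enorm_logCutoff_sub_one_le_one : ‖logCutoff x₀ N x - 1‖ₑ ≤ 1 := by
  rw [Real.enorm_eq_ofReal_abs, abs_of_nonpos (sub_nonpos.2 logCutoff_le_one)]
  exact ENNReal.ofReal_le_one.2 (by linarith [logCutoff_nonneg (x₀ := x₀) (N := N) (x := x)])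

theorem tendsto_logCutoff (x₀ x : E) :
    Tendsto (fun N : ℕ => logCutoff x₀ N x) atTop (𝓝 1) := by
  have hlim := (tendsto_div_natCast_add_one (Real.log (1 + ‖x - x₀‖ ^ 2))).const_sub 2
  rw [sub_zero] at hlim
  have h2 := (Real.smoothTransition.continuous.tendsto 2).comp hlim
  rwa [Real.smoothTransition.one_of_one_le one_le_two] at h2

theorem logCutoff_eq_zero_of_notMem_ball (hx : x ∉ ball x₀ (2 ^ (2 * (N + 1)))) :
    logCutoff x₀ N x = 0 := by
  rw [mem_ball, dist_eq_norm, not_lt] at hx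
  refine Real.smoothTransition.zero_of_nonpos ?_
  rw [sub_nonpos, le_div_iff₀ (by positivity), Real.le_log_iff_exp_le (by positivity)]
  have hexp : Real.exp 1 ^ 2 ≤ 16 := by nlinarith [Real.exp_one_lt_d9, Real.exp_pos 1]
  calc Real.exp (2 * ((N : ℝ) + 1)) = (Real.exp 1 ^ 2) ^ (N + 1) := by
        rw [← pow_mul, ← Real.exp_nat_mul, mul_one]; push_cast; rfl
    _ ≤ 16 ^ (N + 1) := by gcongr
    _ = ((2 : ℝ) ^ (2 * (N + 1))) ^ 2 := by
        rw [← pow_mul, mul_right_comm, pow_mul]; norm_num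
    _ ≤ ‖x - x₀‖ ^ 2 := by gcongr
    _ ≤ 1 + ‖x - x₀‖ ^ 2 := by linarith

theorem hasCompactSupport_logCutoff [ProperSpace E] (x₀ : E) (N : ℕ) :
    HasCompactSupport (logCutoff x₀ N) :=
  HasCompactSupport.of_support_subset_isCompact (isCompact_closedBall x₀ (2 ^ (2 * (N + 1))))
    fun _ hx => ball_subset_closedBall (not_imp_comm.1 logCutoff_eq_zero_of_notMem_ball hx)

variable [InnerProductSpace ℝ E]

theorem contDiff_log_one_add_norm_sub_sq (x₀ : E) :
    ContDiff ℝ (⊤ : ℕ∞) fun x => Real.log (1 + ‖x - x₀‖ ^ 2) :=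
  (contDiff_const.add ((contDiff_id.sub contDiff_const).norm_sq ℝ)).log fun x => by positivity

theorem contDiff_logCutoff (x₀ : E) (N : ℕ) : ContDiff ℝ (⊤ : ℕ∞) (logCutoff x₀ N) :=
  Real.smoothTransition.contDiff.comp
    (contDiff_const.sub ((contDiff_log_one_add_norm_sub_sq x₀).div_const _))

theorem norm_fderiv_log_one_add_norm_sub_sq_sq_le (x₀ x : E) :
    ‖fderiv ℝ (fun y => Real.log (1 + ‖y - x₀‖ ^ 2)) x‖ ^ 2 ≤ 4 / (1 + ‖x - x₀‖ ^ 2) := by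
  have hpos : 0 < 1 + ‖x - x₀‖ ^ 2 := by positivity
  have hlog : HasFDerivAt (fun y => Real.log (1 + ‖y - x₀‖ ^ 2)) ((1 + ‖x - x₀‖ ^ 2)⁻¹ •
      2 • (innerSL ℝ (x - x₀)).comp (ContinuousLinearMap.id ℝ E)) x :=
    ((((hasFDerivAt_id x).sub_const x₀).norm_sq).const_add 1).log hpos.ne'
  have hlin : ‖2 • (innerSL ℝ (x - x₀)).comp (ContinuousLinearMap.id ℝ E)‖ ≤ 2 * ‖x - x₀‖ := by
    refine norm_nsmul_le.trans_eq ?_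
    rw [ContinuousLinearMap.comp_id, innerSL_apply_norm, Nat.cast_ofNat]
  calc _ = ((1 + ‖x - x₀‖ ^ 2)⁻¹ *
          ‖2 • (innerSL ℝ (x - x₀)).comp (ContinuousLinearMap.id ℝ E)‖) ^ 2 := by
        rw [hlog.fderiv, norm_smul, norm_inv, Real.norm_of_nonneg hpos.le]
    _ ≤ ((1 + ‖x - x₀‖ ^ 2)⁻¹ * (2 * ‖x - x₀‖)) ^ 2 := by gcongr
    _ ≤ 4 / (1 + ‖x - x₀‖ ^ 2) := by
        field_simp
        nlinarith [sq_nonneg ‖x - x₀‖]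

theorem exists_norm_fderiv_logCutoff_sq_le (x₀ : E) : ∃ D : ℝ, 0 < D ∧ ∀ (N : ℕ) (x : E),
    ‖fderiv ℝ (logCutoff x₀ N) x‖ ^ 2 ≤ D / ((N : ℝ) + 1) ^ 2 * (1 / (1 + dist x x₀ ^ 2)) := by
  obtain ⟨B, hB, hderiv⟩ := exists_abs_deriv_smoothTransition_le
  refine ⟨4 * B ^ 2, by positivity, fun N x => ?_⟩
  set ℓ : E → ℝ := fun x => Real.log (1 + ‖x - x₀‖ ^ 2)
  have hℓ : HasFDerivAt (fun y => 2 - ℓ y / (N + 1)) (-(((N : ℝ) + 1)⁻¹ • fderiv ℝ ℓ x)) x := by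
    simpa only [div_eq_inv_mul] using
      (((contDiff_log_one_add_norm_sub_sq x₀).differentiable (by simp) x).hasFDerivAt.const_mul
        ((N : ℝ) + 1)⁻¹).const_sub 2
  have hT : DifferentiableAt ℝ Real.smoothTransition (2 - ℓ x / (N + 1)) :=
    (Real.smoothTransition.contDiff (n := 1)).differentiable one_ne_zero _
  calc ‖fderiv ℝ (logCutoff x₀ N) x‖ ^ 2
      = |deriv Real.smoothTransition (2 - ℓ x / (N + 1))| ^ 2 *
          ((((N : ℝ) + 1)⁻¹) ^ 2 * ‖fderiv ℝ ℓ x‖ ^ 2) := by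
        rw [show fderiv ℝ (logCutoff x₀ N) x = _ from
          (hT.hasDerivAt.comp_hasFDerivAt x hℓ).fderiv, norm_smul, norm_neg, norm_smul,
          Real.norm_eq_abs, Real.norm_of_nonneg (by positivity), mul_pow, mul_pow]
    _ ≤ B ^ 2 * ((((N : ℝ) + 1)⁻¹) ^ 2 * (4 / (1 + ‖x - x₀‖ ^ 2))) := by
        gcongr
        · exact hderiv _
        · exact norm_fderiv_log_one_add_norm_sub_sq_sq_le x₀ x
    _ = _ := by rw [dist_eq_norm]; field_simp

variable [CompleteSpace E]

theorem gradient_logCutoff_eq_zero_of_notMem_ball (hx : x ∉ ball x₀ (2 ^ (2 * (N + 1)))) :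
    gradient (logCutoff x₀ N) x = 0 := by
  have hmin : IsLocalMin (logCutoff x₀ N) x := Eventually.of_forall fun y => by
    rw [logCutoff_eq_zero_of_notMem_ball hx]
    exact logCutoff_nonneg
  rw [gradient, hmin.fderiv_eq_zero, map_zero]

theorem exists_enorm_gradient_logCutoff_sq_le (x₀ : E) : ∃ D : ℝ, 0 < D ∧ ∀ (N : ℕ) (x : E),
    ‖gradient (logCutoff x₀ N) x‖ₑ ^ 2 ≤
      ENNReal.ofReal (D / ((N : ℝ) + 1) ^ 2) * ENNReal.ofReal (1 / (1 + dist x x₀ ^ 2)) := by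
  obtain ⟨D, hD, hle⟩ := exists_norm_fderiv_logCutoff_sq_le x₀
  refine ⟨D, hD, fun N x => ?_⟩
  rw [enorm_gradient, ← ofReal_norm, ← ENNReal.ofReal_pow (norm_nonneg _),
    ← ENNReal.ofReal_mul (by positivity)]
  exact ENNReal.ofReal_le_ofReal (hle N x)

variable [MeasurableSpace E] [OpensMeasurableSpace E] {μ : Measure E}

-- Each of the `2 * (N + 1) + 1` dyadic balls meeting the support of the gradient contributes at
-- most `4 * K ^ 2 * D / (N + 1) ^ 2`.
theorem exists_sq_eLpNorm_smul_gradient_logCutoff_le {u : E → ℝ} (hu : AEStronglyMeasurable u μ)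
    {K : ℝ≥0∞} (hgrowth : ∀ j : ℕ, eLpNorm u 2 (μ.restrict (ball x₀ (2 ^ j))) ≤ K * 2 ^ j) :
    ∃ D : ℝ, ∀ N : ℕ, eLpNorm (fun x => u x • gradient (logCutoff x₀ N) x) 2 μ ^ 2 ≤
      ENNReal.ofReal (D / (N + 1)) * (4 * K ^ 2) := by
  obtain ⟨D, hD, hgrad⟩ := exists_enorm_gradient_logCutoff_sq_le x₀
  have hgrowth_sq (j : ℕ) : ∫⁻ x in ball x₀ (2 ^ j), ‖u x‖ₑ ^ 2 ∂μ ≤ K ^ 2 * 4 ^ j := by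
    rw [← sq_eLpNorm_two]
    refine (pow_le_pow_left' (hgrowth j) 2).trans_eq ?_
    rw [mul_pow, ← pow_mul, mul_comm j, pow_mul]
    norm_num
  refine ⟨3 * D, fun N => ?_⟩
  have hcount : D / ((N : ℝ) + 1) ^ 2 * (2 * (N + 1) + 1) ≤ 3 * D / (N + 1) := by
    rw [div_mul_eq_mul_div, div_le_div_iff₀ (by positivity) (by positivity)]
    have : 0 ≤ D * N * (N + 1) := by positivity
    nlinarith
  calc _ = ∫⁻ x in ball x₀ (2 ^ (2 * (N + 1))), ‖u x • gradient (logCutoff x₀ N) x‖ₑ ^ 2 ∂μ := by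
        rw [sq_eLpNorm_two, setLIntegral_eq_of_support_subset]
        intro x hx
        by_contra hxb
        exact hx (by simp [gradient_logCutoff_eq_zero_of_notMem_ball hxb])
    _ ≤ ∫⁻ x in ball x₀ (2 ^ (2 * (N + 1))), ENNReal.ofReal (D / ((N : ℝ) + 1) ^ 2) *
          (ENNReal.ofReal (1 / (1 + dist x x₀ ^ 2)) * ‖u x‖ₑ ^ 2) ∂μ := by
        refine lintegral_mono fun x => ?_
        rw [enorm_smul, mul_pow, mul_comm, ← mul_assoc]
        gcongr
        exact hgrad N x
    _ ≤ ENNReal.ofReal (D / ((N : ℝ) + 1) ^ 2) * ((↑(2 * (N + 1)) + 1) * (4 * K ^ 2)) := by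
        rw [lintegral_const_mul' _ _ ENNReal.ofReal_ne_top]
        gcongr
        exact setLIntegral_one_div_one_add_sq_dist_mul_le (hu.enorm.pow_const 2) hgrowth_sq _
    _ = ENNReal.ofReal (D / ((N : ℝ) + 1) ^ 2 * (2 * (N + 1) + 1)) * (4 * K ^ 2) := by
        rw [← mul_assoc, ENNReal.ofReal_mul (by positivity)]
        congr 2
        norm_cast
    _ ≤ _ := by gcongr

theorem tendsto_eLpNorm_smul_gradient_logCutoff {u : E → ℝ} (hu : AEStronglyMeasurable u μ)
    {K : ℝ≥0∞} (hK : K ≠ ⊤)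
    (hgrowth : ∀ j : ℕ, eLpNorm u 2 (μ.restrict (ball x₀ (2 ^ j))) ≤ K * 2 ^ j) :
    Tendsto (fun N : ℕ => eLpNorm (fun x => u x • gradient (logCutoff x₀ N) x) 2 μ) atTop
      (𝓝 0) := by
  obtain ⟨D, hbound⟩ := exists_sq_eLpNorm_smul_gradient_logCutoff_le hu hgrowth
  have hD := ENNReal.tendsto_ofReal (tendsto_div_natCast_add_one D)
  rw [ENNReal.ofReal_zero] at hD
  have hK4 : 4 * K ^ 2 ≠ ⊤ := by finiteness
  have hlim := (ENNReal.Tendsto.mul_const hD (Or.inr hK4)).ennrpow_const (1 / 2)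
  rw [zero_mul, ENNReal.zero_rpow_of_pos (by norm_num)] at hlim
  refine tendsto_of_tendsto_of_tendsto_of_le_of_le tendsto_const_nhds hlim (fun _ => zero_le)
    fun N => ?_
  calc _ = (eLpNorm (fun x => u x • gradient (logCutoff x₀ N) x) 2 μ ^ 2) ^ (1 / 2 : ℝ) := by
        rw [← ENNReal.rpow_two, ← ENNReal.rpow_mul]; norm_num
    _ ≤ _ := ENNReal.rpow_le_rpow (hbound N) (by norm_num)

theorem memLp_smul_gradient_logCutoff [SecondCountableTopology E] {u : E → ℝ}
    (hu : AEStronglyMeasurable u μ) {K : ℝ≥0∞} (hK : K ≠ ⊤)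
    (hgrowth : ∀ j : ℕ, eLpNorm u 2 (μ.restrict (ball x₀ (2 ^ j))) ≤ K * 2 ^ j) (N : ℕ) :
    MemLp (fun x => u x • gradient (logCutoff x₀ N) x) 2 μ := by
  obtain ⟨D, hbound⟩ := exists_sq_eLpNorm_smul_gradient_logCutoff_le hu hgrowth
  refine ⟨hu.smul (continuous_gradient ((contDiff_logCutoff x₀ N).of_le
    (by simp))).aestronglyMeasurable, lt_top_iff_ne_top.2 fun htop => ?_⟩
  have hN := hbound N
  rw [htop, ENNReal.top_pow two_ne_zero, top_le_iff] at hN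
  exact (by finiteness : ENNReal.ofReal (D / (N + 1)) * (4 * K ^ 2) ≠ ⊤) hN

theorem memLp_logCutoff_smul_add [SecondCountableTopology E] {u : E → ℝ} {v : E → E}
    (hu : AEStronglyMeasurable u μ) (hv : MemLp v 2 μ) {K : ℝ≥0∞} (hK : K ≠ ⊤)
    (hgrowth : ∀ j : ℕ, eLpNorm u 2 (μ.restrict (ball x₀ (2 ^ j))) ≤ K * 2 ^ j) (N : ℕ) :
    MemLp (fun x => logCutoff x₀ N x • v x + u x • gradient (logCutoff x₀ N) x) 2 μ := by
  have hηm : AEStronglyMeasurable (logCutoff x₀ N) μ :=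
    (contDiff_logCutoff x₀ N).continuous.aestronglyMeasurable
  refine MemLp.add (f := fun x => logCutoff x₀ N x • v x)
    (hv.of_le_enorm (hηm.smul hv.1) (Eventually.of_forall fun x => ?_))
    (memLp_smul_gradient_logCutoff hu hK hgrowth N)
  rw [enorm_smul]
  exact mul_le_of_le_one_left' enorm_logCutoff_le_one

theorem tendsto_eLpNorm_logCutoff_smul_add_sub [SecondCountableTopology E] {u : E → ℝ} {v : E → E}
    (hu : AEStronglyMeasurable u μ) (hv : MemLp v 2 μ) {K : ℝ≥0∞} (hK : K ≠ ⊤)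
    (hgrowth : ∀ j : ℕ, eLpNorm u 2 (μ.restrict (ball x₀ (2 ^ j))) ≤ K * 2 ^ j) :
    Tendsto (fun N => eLpNorm
      ((fun x => logCutoff x₀ N x • v x + u x • gradient (logCutoff x₀ N) x) - v) 2 μ) atTop
      (𝓝 0) := by
  have hηm (N : ℕ) : AEStronglyMeasurable (fun x => logCutoff x₀ N x - 1) μ :=
    ((contDiff_logCutoff x₀ N).continuous.sub continuous_const).aestronglyMeasurable
  have hη : Tendsto (fun N => eLpNorm (fun x => (logCutoff x₀ N x - 1) • v x) 2 μ) atTop (𝓝 0) :=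
    tendsto_eLpNorm_smul_zero two_ne_zero ENNReal.ofNat_ne_top hv hηm
      (fun N x => enorm_logCutoff_sub_one_le_one)
      (Eventually.of_forall fun x => by simpa using (tendsto_logCutoff x₀ x).sub_const 1)
  refine tendsto_of_tendsto_of_tendsto_of_le_of_le tendsto_const_nhds
    (by simpa using hη.add (tendsto_eLpNorm_smul_gradient_logCutoff hu hK hgrowth))
    (fun _ => zero_le) fun N => ?_
  have hsplit : (fun x => logCutoff x₀ N x • v x + u x • gradient (logCutoff x₀ N) x) - v =
      (fun x => (logCutoff x₀ N x - 1) • v x) + fun x => u x • gradient (logCutoff x₀ N) x := by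
    ext x
    simp only [Pi.sub_apply, Pi.add_apply, sub_smul, one_smul]
    abel
  rw [hsplit]
  exact eLpNorm_add_le ((hηm N).smul hv.1) (memLp_smul_gradient_logCutoff hu hK hgrowth N).1
    one_le_two

end LogCutoff

/-! ### Approximation by test functions -/

theorem TendstoL1Loc.of_setLIntegral_closedBall_le {E F : Type*} [PseudoMetricSpace E]
    [MeasurableSpace E] [NormedAddCommGroup F] {μ : Measure E} {f g : ℕ → E → F} {u : E → F}
    (hg : TendstoL1Loc μ g u) (hgm : ∀ N, AEStronglyMeasurable (g N) μ)
    (hum : AEStronglyMeasurable u μ) {x₀ : E} {ε : ℕ → ℝ≥0∞} (hε : Tendsto ε atTop (𝓝 0))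
    (hfg : ∀ N : ℕ, ∫⁻ x in closedBall x₀ N, ‖f N x - g N x‖ₑ ∂μ ≤ ε N) : TendstoL1Loc μ f u := by
  intro K hK
  refine tendsto_of_tendsto_of_tendsto_of_le_of_le' tendsto_const_nhds
    (by simpa using hε.add (hg K hK)) (Eventually.of_forall fun _ => zero_le) ?_
  obtain ⟨R, hR⟩ := hK.isBounded.subset_closedBall x₀
  filter_upwards [tendsto_natCast_atTop_atTop.eventually_ge_atTop R] with N hN
  have hm : AEMeasurable (fun x => ‖g N x - u x‖ₑ) (μ.restrict K) :=
    ((hgm N).sub hum).restrict.enorm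
  calc ∫⁻ x in K, ‖f N x - u x‖ₑ ∂μ
      ≤ ∫⁻ x in K, ‖f N x - g N x‖ₑ + ‖g N x - u x‖ₑ ∂μ := by
        refine lintegral_mono fun x => ?_
        rw [← sub_add_sub_cancel (f N x) (g N x)]
        exact enorm_add_le _ _
    _ = ∫⁻ x in K, ‖f N x - g N x‖ₑ ∂μ + ∫⁻ x in K, ‖g N x - u x‖ₑ ∂μ := lintegral_add_right' _ hm
    _ ≤ ε N + ∫⁻ x in K, ‖g N x - u x‖ₑ ∂μ := by
        gcongr
        exact (lintegral_mono_set (hR.trans (closedBall_subset_closedBall hN))).trans (hfg N)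

namespace IsDistribGradOn

variable {n : ℕ} {u : Euc n → ℝ} {v : Euc n → Euc n}

theorem exists_contDiff_hasCompactSupport_approx (h : IsDistribGradOn u v univ)
    (hu : LocallyIntegrable u) (huc : HasCompactSupport u) (hv : LocallyIntegrable v)
    {W : Euc n → ℝ≥0∞} {A : ℝ≥0∞} (hW : IsA1Weight volume W A) (hA : A ≠ ⊤)
    [IsLocallyFiniteMeasure (volume.withDensity W)] {p : ℝ≥0∞} (hp : 1 ≤ p) (hp_top : p ≠ ⊤)
    (hvp : MemLp v p (volume.withDensity W)) {K : Set (Euc n)} (hK : IsCompact K) {ε : ℝ≥0∞}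
    (hε : 0 < ε) :
    ∃ f : Euc n → ℝ, ContDiff ℝ (⊤ : ℕ∞) f ∧ HasCompactSupport f ∧
      ∫⁻ x in K, ‖f x - u x‖ₑ ≤ ε ∧ eLpNorm (gradient f - v) p (volume.withDensity W) ≤ ε := by
  obtain ⟨k, hk_fun, hk_grad⟩ := ((tendstoL1Loc_mollify hu K hK).eventually (ge_mem_nhds hε)
    |>.and ((hW.tendsto_eLpNorm_mollify_sub hA hp hp_top hv hvp).eventually
      (ge_mem_nhds hε))).exists
  have hgrad : gradient (mollify volume k u) = mollify volume k v :=
    funext fun x => h.gradient_mollify_eq hu (subset_univ _)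
  exact ⟨mollify volume k u, contDiff_mollify hu k,
    HasCompactSupport.intro huc.isCompact.cthickening
      fun x hx => mollify_eq_zero_of_notMem_cthickening hx k, hk_fun, by rwa [hgrad]⟩

theorem exists_tendstoL1Loc_contDiff_of_hasCompactSupport {w : ℕ → Euc n → ℝ}
    {V : ℕ → Euc n → Euc n} (h : ∀ N, IsDistribGradOn (w N) (V N) univ)
    (hw : ∀ N, LocallyIntegrable (w N)) (hwc : ∀ N, HasCompactSupport (w N))
    (hV : ∀ N, LocallyIntegrable (V N)) {W : Euc n → ℝ≥0∞} {A : ℝ≥0∞}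
    (hW : IsA1Weight volume W A) (hA : A ≠ ⊤) [IsLocallyFiniteMeasure (volume.withDensity W)]
    {p : ℝ≥0∞} (hp : 1 ≤ p) (hp_top : p ≠ ⊤) (hVp : ∀ N, MemLp (V N) p (volume.withDensity W))
    (hum : AEStronglyMeasurable u) (hvm : AEStronglyMeasurable v (volume.withDensity W))
    (hwu : TendstoL1Loc volume w u)
    (hVv : Tendsto (fun N => eLpNorm (V N - v) p (volume.withDensity W)) atTop (𝓝 0)) :
    ∃ f : ℕ → Euc n → ℝ, (∀ N, ContDiff ℝ (⊤ : ℕ∞) (f N) ∧ HasCompactSupport (f N)) ∧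
      TendstoL1Loc volume f u ∧
      Tendsto (fun N => eLpNorm (gradient (f N) - v) p (volume.withDensity W)) atTop (𝓝 0) := by
  have hε : Tendsto (fun N : ℕ => (N : ℝ≥0∞)⁻¹) atTop (𝓝 0) := ENNReal.tendsto_inv_nat_nhds_zero
  choose f hf hfc hfun hgrad using fun N : ℕ =>
    (h N).exists_contDiff_hasCompactSupport_approx (hw N) (hwc N) (hV N) hW hA hp hp_top (hVp N)
      (isCompact_closedBall (0 : Euc n) N) (ENNReal.inv_pos.2 (ENNReal.natCast_ne_top N))
  refine ⟨f, fun N => ⟨hf N, hfc N⟩, hwu.of_setLIntegral_closedBall_le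
    (fun N => (hw N).aestronglyMeasurable) hum hε hfun, ?_⟩
  refine tendsto_of_tendsto_of_tendsto_of_le_of_le tendsto_const_nhds
    (by simpa using hε.add hVv) (fun _ => zero_le) fun N => ?_
  have hfm : AEStronglyMeasurable (gradient (f N)) (volume.withDensity W) :=
    (continuous_gradient ((hf N).of_le (by simp))).aestronglyMeasurable
  calc eLpNorm (gradient (f N) - v) p (volume.withDensity W)
      = eLpNorm ((gradient (f N) - V N) + (V N - v)) p (volume.withDensity W) := by
        rw [sub_add_sub_cancel]
    _ ≤ _ := eLpNorm_add_le (hfm.sub (hVp N).1) ((hVp N).1.sub hvm) hp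
    _ ≤ (N : ℝ≥0∞)⁻¹ + eLpNorm (V N - v) p (volume.withDensity W) := by
        gcongr
        exact hgrad N

variable {d : ℝ} {Γ : Set (Euc n)} {x₀ : Euc n}

theorem exists_tendstoL1Loc_contDiff (h : IsDistribGradOn u v univ) (hu : LocallyIntegrable u)
    (hΓ : IsAssouadHomogeneous d Γ) (hdn : d < (n : ℝ) - 1) (hv : MemLp v 2 (measW n d Γ))
    {K : ℝ≥0∞} (hK : K ≠ ⊤) (hgrowth : ∀ j : ℕ,
      eLpNorm u 2 ((measW n d Γ).restrict (ball x₀ (2 ^ j))) ≤ K * 2 ^ j) :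
    ∃ f : ℕ → Euc n → ℝ, (∀ N, ContDiff ℝ (⊤ : ℕ∞) (f N) ∧ HasCompactSupport (f N)) ∧
      TendstoL1Loc volume f u ∧
      Tendsto (fun N => eLpNorm (gradient (f N) - v) 2 (measW n d Γ)) atTop (𝓝 0) := by
  obtain ⟨A, hA, hW⟩ := hΓ.exists_isA1Weight hdn
  have : IsLocallyFiniteMeasure
    (volume.withDensity fun x => ENNReal.ofReal (weightW n d Γ x)) :=
    hΓ.isLocallyFiniteMeasure_measW hdn
  have hum : AEStronglyMeasurable u (measW n d Γ) :=
    hu.aestronglyMeasurable.mono_ac (withDensity_absolutelyContinuous _ _)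
  have hη (N : ℕ) : Continuous (logCutoff x₀ N) := (contDiff_logCutoff x₀ N).continuous
  have hηu (N : ℕ) : AEStronglyMeasurable (fun x => logCutoff x₀ N x * u x) :=
    (hη N).aestronglyMeasurable.mul hu.aestronglyMeasurable
  have hle (N : ℕ) (x : Euc n) : ‖logCutoff x₀ N x * u x‖ₑ ≤ ‖u x‖ₑ := by
    rw [enorm_mul]
    exact mul_le_of_le_one_left' enorm_logCutoff_le_one
  have hVp := memLp_logCutoff_smul_add hum hv hK hgrowth
  have hvloc := hΓ.locallyIntegrable_of_memLp hdn hv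
  refine exists_tendstoL1Loc_contDiff_of_hasCompactSupport
    (fun N => h.mul_smooth hu hvloc (contDiff_logCutoff x₀ N) (subset_univ _))
    (fun N => hu.mono_enorm (hηu N) (Eventually.of_forall (hle N)))
    (fun N => (hasCompactSupport_logCutoff x₀ N).mul_right)
    (fun N => hΓ.locallyIntegrable_of_memLp hdn (hVp N)) hW hA one_le_two ENNReal.ofNat_ne_top hVp
    hu.aestronglyMeasurable hv.1
    (tendstoL1Loc_of_enorm_le hηu hu hle (Eventually.of_forall fun x => ?_))
    (tendsto_eLpNorm_logCutoff_smul_add_sub hum hv hK hgrowth)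
  simpa only [one_mul] using (tendsto_logCutoff x₀ x).mul_const (u x)

end IsDistribGradOn

theorem statement8_general (n : ℕ) (d : ℝ) (hdn : d < (n : ℝ) - 1) (hd1 : 1 < d) :
    ∃ C : ℝ, 0 < C ∧
      ∀ Γ : Set (Euc n), IsAssouadHomogeneous d Γ →
        ∀ x₀ ∈ Γ, ∀ u v, MemW n d Γ u v → LocallyIntegrable u volume →
          (∃ u0 : ℝ,
            Tendsto (fun j : ℕ => ⨍ y in ball x₀ ((2 : ℝ) ^ j), u y) atTop (𝓝 u0) ∧
            ∀ j : ℕ,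
              |(⨍ y in ball x₀ ((2 : ℝ) ^ j), u y) - u0| ≤
                C * (2 : ℝ) ^ ((j : ℝ) * (1 - d) / 2) *
                  (∫⁻ z in Γᶜ, ENNReal.ofReal (‖v z‖ ^ 2) ∂(measW n d Γ)).toReal
                    ^ ((1 : ℝ) / 2)) ∧
          (Tendsto (fun j : ℕ => ⨍ y in ball x₀ ((2 : ℝ) ^ j), u y) atTop (𝓝 0) →
            ∃ uk : ℕ → Euc n → ℝ,
              (∀ k, ContDiff ℝ (⊤ : ℕ∞) (uk k) ∧ HasCompactSupport (uk k)) ∧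
              (∀ K : Set (Euc n), IsCompact K →
                Tendsto (fun k => ∫ y in K, |uk k y - u y|) atTop (𝓝 0)) ∧
              Tendsto
                (fun k => ∫⁻ z in Γᶜ,
                  ENNReal.ofReal (‖gradient (uk k) z - v z‖ ^ 2) ∂(measW n d Γ))
                atTop (𝓝 0)) := by
  have hratio : (2 : ℝ) ^ ((1 - d) / 2) < 1 :=
    Real.rpow_lt_one_of_one_lt_of_neg one_lt_two (by linarith)
  refine ⟨averageStepConst n d / (1 - 2 ^ ((1 - d) / 2)),
    div_pos (averageStepConst_pos n d) (by linarith), fun Γ hΓ x₀ hx₀ u v hmem hu => ?_⟩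
  have hv := hΓ.memLp_of_memW (by linarith) hmem
  have hgrad := hΓ.isDistribGradOn_univ hdn hu (hΓ.locallyIntegrable_of_memLp hdn hv) hmem.isGrad
  have henergy := hΓ.setLIntegral_compl_measW_eq (by linarith)
  constructor
  · rw [henergy, ENNReal.toReal_pow, ← Real.sqrt_eq_rpow, Real.sqrt_sq ENNReal.toReal_nonneg]
    exact hgrad.exists_tendsto_average hu hΓ hdn hd1 hv hx₀
  · intro h0
    obtain ⟨K, hK, hgrowth⟩ := hgrad.exists_eLpNorm_restrict_ball_le hu hΓ hdn hd1 hv hx₀ h0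
    obtain ⟨f, hf, hfu, hfv⟩ := hgrad.exists_tendstoL1Loc_contDiff hu hΓ hdn hv hK hgrowth
    refine ⟨f, hf, fun _ => hfu.tendsto_integral_abs, ?_⟩
    have hsq := ENNReal.Tendsto.pow (n := 2) hfv
    simp_rw [← henergy, zero_pow two_ne_zero] at hsq
    exact hsq

/-- when `d > 1`, averages of `u ∈ W` over the balls `B(x₀, 2^j)` converge
to a finite limit `u⁰`, with a quantitative rate, and functions with `u⁰ = 0` are
approximated by smooth compactly supported functions. -/
theorem statement8 (n : ℕ) (hn : 2 ≤ n) (d C₀ : ℝ) (hd0 : 0 < d)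
    (hdn : d < (n : ℝ) - 1) (hC₀ : 1 ≤ C₀) (hd1 : 1 < d) :
    ∃ C : ℝ, 0 < C ∧
      ∀ Γ : Set (Euc n), Γ.Nonempty → IsClosed Γ → AhlforsRegular n d C₀ Γ →
        ∀ x₀ ∈ Γ, ∀ u v, MemW n d Γ u v → LocallyIntegrable u volume →
          (∃ u0 : ℝ,
            Tendsto (fun j : ℕ => ⨍ y in ball x₀ ((2 : ℝ) ^ j), u y) atTop (𝓝 u0) ∧
            ∀ j : ℕ,
              |(⨍ y in ball x₀ ((2 : ℝ) ^ j), u y) - u0| ≤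
                C * (2 : ℝ) ^ ((j : ℝ) * (1 - d) / 2) *
                  (∫⁻ z in Γᶜ, ENNReal.ofReal (‖v z‖ ^ 2) ∂(measW n d Γ)).toReal
                    ^ ((1 : ℝ) / 2)) ∧
          (Tendsto (fun j : ℕ => ⨍ y in ball x₀ ((2 : ℝ) ^ j), u y) atTop (𝓝 0) →
            ∃ uk : ℕ → Euc n → ℝ,
              (∀ k, ContDiff ℝ (⊤ : ℕ∞) (uk k) ∧ HasCompactSupport (uk k)) ∧
              (∀ K : Set (Euc n), IsCompact K →
                Tendsto (fun k => ∫ y in K, |uk k y - u y|) atTop (𝓝 0)) ∧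
              Tendsto
                (fun k => ∫⁻ z in Γᶜ,
                  ENNReal.ofReal (‖gradient (uk k) z - v z‖ ^ 2) ∂(measW n d Γ))
                atTop (𝓝 0)) := by
  obtain ⟨C, hC, hmain⟩ := statement8_general n d hdn hd1
  exact ⟨C, hC, fun Γ hne hcl hreg =>
    hmain Γ (hreg.isAssouadHomogeneous (one_pos.trans_le hC₀) hne hcl)⟩
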